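/- Let m ∈ ℝ and let N ∈ ℕ with N ≥ m. Then there exist C > 0 and N' ∈ ℕ such that for every δ > 0, every ℏ ∈ (0,1], every amplitude a ∈ S^m_1(ℝ^{3n}), every u ∈ C_c^∞(ℝⁿ), and all χ₁, χ₂ ∈ C^∞(ℝⁿ) having all derivatives bounded and satisfying dist(supp χ₁, supp χ₂) ≥ δ, one has ‖χ₁ · Op_ℏ(a)(χ₂ u)‖_{L²(ℝⁿ)} ≤ C ℏ^N δ^{-N} |χ₁|_{N'} |χ₂|_{N'} |a|_{S^m_1, N + N'} ‖u‖_{L²(ℝⁿ)}, where |χ|_{N'} := Σ_{|α| ≤ N'} sup_{ℝⁿ} |∂_q^α χ|. -/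

import Mathlib

/-!
The `L²` bound behind the estimate is of Calderón–Vaillancourt type, for an amplitude decaying in
`q - q'`: integrating by parts once in every position variable writes `A(q, p, q')` as the average,
over the exponential densities of `q - s` and `q' - t`, of `∏ (1 + lam ∂) A` at `(s, p, t)`. For
frozen `s` and `t` the plane waves factor, so Plancherel's theorem applies once on each side.

On the support of `χ₁(q) χ₂(q')` one has `|q - q'| ≥ δ`, so `e^{ip(q-q')/ℏ}` is reproduced by
`(σ + |q - q'|²)⁻¹ (σ - ℏ² Δ_p)`, and each integration by parts with `σ = 0` gains
`(ℏ / (|p| |q - q'|))²`. When `ℏ ≤ δ` this suffices. When `δ < ℏ` it suffices where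
`|p| ≳ ℏ / δ ≥ 1`; where `|p| ≲ ℏ / δ`, the choice `σ = ℏ²` yields integrable decay in `q - q'`, and
`⟨p⟩^m ≲ (ℏ / δ)^N` because `m ≤ N`. The momentum cutoff that makes the integrals converge is
removed by Fatou's lemma.
-/

open MeasureTheory Finset

noncomputable section

/-- Points of `ℝⁿ`. -/
abbrev X (n : ℕ) : Type := Fin n → ℝ

/-- Directional derivative of a complex-valued function. -/
def dirD {E : Type*} [NormedAddCommGroup E] [NormedSpace ℝ E]
    (v : E) (g : E → ℂ) : E → ℂ :=
  fun x => fderiv ℝ g x v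

/-- `∂_q^α` on functions on `ℝⁿ`. -/
def mderiv1X {n : ℕ} (α : Fin n → ℕ) (g : X n → ℂ) : X n → ℂ :=
  (List.finRange n).foldr (fun i h => (dirD (Pi.single i (1 : ℝ)))^[α i] h) g

/-- `∂_q^α ∂_p^β ∂_{q'}^γ` on amplitudes `a(q, p, q')`. -/
def mderiv3X {n : ℕ} (α β γ : Fin n → ℕ) (g : X n × X n × X n → ℂ) :
    X n × X n × X n → ℂ :=
  (List.finRange n).foldr
    (fun i h => (dirD ((Pi.single i (1 : ℝ), 0, 0) : X n × X n × X n))^[α i] h) <|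
  (List.finRange n).foldr
    (fun i h => (dirD (((0 : X n), Pi.single i (1 : ℝ), 0) : X n × X n × X n))^[β i] h) <|
  (List.finRange n).foldr
    (fun i h => (dirD (((0 : X n), (0 : X n), Pi.single i (1 : ℝ)) : X n × X n × X n))^[γ i] h) g

/-- `⟨p⟩ = (1 + |p|²)^{1/2}`. -/
def brX {n : ℕ} (p : X n) : ℝ := Real.sqrt (1 + ∑ i, p i ^ 2)

/-- `|α| = Σ α i`. -/
def degX {n : ℕ} (α : Fin n → ℕ) : ℕ := ∑ i, α i

/-- The finite set of multiindices of length `≤ N`. -/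
def idxX (n N : ℕ) : Finset (Fin n → ℕ) :=
  (Fintype.piFinset fun _ : Fin n => Finset.range (N + 1)).filter fun α => degX α ≤ N

/-- Membership in the amplitude class `S^m_1(ℝ^{3n})`. -/
def IsAmp1 {n : ℕ} (m : ℝ) (a : X n × X n × X n → ℂ) : Prop :=
  ContDiff ℝ (⊤ : ℕ∞) a ∧ ∀ α β γ : Fin n → ℕ, ∃ C : ℝ, ∀ x : X n × X n × X n,
    ‖mderiv3X α β γ a x‖ ≤ C * brX x.2.1 ^ (m - (degX β : ℝ))

/-- The seminorm `|a|_{S^m_1, N}`. -/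
def amp1Norm {n : ℕ} (m : ℝ) (N : ℕ) (a : X n × X n × X n → ℂ) : ℝ :=
  ∑ α ∈ idxX n N, ∑ β ∈ idxX n N, ∑ γ ∈ idxX n N,
    if degX α + degX β + degX γ ≤ N then
      ⨆ x : X n × X n × X n, brX x.2.1 ^ (-m + (degX β : ℝ)) * ‖mderiv3X α β γ a x‖
    else 0

/-- `|χ|_N = Σ_{|α| ≤ N} sup |∂^α χ|`. -/
def ckNormX {n : ℕ} (N : ℕ) (χ : X n → ℂ) : ℝ :=
  ∑ α ∈ idxX n N, ⨆ q : X n, ‖mderiv1X α χ q‖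

/-- The quantization of an amplitude. -/
def OpAmpX {n : ℕ} (ℏ : ℝ) (a : X n × X n × X n → ℂ) (u : X n → ℂ) : X n → ℂ :=
  fun q => ((2 * Real.pi * ℏ) ^ n : ℝ)⁻¹ •
    ∫ p : X n, ∫ q' : X n,
      a (q, p, q') *
        Complex.exp (Complex.I * Complex.ofReal (∑ i, p i * (q i - q' i)) / Complex.ofReal ℏ) *
        u q'

/-- The `L²` norm. -/
def l2normX {n : ℕ} (u : X n → ℂ) : ℝ := (∫ q : X n, ‖u q‖ ^ 2) ^ (1 / 2 : ℝ)

/-- Membership in `C_c^∞(ℝⁿ)`. -/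
def IsCcX {n : ℕ} (u : X n → ℂ) : Prop := ContDiff ℝ (⊤ : ℕ∞) u ∧ HasCompactSupport u

open Filter Topology
open scoped ContDiff ENNReal FourierTransform SchwartzMap

section Plancherel

section EuclideanPlancherel

variable {V : Type*} [NormedAddCommGroup V] [InnerProductSpace ℝ V] [FiniteDimensional ℝ V]
  [MeasurableSpace V] [BorelSpace V]

/- Both functions define the same tempered distribution: test them against `g` and move the Fourier
transform onto `g`. -/
lemma fourier_toLp_ae_eq {f : V → ℂ} (hf : Integrable f) (hf2 : MemLp f 2) :
    (𝓕 (hf2.toLp f) : Lp ℂ 2 (volume : Measure V)) =ᵐ[volume] 𝓕 f := by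
  have hcont : Continuous (𝓕 f) :=
    VectorFourier.fourierIntegral_continuous Real.continuous_fourierChar
      (by exact continuous_inner) hf
  refine ae_eq_of_integral_contDiff_smul_eq ((Lp.memLp _).locallyIntegrable (by norm_num))
    hcont.locallyIntegrable fun g hg hgc => ?_
  set φ : 𝓢(V, ℂ) := (hgc.comp_left Complex.ofReal_zero).toSchwartzMap
    ((Complex.ofRealCLM.contDiff (n := ∞)).comp hg)
  have hpair : ∫ x, 𝓕 φ x • hf2.toLp f x =
      ∫ x, φ x • (𝓕 (hf2.toLp f) : Lp ℂ 2 (volume : Measure V)) x := by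
    have h := congrArg (fun T : 𝓢'(V, ℂ) => T φ) (Lp.fourier_toTemperedDistribution_eq (hf2.toLp f))
    simpa only [TemperedDistribution.fourier_apply, Lp.toTemperedDistribution_apply] using h
  have hflip := VectorFourier.integral_fourierIntegral_smul_eq_flip (L := innerₗ V) (μ := volume)
    (ν := volume) Real.continuous_fourierChar continuous_inner φ.integrable hf
  rw [flip_innerₗ] at hflip
  calc ∫ x, g x • (𝓕 (hf2.toLp f) : Lp ℂ 2 (volume : Measure V)) x
      = ∫ x, φ x • (𝓕 (hf2.toLp f) : Lp ℂ 2 (volume : Measure V)) x := rfl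
    _ = ∫ x, 𝓕 φ x • hf2.toLp f x := hpair.symm
    _ = ∫ x, 𝓕 φ x • f x :=
        integral_congr_ae (hf2.coeFn_toLp.mono fun x hx => by simp only [hx])
    _ = ∫ x, g x • 𝓕 f x := hflip

lemma eLpNorm_two_fourier {f : V → ℂ} (hf : Integrable f) (hf2 : MemLp f 2) :
    eLpNorm (𝓕 f) 2 volume = eLpNorm f 2 volume := by
  rw [← eLpNorm_congr_ae (fourier_toLp_ae_eq hf hf2), ← eLpNorm_congr_ae hf2.coeFn_toLp,
    ← Lp.enorm_def, ← Lp.enorm_def, ← ofReal_norm, ← ofReal_norm, Lp.norm_fourier_eq]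

end EuclideanPlancherel

lemma lintegral_enorm_sq_eq_eLpNorm_sq {α : Type*} [MeasurableSpace α] (μ : Measure α) (f : α → ℂ) :
    ∫⁻ x, ‖f x‖ₑ ^ 2 ∂μ = eLpNorm f 2 μ ^ 2 := by
  have h := eLpNorm_nnreal_pow_eq_lintegral (f := f) (μ := μ) (p := 2) two_ne_zero
  simpa only [ENNReal.coe_ofNat, NNReal.coe_ofNat, ENNReal.rpow_ofNat] using h.symm

variable {n : ℕ}

/-- The semiclassical plane wave `e^{i p·z/ℏ}`. -/
def planeWave (ℏ : ℝ) (p z : X n) : ℂ :=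
  Complex.exp (Complex.I * Complex.ofReal (∑ i, p i * z i) / Complex.ofReal ℏ)

lemma norm_planeWave (ℏ : ℝ) (p z : X n) : ‖planeWave ℏ p z‖ = 1 := by
  have h : planeWave ℏ p z = Complex.exp (((∑ i, p i * z i) / ℏ : ℝ) * Complex.I) := by
    unfold planeWave; congr 1; push_cast; ring
  rw [h, Complex.norm_exp_ofReal_mul_I]

lemma planeWave_add (ℏ : ℝ) (p z w : X n) :
    planeWave ℏ p (z + w) = planeWave ℏ p z * planeWave ℏ p w := by
  simp only [planeWave, ← Complex.exp_add, Pi.add_apply, mul_add, sum_add_distrib]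
  congr 1; push_cast; ring

lemma planeWave_comm (ℏ : ℝ) (p z : X n) : planeWave ℏ p z = planeWave ℏ z p := by
  simp only [planeWave, mul_comm (p _)]

lemma planeWave_neg_right (ℏ : ℝ) (p z : X n) : planeWave ℏ p (-z) = planeWave (-ℏ) p z := by
  simp [planeWave, sum_neg_distrib, neg_div, div_neg]

lemma planeWave_smul_left {ℏ c : ℝ} (hc : c ≠ 0) (p z : X n) :
    planeWave (c * ℏ) (c • p) z = planeWave ℏ p z := by
  have hc' : (c : ℂ) ≠ 0 := by exact_mod_cast hc
  simp only [planeWave, Pi.smul_apply, smul_eq_mul, mul_assoc, ← mul_sum]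
  congr 1
  push_cast
  rw [mul_left_comm, mul_div_mul_left _ _ hc']

@[fun_prop]
lemma continuous_planeWave {α : Type*} [TopologicalSpace α] (ℏ : ℝ) {f g : α → X n}
    (hf : Continuous f) (hg : Continuous g) : Continuous fun a => planeWave ℏ (f a) (g a) := by
  unfold planeWave; fun_prop

/- At `ℏ = -1 / (2π)` the plane waves are the characters of Mathlib's Fourier transform. -/
lemma lintegral_enorm_sq_integral_planeWave_unit {f : X n → ℂ} (hf : Integrable f)
    (hf2 : MemLp f 2) :
    ∫⁻ p : X n, ‖∫ y, planeWave (-(2 * Real.pi)⁻¹) p y * f y‖ₑ ^ 2 = ∫⁻ y, ‖f y‖ₑ ^ 2 := by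
  have hmp := EuclideanSpace.volume_preserving_symm_measurableEquiv_toLp (Fin n)
  have hemb := (MeasurableEquiv.toLp 2 (Fin n → ℝ)).symm.measurableEmbedding
  set g : EuclideanSpace ℝ (Fin n) → ℂ := f ∘ (MeasurableEquiv.toLp 2 (Fin n → ℝ)).symm with hg
  have hfourier : ∀ w : EuclideanSpace ℝ (Fin n), 𝓕 g w =
      ∫ y, planeWave (-(2 * Real.pi)⁻¹) ((MeasurableEquiv.toLp 2 (Fin n → ℝ)).symm w) y * f y := by
    intro w
    rw [Real.fourier_eq', ← hmp.integral_comp']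
    refine integral_congr_ae (ae_of_all _ fun v => ?_)
    simp only [smul_eq_mul, planeWave, hg, Function.comp_apply]
    congr 2
    simp only [PiLp.inner_apply, RCLike.inner_apply, conj_trivial, Complex.ofReal_neg,
      Complex.ofReal_inv, Complex.ofReal_mul, Complex.ofReal_ofNat, Complex.ofReal_sum,
      MeasurableEquiv.toLp_symm_apply, div_neg, div_inv_eq_mul]
    ring
  have hg_int : Integrable g := (hmp.integrable_comp_emb hemb).2 hf
  have hg_two : MemLp g 2 := hf2.comp_measurePreserving hmp
  calc ∫⁻ p : X n, ‖∫ y, planeWave (-(2 * Real.pi)⁻¹) p y * f y‖ₑ ^ 2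
      = ∫⁻ w, ‖𝓕 g w‖ₑ ^ 2 := by
        simp_rw [hfourier]
        exact (hmp.lintegral_comp_emb hemb
          fun p => ‖∫ y, planeWave (-(2 * Real.pi)⁻¹) p y * f y‖ₑ ^ 2).symm
    _ = ∫⁻ w, ‖g w‖ₑ ^ 2 := by
        simp_rw [lintegral_enorm_sq_eq_eLpNorm_sq, eLpNorm_two_fourier hg_int hg_two]
    _ = ∫⁻ y, ‖f y‖ₑ ^ 2 := hmp.lintegral_comp_emb hemb fun y => ‖f y‖ₑ ^ 2

lemma lintegral_enorm_sq_integral_planeWave_le {ℏ : ℝ} (hℏ : ℏ ≠ 0) {f : X n → ℂ}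
    (hf : Integrable f) :
    ∫⁻ p : X n, ‖∫ y, planeWave ℏ p y * f y‖ₑ ^ 2 ≤
      ENNReal.ofReal ((2 * Real.pi * |ℏ|) ^ n) * ∫⁻ y, ‖f y‖ₑ ^ 2 := by
  by_cases hf2 : MemLp f 2
  swap
  · have htop : ∫⁻ y, ‖f y‖ₑ ^ 2 = ⊤ := by
      rw [lintegral_enorm_sq_eq_eLpNorm_sq]
      by_contra h
      exact hf2 ⟨hf.1, lt_top_iff_ne_top.2 fun h' => h (by simp [h'])⟩
    rw [htop, ENNReal.mul_top (ENNReal.ofReal_pos.2 (pow_pos (by positivity) n)).ne']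
    exact le_top
  set c : ℝ := -(2 * Real.pi)⁻¹ / ℏ with hc
  have hc0 : c ≠ 0 := div_ne_zero (neg_ne_zero.2 (by positivity)) hℏ
  set F : X n → ℝ≥0∞ := fun p => ‖∫ y, planeWave (-(2 * Real.pi)⁻¹) p y * f y‖ₑ ^ 2 with hF
  have hscale : ∀ p : X n, ‖∫ y, planeWave ℏ p y * f y‖ₑ ^ 2 = F (c • p) := fun p => by
    simp only [hF, ← planeWave_smul_left hc0 p, hc, div_mul_cancel₀ _ hℏ]
  have hjac : |(c ^ n)⁻¹| = (2 * Real.pi * |ℏ|) ^ n := by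
    rw [hc, abs_inv, abs_pow, abs_div, abs_neg, abs_of_pos (by positivity : 0 < (2 * Real.pi)⁻¹),
      ← inv_pow, inv_div, div_inv_eq_mul, mul_comm]
  refine le_of_eq ?_
  calc ∫⁻ p : X n, ‖∫ y, planeWave ℏ p y * f y‖ₑ ^ 2
      = ∫⁻ p, F p ∂(Measure.map (c • ·) (volume : Measure (X n))) := by
        simp_rw [hscale]
        exact ((measurableEmbedding_const_smul₀ hc0).lintegral_map _).symm
    _ = ENNReal.ofReal ((2 * Real.pi * |ℏ|) ^ n) * ∫⁻ y, ‖f y‖ₑ ^ 2 := by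
        rw [Measure.map_addHaar_smul volume hc0, lintegral_smul_measure, smul_eq_mul,
          Module.finrank_fintype_fun_eq_card, Fintype.card_fin, hjac,
          lintegral_enorm_sq_integral_planeWave_unit hf hf2]

end Plancherel

section ExponentialMean

variable {E : Type*} [NormedAddCommGroup E] [NormedSpace ℝ E]

lemma contDiff_dirD {f : E → ℂ} (hf : ContDiff ℝ ∞ f) (v : E) : ContDiff ℝ ∞ (dirD v f) :=
  (hf.fderiv_right (m := ∞) (by simp)).clm_apply contDiff_const

/-- The operator `1 + ∂_w`, with the length scale absorbed into the direction `w`. It is inverted by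
averaging against the exponential distribution along `w`. -/
def oneAddDirD (w : E) (f : E → ℂ) : E → ℂ := fun x => f x + dirD w f x

/-- The product of the operators `1 + ∂_w` over a list of directions. -/
def oneAddDirDs (ws : List E) (f : E → ℂ) : E → ℂ := ws.foldr oneAddDirD f

lemma contDiff_oneAddDirD {f : E → ℂ} (hf : ContDiff ℝ ∞ f) (w : E) :
    ContDiff ℝ ∞ (oneAddDirD w f) := hf.add (contDiff_dirD hf w)

lemma contDiff_oneAddDirDs {f : E → ℂ} (hf : ContDiff ℝ ∞ f) (ws : List E) :
    ContDiff ℝ ∞ (oneAddDirDs ws f) := by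
  induction ws with
  | nil => exact hf
  | cons w ws ih => exact contDiff_oneAddDirD ih w

lemma exponentialPDFReal_eq (κ r : ℝ) : ProbabilityTheory.exponentialPDFReal κ r =
    if 0 ≤ r then κ * Real.exp (-(κ * r)) else 0 := by
  simp only [ProbabilityTheory.exponentialPDFReal, ProbabilityTheory.gammaPDFReal, Real.rpow_one,
    Real.Gamma_one, div_one, sub_self, Real.rpow_zero, mul_one]

lemma exponentialPDFReal_le {κ : ℝ} (hκ : 0 ≤ κ) (r : ℝ) :
    ProbabilityTheory.exponentialPDFReal κ r ≤ κ := by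
  rw [exponentialPDFReal_eq]
  split_ifs with hr
  · exact mul_le_of_le_one_right hκ (Real.exp_le_one_iff.2 (by simpa using mul_nonneg hκ hr))
  · exact hκ

lemma integrable_exponentialPDFReal {κ : ℝ} (hκ : 0 < κ) :
    Integrable (ProbabilityTheory.exponentialPDFReal κ) := by
  refine ⟨(ProbabilityTheory.measurable_exponentialPDFReal κ).aestronglyMeasurable, ?_⟩
  rw [hasFiniteIntegral_iff_ofReal
    (ae_of_all _ (ProbabilityTheory.exponentialPDFReal_nonneg hκ))]
  exact (ProbabilityTheory.lintegral_exponentialPDF_eq_one hκ).trans_lt ENNReal.one_lt_top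

lemma integral_exponentialPDFReal {κ : ℝ} (hκ : 0 < κ) :
    ∫ r, ProbabilityTheory.exponentialPDFReal κ r = 1 := by
  rw [integral_eq_lintegral_of_nonneg_ae
    (ae_of_all _ (ProbabilityTheory.exponentialPDFReal_nonneg hκ))
    (ProbabilityTheory.measurable_exponentialPDFReal κ).aestronglyMeasurable]
  exact (congrArg ENNReal.toReal (ProbabilityTheory.lintegral_exponentialPDF_eq_one hκ)).trans
    ENNReal.toReal_one

lemma integral_exponentialPDFReal_smul (κ : ℝ) (g : ℝ → ℂ) :
    ∫ r, ProbabilityTheory.exponentialPDFReal κ r • g r =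
      ∫ r in Set.Ioi 0, (κ * Real.exp (-(κ * r))) • g r := by
  rw [← integral_Ici_eq_integral_Ioi, ← integral_indicator measurableSet_Ici]
  refine integral_congr_ae (ae_of_all _ fun r => ?_)
  simp only [exponentialPDFReal_eq, Set.indicator_apply, Set.mem_Ici]
  split_ifs
  · rfl
  · exact zero_smul ℝ _

/- The integrand is the `r`-derivative of `-e^{-r/lam} f (y - r • v)`. -/
lemma integral_exponentialPDFReal_oneAddDirD {lam : ℝ} (hlam : 0 < lam) (v : E) {f : E → ℂ}
    (hf : ContDiff ℝ ∞ f) {M : ℝ} (hfM : ∀ x, ‖f x‖ ≤ M)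
    (hDM : ∀ x, ‖oneAddDirD (lam • v) f x‖ ≤ M) (y : E) :
    ∫ r : ℝ, ProbabilityTheory.exponentialPDFReal lam⁻¹ r • oneAddDirD (lam • v) f (y - r • v) =
      f y := by
  have hlam' : (lam : ℂ) ≠ 0 := by exact_mod_cast hlam.ne'
  have hexp : Tendsto (fun r : ℝ => Real.exp (-(lam⁻¹ * r))) atTop (𝓝 0) :=
    Real.tendsto_exp_neg_atTop_nhds_zero.comp (tendsto_id.const_mul_atTop (inv_pos.2 hlam))
  have hline (r : ℝ) : HasDerivAt (fun r : ℝ => f (y - r • v)) (-dirD v f (y - r • v)) r := by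
    have h := ((hf.differentiable (by simp)) (y - r • v)).hasFDerivAt.comp_hasDerivAt r
      (((hasDerivAt_id r).smul_const v).const_sub y)
    simpa [dirD, Function.comp_def] using h
  have hderiv (r : ℝ) : HasDerivAt (fun r : ℝ => -Real.exp (-(lam⁻¹ * r)) • f (y - r • v))
      ((lam⁻¹ * Real.exp (-(lam⁻¹ * r))) • oneAddDirD (lam • v) f (y - r • v)) r := by
    refine (ProbabilityTheory.hasDerivAt_neg_exp_mul_exp.smul (hline r)).congr_deriv ?_
    simp only [oneAddDirD, dirD, map_smul, Complex.real_smul]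
    push_cast
    field_simp
    ring
  have hint : IntegrableOn
      (fun r : ℝ => (lam⁻¹ * Real.exp (-(lam⁻¹ * r))) • oneAddDirD (lam • v) f (y - r • v))
      (Set.Ioi 0) := by
    have hexp_int : IntegrableOn (fun r : ℝ => lam⁻¹ * Real.exp (-(lam⁻¹ * r))) (Set.Ioi 0) := by
      simpa only [neg_mul, IntegrableOn] using
        (exp_neg_integrableOn_Ioi 0 (inv_pos.2 hlam)).const_mul lam⁻¹
    have hcont : Continuous fun r : ℝ => oneAddDirD (lam • v) f (y - r • v) :=
      (contDiff_oneAddDirD hf _).continuous.comp (by fun_prop)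
    exact hexp_int.smul_bdd M hcont.aestronglyMeasurable (ae_of_all _ fun r => hDM _)
  have hlim : Tendsto (fun r : ℝ => -Real.exp (-(lam⁻¹ * r)) • f (y - r • v)) atTop (𝓝 0) := by
    refine squeeze_zero_norm (fun r => ?_) (by simpa using hexp.mul_const M)
    rw [norm_smul, norm_neg, Real.norm_of_nonneg (Real.exp_pos _).le]
    exact mul_le_mul_of_nonneg_left (hfM _) (Real.exp_pos _).le
  rw [integral_exponentialPDFReal_smul,
    integral_Ioi_of_hasDerivAt_of_tendsto' (fun r _ => hderiv r) hint hlim]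
  simp

variable {n : ℕ}

/-- The density on `ℝⁿ` of `n` independent exponential variables of mean `lam`. -/
def expKernel (lam : ℝ) (z : X n) : ℝ := ∏ i, ProbabilityTheory.exponentialPDFReal lam⁻¹ (z i)

lemma measurable_expKernel (lam : ℝ) : Measurable (expKernel lam : X n → ℝ) :=
  Finset.measurable_fun_prod _ fun i _ =>
    (ProbabilityTheory.measurable_exponentialPDFReal lam⁻¹).comp (measurable_pi_apply i)

lemma expKernel_nonneg {lam : ℝ} (hlam : 0 < lam) (z : X n) : 0 ≤ expKernel lam z :=
  prod_nonneg fun i _ => ProbabilityTheory.exponentialPDFReal_nonneg (inv_pos.2 hlam) (z i)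

lemma expKernel_le {lam : ℝ} (hlam : 0 < lam) (z : X n) : expKernel lam z ≤ lam⁻¹ ^ n := by
  have h := prod_le_prod (s := univ)
    (fun i _ => ProbabilityTheory.exponentialPDFReal_nonneg (inv_pos.2 hlam) (z i))
    (fun i _ => exponentialPDFReal_le (inv_pos.2 hlam).le (z i))
  simpa only [expKernel, prod_const, card_univ, Fintype.card_fin] using h

lemma integrable_expKernel {lam : ℝ} (hlam : 0 < lam) : Integrable (expKernel lam : X n → ℝ) :=
  Integrable.fintype_prod fun _ => integrable_exponentialPDFReal (inv_pos.2 hlam)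

lemma integral_expKernel {lam : ℝ} (hlam : 0 < lam) : ∫ z : X n, expKernel lam z = 1 := by
  simp only [expKernel, integral_fintype_prod_volume_eq_prod,
    integral_exponentialPDFReal (inv_pos.2 hlam), prod_const_one]

lemma integral_expKernel_oneAddDirDs {lam : ℝ} (hlam : 0 < lam) (v : Fin n → E) {f : E → ℂ}
    (hf : ContDiff ℝ ∞ f) {M : ℝ}
    (hM : ∀ ws, ws <:+ List.ofFn (fun i => lam • v i) → ∀ x, ‖oneAddDirDs ws f x‖ ≤ M) (y : E) :
    ∫ r : X n, expKernel lam r •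
      oneAddDirDs (List.ofFn fun i => lam • v i) f (y - ∑ i, r i • v i) = f y := by
  induction n with
  | zero => simp [expKernel, oneAddDirDs, integral_unique, volume_pi, Measure.real]
  | succ n ih =>
    set F := oneAddDirDs (List.ofFn fun i : Fin n => lam • v i.succ) f with hF
    have hF_smooth : ContDiff ℝ ∞ F := contDiff_oneAddDirDs hf _
    have hG_eq : oneAddDirDs (List.ofFn fun i => lam • v i) f = oneAddDirD (lam • v 0) F := by
      rw [List.ofFn_succ]; rfl
    rw [List.ofFn_succ] at hM
    have hFM : ∀ x, ‖F x‖ ≤ M := hM _ (List.suffix_cons _ _)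
    have hGM : ∀ x, ‖oneAddDirD (lam • v 0) F x‖ ≤ M := hM _ List.suffix_rfl
    have hG_cont := (contDiff_oneAddDirD hF_smooth (lam • v 0)).continuous
    set H : ℝ × X n → ℂ := fun q => (ProbabilityTheory.exponentialPDFReal lam⁻¹ q.1 *
      expKernel lam q.2) • oneAddDirD (lam • v 0) F (y - (∑ i, q.2 i • v i.succ) - q.1 • v 0)
      with hH
    have hH_int : Integrable H (volume.prod volume) :=
      ((integrable_exponentialPDFReal (inv_pos.2 hlam)).mul_prod
        (integrable_expKernel hlam)).smul_bdd M
        (hG_cont.comp (by fun_prop)).aestronglyMeasurable (ae_of_all _ fun q => hGM _)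
    have hsplit (r : X (n + 1)) : expKernel lam r •
        oneAddDirD (lam • v 0) F (y - ∑ i, r i • v i) =
          H (MeasurableEquiv.piFinSuccAbove (fun _ => ℝ) 0 r) := by
      simp only [hH, expKernel, Fin.prod_univ_succ, Fin.sum_univ_succ, sub_sub,
        add_comm (r 0 • v 0)]
      rfl
    calc ∫ r : X (n + 1), expKernel lam r •
          oneAddDirDs (List.ofFn fun i => lam • v i) f (y - ∑ i, r i • v i)
        = ∫ q : ℝ × X n, H q := by
          simp_rw [hG_eq, hsplit]
          exact (volume_preserving_piFinSuccAbove (fun _ : Fin (n + 1) => ℝ) 0).integral_comp' H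
      _ = ∫ r : X n, ∫ ρ : ℝ, H (ρ, r) := integral_prod_symm H hH_int
      _ = ∫ r : X n, expKernel lam r • F (y - ∑ i, r i • v i.succ) := by
          refine integral_congr_ae (ae_of_all _ fun r => ?_)
          simp only [hH, mul_comm (ProbabilityTheory.exponentialPDFReal _ _), mul_smul]
          rw [integral_smul,
            integral_exponentialPDFReal_oneAddDirD hlam (v 0) hF_smooth hFM hGM]
      _ = f y := ih (fun i => v i.succ) fun ws hws => hM ws (hws.trans (List.suffix_cons _ _))

end ExponentialMean

section YoungInequality

lemma lintegral_mul_sq_le {α : Type*} [MeasurableSpace α] {μ : Measure α} {w f : α → ℝ≥0∞}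
    (hw : AEMeasurable w μ) (hf : AEMeasurable f μ) :
    (∫⁻ a, w a * f a ∂μ) ^ 2 ≤ (∫⁻ a, w a ∂μ) * ∫⁻ a, w a * f a ^ 2 ∂μ := by
  have hsqrt (c : ℝ≥0∞) : c ^ (1 / 2 : ℝ) * c ^ (1 / 2 : ℝ) = c := by
    rw [← ENNReal.rpow_add_of_nonneg _ _ (by norm_num) (by norm_num)]; norm_num
  have h := ENNReal.lintegral_mul_le_Lp_mul_Lq μ (p := 2) (q := 2) (.two_two)
    (hw.pow_const (1 / 2 : ℝ)) ((hw.pow_const (1 / 2 : ℝ)).mul hf)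
  simp only [Pi.mul_apply, ← mul_assoc, hsqrt, ENNReal.rpow_two, pow_two] at h
  simp only [pow_two, ← mul_assoc]
  refine (mul_le_mul' h h).trans_eq ?_
  rw [mul_mul_mul_comm, hsqrt, hsqrt]
  simp only [mul_right_comm _ (f _) (_ ^ (1 / 2 : ℝ)), hsqrt]

variable {G : Type*} [AddCommGroup G] [MeasurableSpace G] [MeasurableAdd₂ G] [MeasurableNeg G]
  {μ : Measure G} [μ.IsAddLeftInvariant] {w f : G → ℝ≥0∞}

lemma lintegral_lintegral_sub_mul [SFinite μ] (hw : Measurable w) (hf : Measurable f) :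
    ∫⁻ s, ∫⁻ t, w (s - t) * f t ∂μ ∂μ = (∫⁻ z, w z ∂μ) * ∫⁻ t, f t ∂μ := by
  have hmeas : Measurable fun q : G × G => w (q.1 - q.2) * f q.2 :=
    (hw.comp measurable_sub).mul (hf.comp measurable_snd)
  rw [lintegral_lintegral_swap hmeas.aemeasurable, ← lintegral_const_mul _ hf]
  refine lintegral_congr fun t => ?_
  have hwt : Measurable fun s => w (s - t) := hw.comp (measurable_id.sub_const t)
  rw [lintegral_mul_const _ hwt, lintegral_sub_right_eq_self w]

variable [μ.IsNegInvariant]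

lemma sq_lintegral_sub_mul_le (hw : Measurable w) (hf : Measurable f) (s : G) :
    (∫⁻ t, w (s - t) * f t ∂μ) ^ 2 ≤ (∫⁻ z, w z ∂μ) * ∫⁻ t, w (s - t) * f t ^ 2 ∂μ := by
  have h := lintegral_mul_sq_le (μ := μ) (hw.comp (measurable_const_sub s)).aemeasurable
    hf.aemeasurable
  simpa only [Function.comp_apply, lintegral_sub_left_eq_self w s] using h

lemma lintegral_sq_lintegral_sub_mul_le [SFinite μ] (hw : Measurable w) (hf : Measurable f) :
    ∫⁻ s, (∫⁻ t, w (s - t) * f t ∂μ) ^ 2 ∂μ ≤ (∫⁻ z, w z ∂μ) ^ 2 * ∫⁻ t, f t ^ 2 ∂μ := by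
  have hmeas : Measurable fun q : G × G => w (q.1 - q.2) * f q.2 ^ 2 :=
    (hw.comp measurable_sub).mul ((hf.pow_const 2).comp measurable_snd)
  calc ∫⁻ s, (∫⁻ t, w (s - t) * f t ∂μ) ^ 2 ∂μ
      ≤ ∫⁻ s, (∫⁻ z, w z ∂μ) * ∫⁻ t, w (s - t) * f t ^ 2 ∂μ ∂μ :=
        lintegral_mono fun s => sq_lintegral_sub_mul_le hw hf s
    _ = (∫⁻ z, w z ∂μ) ^ 2 * ∫⁻ t, f t ^ 2 ∂μ := by
        rw [lintegral_const_mul _ hmeas.lintegral_prod_right',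
          lintegral_lintegral_sub_mul hw (hf.pow_const 2), pow_two, mul_assoc]

end YoungInequality

section OscillatoryIntegral

variable {n : ℕ}

/-- The oscillatory integral `∫∫ A(x, p, y) e^{i p·(x - y)/ℏ} u(y) dy dp`, which is `(2πℏ)ⁿ` times
the quantization of the amplitude `A` applied to `u`. -/
def oscIntegral (ℏ : ℝ) (A : X n × X n × X n → ℂ) (u : X n → ℂ) (x : X n) : ℂ :=
  ∫ p, ∫ y, A (x, p, y) * planeWave ℏ p (x - y) * u y

/-- The inner integral `∫ A(s, p, y) e^{-i p·y/ℏ} u(y) dy` of `oscIntegral`, at left position `s`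
and momentum `p`. -/
def momentumIntegral (ℏ : ℝ) (A : X n × X n × X n → ℂ) (u : X n → ℂ) (s p : X n) : ℂ :=
  ∫ y, A (s, p, y) * (planeWave (-ℏ) p y * u y)

/-- A probability density on `ℝⁿ` bounded by `L`. -/
structure IsBoundedDensity (K : X n → ℝ) (L : ℝ) : Prop where
  measurable : Measurable K
  nonneg : ∀ z, 0 ≤ K z
  le : ∀ z, K z ≤ L
  integrable : Integrable K
  integral_eq_one : ∫ z, K z = 1

lemma isBoundedDensity_expKernel {lam : ℝ} (hlam : 0 < lam) :
    IsBoundedDensity (expKernel lam : X n → ℝ) (lam⁻¹ ^ n) :=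
  ⟨measurable_expKernel lam, expKernel_nonneg hlam, expKernel_le hlam, integrable_expKernel hlam,
    integral_expKernel hlam⟩

namespace IsBoundedDensity

variable {K : X n → ℝ} {L : ℝ}

lemma lintegral_eq_one (hK : IsBoundedDensity K L) : ∫⁻ z, ENNReal.ofReal (K z) = 1 := by
  rw [← ofReal_integral_eq_lintegral_ofReal hK.integrable (ae_of_all _ hK.nonneg),
    hK.integral_eq_one, ENNReal.ofReal_one]

lemma enorm_eq (hK : IsBoundedDensity K L) (z : X n) : ‖K z‖ₑ = ENNReal.ofReal (K z) :=
  Real.enorm_of_nonneg (hK.nonneg z)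

lemma norm_le (hK : IsBoundedDensity K L) (z : X n) : ‖K z‖ ≤ L :=
  (Real.norm_of_nonneg (hK.nonneg z)).trans_le (hK.le z)

lemma enorm_sq_integral_sub_smul_le (hK : IsBoundedDensity K L) {G : X n → ℂ}
    (hG : Measurable G) (x : X n) :
    ‖∫ s, K (x - s) • G s‖ₑ ^ 2 ≤ ENNReal.ofReal L * ∫⁻ s, ‖G s‖ₑ ^ 2 := by
  have hmeas := hK.measurable.ennreal_ofReal
  calc ‖∫ s, K (x - s) • G s‖ₑ ^ 2
      ≤ (∫⁻ s, ENNReal.ofReal (K (x - s)) * ‖G s‖ₑ) ^ 2 := by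
        refine pow_le_pow_left' ((enorm_integral_le_lintegral_enorm _).trans_eq ?_) 2
        simp only [enorm_smul, hK.enorm_eq]
    _ ≤ ∫⁻ s, ENNReal.ofReal (K (x - s)) * ‖G s‖ₑ ^ 2 := by
        refine (sq_lintegral_sub_mul_le hmeas hG.enorm x).trans_eq ?_
        rw [hK.lintegral_eq_one, one_mul]
    _ ≤ ∫⁻ s, ENNReal.ofReal L * ‖G s‖ₑ ^ 2 := by
        gcongr with s
        exact hK.le _
    _ = ENNReal.ofReal L * ∫⁻ s, ‖G s‖ₑ ^ 2 := lintegral_const_mul' _ _ ENNReal.ofReal_ne_top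

lemma lintegral_enorm_sq_sub_smul_le (hK : IsBoundedDensity K L) {u : X n → ℂ}
    (hu : Measurable u) :
    ∫⁻ t, ∫⁻ y, ‖K (y - t) • u y‖ₑ ^ 2 ≤ ENNReal.ofReal L * ∫⁻ y, ‖u y‖ₑ ^ 2 := by
  have hbound (t y : X n) : ‖K (y - t) • u y‖ₑ ^ 2 ≤
      ENNReal.ofReal L * (ENNReal.ofReal (K (-(t - y))) * ‖u y‖ₑ ^ 2) := by
    rw [enorm_smul, hK.enorm_eq, mul_pow, pow_two (ENNReal.ofReal _), mul_assoc, neg_sub]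
    gcongr
    exact hK.le _
  calc ∫⁻ t, ∫⁻ y, ‖K (y - t) • u y‖ₑ ^ 2
      ≤ ∫⁻ t, ∫⁻ y, ENNReal.ofReal L * (ENNReal.ofReal (K (-(t - y))) * ‖u y‖ₑ ^ 2) :=
        lintegral_mono fun t => lintegral_mono fun y => hbound t y
    _ = ENNReal.ofReal L * ∫⁻ y, ‖u y‖ₑ ^ 2 := by
        simp_rw [lintegral_const_mul' _ _ ENNReal.ofReal_ne_top]
        rw [lintegral_lintegral_sub_mul (w := fun z => ENNReal.ofReal (K (-z)))
          (hK.measurable.comp measurable_neg).ennreal_ofReal (hu.enorm.pow_const 2),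
          lintegral_neg_eq_self fun z => ENNReal.ofReal (K z), hK.lintegral_eq_one, one_mul]

end IsBoundedDensity

lemma stronglyMeasurable_momentumIntegral (ℏ : ℝ) {A : X n × X n × X n → ℂ} (hA : Continuous A)
    {u : X n → ℂ} (hu : Continuous u) :
    StronglyMeasurable fun q : X n × X n => momentumIntegral ℏ A u q.1 q.2 :=
  StronglyMeasurable.integral_prod_right' (ν := (volume : Measure (X n)))
    (f := fun q : (X n × X n) × X n =>
      A (q.1.1, q.1.2, q.2) * (planeWave (-ℏ) q.1.2 q.2 * u q.2))
    (by fun_prop : Continuous _).stronglyMeasurable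

lemma oscIntegral_eq (ℏ : ℝ) (A : X n × X n × X n → ℂ) (u : X n → ℂ) (x : X n) :
    oscIntegral ℏ A u x = ∫ p, planeWave ℏ p x * momentumIntegral ℏ A u x p := by
  refine integral_congr_ae (ae_of_all _ fun p => ?_)
  simp only [momentumIntegral, ← integral_const_mul, sub_eq_add_neg, planeWave_add,
    planeWave_neg_right]
  exact integral_congr_ae (ae_of_all _ fun y => by ring)

lemma norm_momentumIntegral_le (ℏ : ℝ) {A : X n × X n × X n → ℂ} {φ : X n → ℝ}
    (hAφ : ∀ x p y, ‖A (x, p, y)‖ ≤ φ p) {u : X n → ℂ} (hu : Integrable u) (s p : X n) :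
    ‖momentumIntegral ℏ A u s p‖ ≤ φ p * ∫ y, ‖u y‖ := by
  rw [← integral_const_mul]
  refine norm_integral_le_of_norm_le (hu.norm.const_mul _) (ae_of_all _ fun y => ?_)
  rw [norm_mul, norm_mul, norm_planeWave, one_mul]
  exact mul_le_mul_of_nonneg_right (hAφ s p y) (norm_nonneg _)

lemma integrable_momentumIntegral (ℏ : ℝ) {A : X n × X n × X n → ℂ} (hA : Continuous A)
    {φ : X n → ℝ} (hφ : Integrable φ) (hAφ : ∀ x p y, ‖A (x, p, y)‖ ≤ φ p) {u : X n → ℂ}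
    (hu : Continuous u) (hu_int : Integrable u) (s : X n) :
    Integrable (momentumIntegral ℏ A u s) :=
  (hφ.mul_const _).mono'
    ((stronglyMeasurable_momentumIntegral ℏ hA hu).comp_measurable
      (measurable_const.prodMk measurable_id)).aestronglyMeasurable
    (ae_of_all _ (norm_momentumIntegral_le ℏ hAφ hu_int s))

section CalderonVaillancourt

variable {ℏ L : ℝ} {K φ : X n → ℝ} {A B b : X n × X n × X n → ℂ} {u : X n → ℂ}

lemma momentumIntegral_of_left_average (hK : IsBoundedDensity K L) (hB : Continuous B)
    (hBφ : ∀ x p y, ‖B (x, p, y)‖ ≤ φ p)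
    (hAB : ∀ x p y, A (x, p, y) = ∫ s, K (x - s) • B (s, p, y))
    (hu : Continuous u) (hu_int : Integrable u) (x p : X n) :
    momentumIntegral ℏ A u x p = ∫ s, K (x - s) • momentumIntegral ℏ B u s p := by
  set F : X n → X n → ℂ := fun y s => K (x - s) • (B (s, p, y) * (planeWave (-ℏ) p y * u y))
    with hF
  have hF_int : Integrable (Function.uncurry F) := by
    refine ((hu_int.norm.const_mul (φ p)).mul_prod (hK.integrable.comp_sub_left x)).mono'
      ?_ (ae_of_all _ fun q => ?_)
    · exact ((hK.measurable.comp (by fun_prop : Measurable fun q : X n × X n => x - q.2)).smul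
        (by fun_prop : Continuous fun q : X n × X n =>
          B (q.2, p, q.1) * (planeWave (-ℏ) p q.1 * u q.1)).measurable).aestronglyMeasurable
    · simp only [Function.uncurry_def, hF]
      rw [norm_smul, norm_mul, norm_mul, norm_planeWave, one_mul,
        Real.norm_of_nonneg (hK.nonneg _), mul_comm]
      exact mul_le_mul_of_nonneg_right
        (mul_le_mul_of_nonneg_right (hBφ _ _ _) (norm_nonneg _)) (hK.nonneg _)
  calc momentumIntegral ℏ A u x p = ∫ y, ∫ s, F y s := by
        simp only [momentumIntegral, hAB, hF, ← integral_mul_const, smul_mul_assoc]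
    _ = ∫ s, ∫ y, F y s := integral_integral_swap hF_int
    _ = ∫ s, K (x - s) • momentumIntegral ℏ B u s p := by
        simp only [hF, momentumIntegral, integral_smul]

lemma oscIntegral_of_left_average (hK : IsBoundedDensity K L) (hB : Continuous B)
    (hφ : Integrable φ) (hBφ : ∀ x p y, ‖B (x, p, y)‖ ≤ φ p)
    (hAB : ∀ x p y, A (x, p, y) = ∫ s, K (x - s) • B (s, p, y))
    (hu : Continuous u) (hu_int : Integrable u) (x : X n) :
    oscIntegral ℏ A u x =
      ∫ s, K (x - s) • ∫ p, planeWave ℏ p x * momentumIntegral ℏ B u s p := by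
  set F : X n → X n → ℂ :=
    fun p s => K (x - s) • (planeWave ℏ p x * momentumIntegral ℏ B u s p) with hF
  have hF_int : Integrable (Function.uncurry F) := by
    refine ((hφ.mul_const (∫ y, ‖u y‖)).mul_prod (hK.integrable.comp_sub_left x)).mono'
      ?_ (ae_of_all _ fun q => ?_)
    · exact ((hK.measurable.comp (by fun_prop : Measurable fun q : X n × X n => x - q.2)).smul
        ((by fun_prop : Continuous fun q : X n × X n => planeWave ℏ q.1 x).measurable.mul
          ((stronglyMeasurable_momentumIntegral ℏ hB hu).measurable.comp
            measurable_swap))).aestronglyMeasurable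
    · simp only [Function.uncurry_def, hF]
      rw [norm_smul, norm_mul, norm_planeWave, one_mul, Real.norm_of_nonneg (hK.nonneg _), mul_comm]
      exact mul_le_mul_of_nonneg_right (norm_momentumIntegral_le ℏ hBφ hu_int _ _) (hK.nonneg _)
  calc oscIntegral ℏ A u x = ∫ p, ∫ s, F p s := by
        rw [oscIntegral_eq]
        simp only [momentumIntegral_of_left_average hK hB hBφ hAB hu hu_int, hF,
          ← integral_const_mul, mul_smul_comm]
    _ = ∫ s, ∫ p, F p s := integral_integral_swap hF_int
    _ = ∫ s, K (x - s) • ∫ p, planeWave ℏ p x * momentumIntegral ℏ B u s p := by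
        simp only [hF, integral_smul]

lemma momentumIntegral_of_right_average (hK : IsBoundedDensity K L) (hb : Continuous b)
    (hbφ : ∀ x p y, ‖b (x, p, y)‖ ≤ φ p)
    (hBb : ∀ x p y, B (x, p, y) = ∫ t, K (y - t) • b (x, p, t))
    (hu : Continuous u) (hu_int : Integrable u) (s p : X n) :
    momentumIntegral ℏ B u s p =
      ∫ t, b (s, p, t) * ∫ y, planeWave (-ℏ) p y * (K (y - t) • u y) := by
  set F : X n → X n → ℂ := fun y t => K (y - t) • (b (s, p, t) * (planeWave (-ℏ) p y * u y))
    with hF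
  have hF_int : Integrable (Function.uncurry F) := by
    have hdom : Integrable fun q : X n × X n => φ p * (‖u q.2‖ * K (-(q.1 - q.2))) :=
      (Integrable.convolution_integrand (ContinuousLinearMap.mul ℝ ℝ) hu_int.norm
        hK.integrable.comp_neg).const_mul (φ p)
    refine hdom.swap.mono' ?_ (ae_of_all _ fun q => ?_)
    · exact ((hK.measurable.comp (by fun_prop : Measurable fun q : X n × X n => q.1 - q.2)).smul
        (by fun_prop : Continuous fun q : X n × X n =>
          b (s, p, q.2) * (planeWave (-ℏ) p q.1 * u q.1)).measurable).aestronglyMeasurable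
    · simp only [Function.uncurry_def, hF, Function.comp_apply, Prod.fst_swap, Prod.snd_swap,
        neg_sub]
      rw [norm_smul, norm_mul, norm_mul, norm_planeWave, one_mul,
        Real.norm_of_nonneg (hK.nonneg _), mul_comm, ← mul_assoc]
      exact mul_le_mul_of_nonneg_right
        (mul_le_mul_of_nonneg_right (hbφ _ _ _) (norm_nonneg _)) (hK.nonneg _)
  calc momentumIntegral ℏ B u s p = ∫ y, ∫ t, F y t := by
        simp only [momentumIntegral, hBb, hF, ← integral_mul_const, smul_mul_assoc]
    _ = ∫ t, ∫ y, F y t := integral_integral_swap hF_int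
    _ = ∫ t, b (s, p, t) * ∫ y, planeWave (-ℏ) p y * (K (y - t) • u y) := by
        simp only [hF, ← integral_const_mul, mul_smul_comm]

lemma stronglyMeasurable_integral_planeWave_mul (hK : IsBoundedDensity K L) (hu : Continuous u) :
    StronglyMeasurable fun q : X n × X n =>
      ∫ y, planeWave (-ℏ) q.1 y * (K (y - q.2) • u y) :=
  StronglyMeasurable.integral_prod_right' (ν := (volume : Measure (X n)))
    (f := fun q : (X n × X n) × X n => planeWave (-ℏ) q.1.1 q.2 * (K (q.2 - q.1.2) • u q.2))
    ((by fun_prop : Continuous fun q : (X n × X n) × X n =>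
      planeWave (-ℏ) q.1.1 q.2).measurable.mul
        ((hK.measurable.comp (by fun_prop : Measurable fun q : (X n × X n) × X n =>
          q.2 - q.1.2)).smul (hu.measurable.comp measurable_snd))).stronglyMeasurable

lemma lintegral_enorm_sq_localFourier_le (hℏ : ℏ ≠ 0) (hK : IsBoundedDensity K L)
    (hu : Continuous u) (hu_int : Integrable u) :
    ∫⁻ p : X n, ∫⁻ t, ‖∫ y, planeWave (-ℏ) p y * (K (y - t) • u y)‖ₑ ^ 2 ≤
      ENNReal.ofReal ((2 * Real.pi * |ℏ|) ^ n) *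
        (ENNReal.ofReal L * ∫⁻ y, ‖u y‖ₑ ^ 2) := by
  have hcut_int (t : X n) : Integrable fun y => K (y - t) • u y :=
    hu_int.bdd_smul L (hK.measurable.comp (measurable_sub_const t)).aestronglyMeasurable
      (ae_of_all _ fun y => hK.norm_le _)
  calc ∫⁻ p : X n, ∫⁻ t, ‖∫ y, planeWave (-ℏ) p y * (K (y - t) • u y)‖ₑ ^ 2
      = ∫⁻ t, ∫⁻ p : X n, ‖∫ y, planeWave (-ℏ) p y * (K (y - t) • u y)‖ₑ ^ 2 :=
        lintegral_lintegral_swap ((stronglyMeasurable_integral_planeWave_mul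
          hK hu).measurable.enorm.pow_const 2).aemeasurable
    _ ≤ ∫⁻ t, ENNReal.ofReal ((2 * Real.pi * |ℏ|) ^ n) * ∫⁻ y, ‖K (y - t) • u y‖ₑ ^ 2 :=
        lintegral_mono fun t => by
          simpa only [abs_neg] using
            lintegral_enorm_sq_integral_planeWave_le (neg_ne_zero.2 hℏ) (hcut_int t)
    _ ≤ ENNReal.ofReal ((2 * Real.pi * |ℏ|) ^ n) *
        (ENNReal.ofReal L * ∫⁻ y, ‖u y‖ₑ ^ 2) := by
        rw [lintegral_const_mul' _ _ ENNReal.ofReal_ne_top]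
        gcongr
        exact hK.lintegral_enorm_sq_sub_smul_le hu.measurable

lemma lintegral_enorm_sq_momentumIntegral_le (hK : IsBoundedDensity K L) (hb : Continuous b)
    (hbφ : ∀ x p y, ‖b (x, p, y)‖ ≤ φ p)
    (hBb : ∀ x p y, B (x, p, y) = ∫ t, K (y - t) • b (x, p, t))
    {w : X n → ℝ} (hw : Measurable w) (hbw : ∀ s p t, ‖b (s, p, t)‖ ≤ w (s - t))
    (hu : Continuous u) (hu_int : Integrable u) (p : X n) :
    ∫⁻ s, ‖momentumIntegral ℏ B u s p‖ₑ ^ 2 ≤ (∫⁻ z, ENNReal.ofReal (w z)) ^ 2 *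
      ∫⁻ t, ‖∫ y, planeWave (-ℏ) p y * (K (y - t) • u y)‖ₑ ^ 2 := by
  have hmeas : Measurable fun t => ‖∫ y, planeWave (-ℏ) p y * (K (y - t) • u y)‖ₑ :=
    ((stronglyMeasurable_integral_planeWave_mul hK hu).measurable.comp
      (measurable_const.prodMk measurable_id)).enorm
  refine (lintegral_mono fun s => pow_le_pow_left' ?_ 2).trans
    (lintegral_sq_lintegral_sub_mul_le hw.ennreal_ofReal hmeas)
  rw [momentumIntegral_of_right_average hK hb hbφ hBb hu hu_int]
  refine (enorm_integral_le_lintegral_enorm _).trans (lintegral_mono fun t => ?_)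
  rw [enorm_mul, ← ofReal_norm (b _)]
  gcongr
  exact hbw s p t

/- A Calderón–Vaillancourt bound that costs no `p`-derivatives: Plancherel in `p` is used twice, and
the decay of `w` in `s - t` replaces almost orthogonality. -/
lemma lintegral_enorm_sq_oscIntegral_of_average_le (hℏ : ℏ ≠ 0) (hK : IsBoundedDensity K L)
    (hB : Continuous B) (hb : Continuous b) (hφ : Integrable φ)
    (hBφ : ∀ x p y, ‖B (x, p, y)‖ ≤ φ p) (hbφ : ∀ x p y, ‖b (x, p, y)‖ ≤ φ p)
    (hAB : ∀ x p y, A (x, p, y) = ∫ s, K (x - s) • B (s, p, y))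
    (hBb : ∀ x p y, B (x, p, y) = ∫ t, K (y - t) • b (x, p, t))
    {w : X n → ℝ} (hw : Measurable w) (hbw : ∀ s p t, ‖b (s, p, t)‖ ≤ w (s - t))
    (hu : Continuous u) (hu_int : Integrable u) :
    ∫⁻ x, ‖oscIntegral ℏ A u x‖ₑ ^ 2 ≤
      ENNReal.ofReal ((2 * Real.pi * |ℏ|) ^ n) ^ 2 * ENNReal.ofReal L ^ 2 *
        (∫⁻ z, ENNReal.ofReal (w z)) ^ 2 * ∫⁻ y, ‖u y‖ₑ ^ 2 := by
  set H := ENNReal.ofReal ((2 * Real.pi * |ℏ|) ^ n)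
  set W := ∫⁻ z, ENNReal.ofReal (w z)
  set g := momentumIntegral ℏ B u
  have hg_meas : StronglyMeasurable fun q : X n × X n => g q.1 q.2 :=
    stronglyMeasurable_momentumIntegral ℏ hB hu
  have hG_meas : StronglyMeasurable fun q : X n × X n => ∫ p, planeWave ℏ p q.1 * g q.2 p :=
    StronglyMeasurable.integral_prod_right' (ν := (volume : Measure (X n)))
      (f := fun q : (X n × X n) × X n => planeWave ℏ q.2 q.1.1 * g q.1.2 q.2)
      ((by fun_prop : Continuous fun q : (X n × X n) × X n =>
        planeWave ℏ q.2 q.1.1).measurable.mul (hg_meas.measurable.comp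
          (by fun_prop : Measurable fun q : (X n × X n) × X n =>
            (q.1.2, q.2)))).stronglyMeasurable
  calc ∫⁻ x, ‖oscIntegral ℏ A u x‖ₑ ^ 2
      ≤ ∫⁻ x, ENNReal.ofReal L * ∫⁻ s, ‖∫ p, planeWave ℏ p x * g s p‖ₑ ^ 2 := by
        refine lintegral_mono fun x => ?_
        rw [oscIntegral_of_left_average hK hB hφ hBφ hAB hu hu_int]
        exact hK.enorm_sq_integral_sub_smul_le
          (hG_meas.measurable.comp (measurable_const.prodMk measurable_id)) x
    _ = ENNReal.ofReal L * ∫⁻ s, ∫⁻ x, ‖∫ p, planeWave ℏ x p * g s p‖ₑ ^ 2 := by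
        rw [lintegral_const_mul' _ _ ENNReal.ofReal_ne_top,
          lintegral_lintegral_swap (hG_meas.measurable.enorm.pow_const 2).aemeasurable]
        simp only [planeWave_comm]
    _ ≤ ENNReal.ofReal L * ∫⁻ s, H * ∫⁻ p, ‖g s p‖ₑ ^ 2 := by
        gcongr with s
        exact lintegral_enorm_sq_integral_planeWave_le hℏ
          (integrable_momentumIntegral ℏ hB hφ hBφ hu hu_int s)
    _ = ENNReal.ofReal L * (H * ∫⁻ p, ∫⁻ s, ‖g s p‖ₑ ^ 2) := by
        rw [lintegral_const_mul' _ _ ENNReal.ofReal_ne_top,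
          lintegral_lintegral_swap (hg_meas.measurable.enorm.pow_const 2).aemeasurable]
    _ ≤ ENNReal.ofReal L * (H * (W ^ 2 * (H * (ENNReal.ofReal L * ∫⁻ y, ‖u y‖ₑ ^ 2)))) := by
        gcongr
        refine (lintegral_mono fun p => lintegral_enorm_sq_momentumIntegral_le hK hb hbφ hBb hw
          hbw hu hu_int p).trans ?_
        rw [lintegral_const_mul _ ((stronglyMeasurable_integral_planeWave_mul
          hK hu).measurable.enorm.pow_const 2).lintegral_prod_right']
        gcongr
        exact lintegral_enorm_sq_localFourier_le hℏ hK hu hu_int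
    _ = H ^ 2 * ENNReal.ofReal L ^ 2 * W ^ 2 * ∫⁻ y, ‖u y‖ₑ ^ 2 := by ring

end CalderonVaillancourt

end OscillatoryIntegral

section DirectionalDerivative

variable {E : Type*} [NormedAddCommGroup E] [NormedSpace ℝ E] {f g : E → ℂ} {x : E}

lemma dirD_congr (h : f =ᶠ[𝓝 x] g) (w : E) : dirD w f =ᶠ[𝓝 x] dirD w g := by
  filter_upwards [h.fderiv (𝕜 := ℝ)] with y hy
  simp only [dirD, hy]

lemma dirD_const (w : E) (c : ℂ) : dirD w (fun _ => c) = fun _ => 0 := by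
  funext x
  simp only [dirD, fderiv_fun_const, Pi.zero_apply, zero_apply]

lemma dirD_smul_left (r : ℝ) (w : E) (f : E → ℂ) : dirD (r • w) f = fun x => r • dirD w f x :=
  funext fun _ => map_smul _ _ _

lemma dirD_clm (w : E) (ℓ : E →L[ℝ] ℂ) : dirD w ℓ = fun _ => ℓ w := by
  funext x
  simp only [dirD, ContinuousLinearMap.fderiv]

lemma dirD_add (hf : DifferentiableAt ℝ f x) (hg : DifferentiableAt ℝ g x) (w : E) :
    dirD w (fun y => f y + g y) x = dirD w f x + dirD w g x := by
  simp only [dirD, fderiv_fun_add hf hg, add_apply]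

lemma dirD_const_mul (hf : DifferentiableAt ℝ f x) (c : ℂ) (w : E) :
    dirD w (fun y => c * f y) x = c * dirD w f x := by
  simp only [dirD, fderiv_const_mul hf, smul_apply, smul_eq_mul]

lemma dirD_mul (hf : DifferentiableAt ℝ f x) (hg : DifferentiableAt ℝ g x) (w : E) :
    dirD w (fun y => f y * g y) x = dirD w f x * g x + f x * dirD w g x := by
  simp only [dirD, fderiv_fun_mul hf hg, add_apply, smul_apply, smul_eq_mul]
  ring

lemma dirD_inv (hf : DifferentiableAt ℝ f x) (hx : f x ≠ 0) (w : E) :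
    dirD w (fun y => (f y)⁻¹) x = -1 * (dirD w f x * ((f x)⁻¹ * (f x)⁻¹)) := by
  have h : HasFDerivAt (fun y => (f y)⁻¹) _ x := (hasFDerivAt_inv' hx).comp x hf.hasFDerivAt
  simp only [dirD, h.fderiv, ContinuousLinearMap.comp_apply, neg_apply,
    ContinuousLinearMap.mulLeftRight_apply]
  ring

lemma dirD_comp_clm {F : Type*} [NormedAddCommGroup F] [NormedSpace ℝ F] (L : E →L[ℝ] F)
    {h : F → ℂ} (hh : Differentiable ℝ h) (w : E) :
    dirD w (fun y => h (L y)) = fun y => dirD (L w) h (L y) := by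
  funext y
  simp only [dirD, fderiv_fun_comp y (hh (L y)) L.differentiableAt, ContinuousLinearMap.fderiv,
    ContinuousLinearMap.comp_apply]

lemma dirD_comm (hf : ContDiff ℝ 2 f) (v w : E) : dirD v (dirD w f) = dirD w (dirD v f) := by
  funext x
  have hsymm : IsSymmSndFDerivAt ℝ f x := hf.contDiffAt.isSymmSndFDerivAt (by
    rw [minSmoothness_of_isRCLikeNormedField])
  have hdiff : DifferentiableAt ℝ (fderiv ℝ f) x :=
    (hf.fderiv_right (m := 1) (by norm_num)).differentiable (by simp) x
  have hsnd (a b : E) : dirD a (dirD b f) x = fderiv ℝ (fderiv ℝ f) x a b := by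
    rw [dirD, show dirD b f = fun y => fderiv ℝ f y b from rfl,
      fderiv_clm_apply hdiff (differentiableAt_const b)]
    simp only [fderiv_fun_const,
      Pi.zero_apply, ContinuousLinearMap.comp_zero, zero_add, ContinuousLinearMap.flip_apply]
  rw [hsnd, hsnd, hsymm]

lemma contDiffAt_dirD (hf : ContDiffAt ℝ ∞ f x) (w : E) : ContDiffAt ℝ ∞ (dirD w f) x :=
  (hf.fderiv_right (m := ∞) (by simp)).clm_apply contDiffAt_const

lemma eventually_differentiableAt (hf : ContDiffAt ℝ ∞ f x) : ∀ᶠ y in 𝓝 x, DifferentiableAt ℝ f y :=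
  ((hf.of_le (m := 1) (by exact_mod_cast le_top)).eventually (by simp)).mono fun _ hy =>
    hy.differentiableAt (by simp)

lemma oneAddDirDs_congr (h : f =ᶠ[𝓝 x] g) (ws : List E) :
    oneAddDirDs ws f =ᶠ[𝓝 x] oneAddDirDs ws g := by
  induction ws with
  | nil => exact h
  | cons w ws ih => exact ih.add (dirD_congr ih w)

lemma oneAddDirDs_zero (ws : List E) : oneAddDirDs ws (fun _ => 0) = fun _ => 0 := by
  induction ws with
  | nil => rfl
  | cons w ws ih =>
    funext x
    simp only [oneAddDirDs, List.foldr_cons] at ih ⊢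
    simp only [oneAddDirD, ih, dirD_const, add_zero]

lemma oneAddDirDs_append (ws ws' : List E) (f : E → ℂ) :
    oneAddDirDs (ws ++ ws') f = oneAddDirDs ws (oneAddDirDs ws' f) := List.foldr_append

end DirectionalDerivative

section DerivativeBounds

variable {E : Type*} [NormedAddCommGroup E] [NormedSpace ℝ E] {ι : Type*}

/-- All derivatives of `f` of order at most `K` along the directions `v i` are bounded by `M` at the
point `x`. Length scales are encoded in the lengths of the `v i`. -/
def DerivsBoundedAt (v : ι → E) : ℕ → (E → ℂ) → E → ℝ → Prop
  | 0, f, x, M => ‖f x‖ ≤ M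
  | K + 1, f, x, M => ‖f x‖ ≤ M ∧ ∀ i, DerivsBoundedAt v K (dirD (v i) f) x M

/-- The constant in the bound for the derivatives of `1 / f` when those of `f` are bounded by
`C * ‖f x‖`. -/
def derivsInvConst (C : ℝ) : ℕ → ℝ
  | 0 => 1
  | K + 1 => 1 + 4 ^ K * C * derivsInvConst C K ^ 2

lemma derivsInvConst_nonneg {C : ℝ} (hC : 0 ≤ C) (K : ℕ) : 0 ≤ derivsInvConst C K := by
  cases K <;> simp only [derivsInvConst] <;> positivity

namespace DerivsBoundedAt

variable {v : ι → E} {K : ℕ} {f g : E → ℂ} {x : E} {M M' : ℝ}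

lemma norm_le (h : DerivsBoundedAt v K f x M) : ‖f x‖ ≤ M := by
  cases K with
  | zero => exact h
  | succ K => exact h.1

lemma nonneg (h : DerivsBoundedAt v K f x M) : 0 ≤ M := (norm_nonneg _).trans h.norm_le

lemma mono (h : DerivsBoundedAt v K f x M) (hM : M ≤ M') : DerivsBoundedAt v K f x M' := by
  induction K generalizing f with
  | zero => exact le_trans h hM
  | succ K ih => exact ⟨h.1.trans hM, fun i => ih (h.2 i)⟩

lemma of_succ (h : DerivsBoundedAt v (K + 1) f x M) : DerivsBoundedAt v K f x M := by
  induction K generalizing f with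
  | zero => exact h.1
  | succ K ih => exact ⟨h.1, fun i => ih (h.2 i)⟩

lemma of_le {K' : ℕ} (h : DerivsBoundedAt v K f x M) (hK : K' ≤ K) :
    DerivsBoundedAt v K' f x M := by
  induction hK with
  | refl => exact h
  | step _ ih => exact ih h.of_succ

lemma congr (h : DerivsBoundedAt v K f x M) (hfg : f =ᶠ[𝓝 x] g) : DerivsBoundedAt v K g x M := by
  induction K generalizing f g with
  | zero => exact (congrArg norm hfg.eq_of_nhds).ge.trans h
  | succ K ih => exact ⟨hfg.eq_of_nhds ▸ h.1, fun i => ih (h.2 i) (dirD_congr hfg (v i))⟩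

lemma const (v : ι → E) (K : ℕ) {c : ℂ} (x : E) (hM : ‖c‖ ≤ M) :
    DerivsBoundedAt v K (fun _ => c) x M := by
  induction K generalizing c with
  | zero => exact hM
  | succ K ih =>
    refine ⟨hM, fun i => ?_⟩
    rw [dirD_const]
    exact ih (norm_zero.trans_le ((norm_nonneg c).trans hM))

lemma of_eventuallyEq_zero (v : ι → E) (K : ℕ) (h : f =ᶠ[𝓝 x] fun _ => 0) (hM : 0 ≤ M) :
    DerivsBoundedAt v K f x M := (const v K x (norm_zero.trans_le hM)).congr h.symm

lemma clm (K : ℕ) (ℓ : E →L[ℝ] ℂ) (h : ‖ℓ x‖ ≤ M) (hv : ∀ i, ‖ℓ (v i)‖ ≤ M) :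
    DerivsBoundedAt v K ℓ x M := by
  cases K with
  | zero => exact h
  | succ K =>
    refine ⟨h, fun i => ?_⟩
    rw [dirD_clm]
    exact const v K x (hv i)

lemma add (h : DerivsBoundedAt v K f x M) (h' : DerivsBoundedAt v K g x M')
    (hf : ContDiffAt ℝ ∞ f x) (hg : ContDiffAt ℝ ∞ g x) :
    DerivsBoundedAt v K (fun y => f y + g y) x (M + M') := by
  induction K generalizing f g with
  | zero => exact (norm_add_le _ _).trans (add_le_add h h')
  | succ K ih =>
    refine ⟨(norm_add_le _ _).trans (add_le_add h.1 h'.1), fun i => ?_⟩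
    refine (ih (h.2 i) (h'.2 i) (contDiffAt_dirD hf _) (contDiffAt_dirD hg _)).congr ?_
    filter_upwards [eventually_differentiableAt hf, eventually_differentiableAt hg] with y hfy hgy
    exact (dirD_add hfy hgy _).symm

lemma const_mul (h : DerivsBoundedAt v K f x M) (hf : ContDiffAt ℝ ∞ f x) (c : ℂ) :
    DerivsBoundedAt v K (fun y => c * f y) x (‖c‖ * M) := by
  have hle (z : ℂ) (hz : ‖z‖ ≤ M) : ‖c * z‖ ≤ ‖c‖ * M := by
    rw [norm_mul]
    gcongr
  induction K generalizing f with
  | zero => exact hle _ h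
  | succ K ih =>
    refine ⟨hle _ h.1, fun i => (ih (h.2 i) (contDiffAt_dirD hf _)).congr ?_⟩
    filter_upwards [eventually_differentiableAt hf] with y hy
    exact (dirD_const_mul hy c _).symm

lemma sum {κ : Type*} (t : Finset κ) {f : κ → E → ℂ} {M : κ → ℝ}
    (h : ∀ k ∈ t, DerivsBoundedAt v K (f k) x (M k)) (hf : ∀ k ∈ t, ContDiffAt ℝ ∞ (f k) x) :
    DerivsBoundedAt v K (fun y => ∑ k ∈ t, f k y) x (∑ k ∈ t, M k) := by
  classical
  induction t using Finset.induction_on with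
  | empty => simpa only [sum_empty] using const v K x norm_zero.le
  | insert a t ha ih =>
    rw [forall_mem_insert] at h hf
    simp only [sum_insert ha]
    exact h.1.add (ih h.2 hf.2) hf.1 (.sum hf.2)

lemma mul (h : DerivsBoundedAt v K f x M) (h' : DerivsBoundedAt v K g x M')
    (hf : ContDiffAt ℝ ∞ f x) (hg : ContDiffAt ℝ ∞ g x) :
    DerivsBoundedAt v K (fun y => f y * g y) x (2 ^ K * M * M') := by
  induction K generalizing f g with
  | zero =>
    refine (norm_mul_le _ _).trans ?_
    rw [pow_zero, one_mul]
    exact mul_le_mul h h' (norm_nonneg _) h.nonneg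
  | succ K ih =>
    refine ⟨?_, fun i => ?_⟩
    · calc ‖f x * g x‖ ≤ 1 * (M * M') := by
            rw [norm_mul, one_mul]
            exact mul_le_mul h.1 h'.1 (norm_nonneg _) h.nonneg
        _ ≤ 2 ^ (K + 1) * (M * M') := by
            have := mul_nonneg h.nonneg h'.nonneg
            gcongr
            exact one_le_pow₀ one_le_two
        _ = 2 ^ (K + 1) * M * M' := (mul_assoc _ _ _).symm
    · have hf' := contDiffAt_dirD hf (v i)
      have hg' := contDiffAt_dirD hg (v i)
      refine (((ih (h.2 i) h'.of_succ hf' hg).add (ih h.of_succ (h'.2 i) hf hg')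
        (hf'.mul hg) (hf.mul hg')).congr ?_).mono (by rw [pow_succ]; linarith)
      filter_upwards [eventually_differentiableAt hf, eventually_differentiableAt hg] with y hfy hgy
      exact (dirD_mul hfy hgy _).symm

lemma pow (h : DerivsBoundedAt v K f x M) (hf : ContDiffAt ℝ ∞ f x) (k : ℕ) :
    DerivsBoundedAt v K (fun y => f y ^ k) x ((2 ^ K * M) ^ k) := by
  induction k with
  | zero => simpa only [pow_zero] using const v K x norm_one.le
  | succ k ih =>
    simp only [pow_succ]
    exact (ih.mul h (hf.pow k) hf).mono (by linarith)

lemma inv {C : ℝ} (hC : 0 ≤ C) (h : DerivsBoundedAt v K f x (C * ‖f x‖)) (hf : ContDiffAt ℝ ∞ f x)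
    (hx : f x ≠ 0) :
    DerivsBoundedAt v K (fun y => (f y)⁻¹) x (derivsInvConst C K * ‖f x‖⁻¹) := by
  induction K with
  | zero => exact (norm_inv _).trans_le (one_mul _).ge
  | succ K ih =>
    have hC' : 0 ≤ 4 ^ K * C * derivsInvConst C K ^ 2 := by positivity
    refine ⟨?_, fun i => ?_⟩
    · rw [norm_inv, derivsInvConst]
      exact le_mul_of_one_le_left (by positivity) (by linarith)
    · have hf' := contDiffAt_dirD hf (v i)
      have hinv := hf.inv hx
      have h_inv := ih h.of_succ
      refine (((h.2 i).mul (h_inv.mul h_inv hinv hinv) hf' (hinv.mul hinv)).const_mul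
        (hf'.mul (hinv.mul hinv)) (-1)).congr ?_ |>.mono ?_
      · filter_upwards [eventually_differentiableAt hf, hf.continuousAt.eventually_ne hx]
          with y hfy hy
        exact (dirD_inv hfy hy _).symm
      · calc ‖(-1 : ℂ)‖ * (2 ^ K * (C * ‖f x‖) * (2 ^ K * (derivsInvConst C K * ‖f x‖⁻¹) *
              (derivsInvConst C K * ‖f x‖⁻¹)))
            = 4 ^ K * C * derivsInvConst C K ^ 2 * ‖f x‖⁻¹ := by
              rw [norm_neg, norm_one, show (4 : ℝ) = 2 * 2 by norm_num, mul_pow]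
              field_simp [norm_ne_zero_iff.2 hx]
          _ ≤ derivsInvConst C (K + 1) * ‖f x‖⁻¹ := by
              rw [derivsInvConst]
              gcongr
              linarith

lemma oneAddDirDs {ws : List E} (h : DerivsBoundedAt v (K + ws.length) f x M)
    (hf : ContDiff ℝ ∞ f) (hws : ∀ w ∈ ws, w ∈ Set.range v) :
    DerivsBoundedAt v K (oneAddDirDs ws f) x (2 ^ ws.length * M) := by
  induction ws generalizing K with
  | nil => exact h.mono (by rw [List.length_nil, pow_zero, one_mul])
  | cons w ws ih =>
    rw [List.forall_mem_cons] at hws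
    obtain ⟨⟨i, rfl⟩, hws⟩ := hws
    have hsmooth := contDiff_oneAddDirDs hf ws
    have ih' := ih (K := K + 1) (h.of_le (by simp only [List.length_cons]; omega)) hws
    exact (ih'.of_succ.add (ih'.2 i) hsmooth.contDiffAt (contDiff_dirD hsmooth _).contDiffAt).mono
      (by rw [List.length_cons, pow_succ]; linarith)

end DerivsBoundedAt

end DerivativeBounds

section PhaseSpaceDirections

variable {n : ℕ}

/-- The unit direction of the `i`-th coordinate of the left position variable. -/
def dirX (i : Fin n) : X n × X n × X n := (Pi.single i 1, 0, 0)

/-- The unit direction of the `i`-th momentum coordinate. -/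
def dirP (i : Fin n) : X n × X n × X n := (0, Pi.single i 1, 0)

/-- The unit direction of the `i`-th coordinate of the right position variable. -/
def dirY (i : Fin n) : X n × X n × X n := (0, 0, Pi.single i 1)

/-- The coordinate directions of phase space, with length `lam` in both position variables and
length `r` in momentum. -/
def scaledDirs (lam r : ℝ) : Fin n ⊕ Fin n ⊕ Fin n → X n × X n × X n :=
  Sum.elim (fun i => lam • dirX i) (Sum.elim (fun i => r • dirP i) fun i => lam • dirY i)

/-- One direction of length `lam` for every coordinate of the two position variables, those of the
left variable acting first. -/
def positionDirs (lam : ℝ) : List (X n × X n × X n) :=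
  List.ofFn (fun i => lam • dirY i) ++ List.ofFn fun i => lam • dirX i

lemma length_positionDirs (lam : ℝ) :
    (positionDirs lam : List (X n × X n × X n)).length = 2 * n := by
  rw [positionDirs, List.length_append, List.length_ofFn, List.length_ofFn, two_mul]

lemma mem_range_scaledDirs {lam : ℝ} (r : ℝ) {w : X n × X n × X n} (hw : w ∈ positionDirs lam) :
    w ∈ Set.range (scaledDirs lam r) := by
  simp only [positionDirs, List.mem_append, List.mem_ofFn] at hw
  obtain ⟨i, rfl⟩ | ⟨i, rfl⟩ := hw
  exacts [⟨.inr (.inr i), rfl⟩, ⟨.inl i, rfl⟩]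

lemma sum_smul_dirX (r : X n) : ∑ i, r i • dirX i = (r, 0, 0) := by
  simp [dirX, Prod.ext_iff, Prod.fst_sum, Prod.snd_sum, ← Pi.single_smul, univ_sum_single]

lemma sum_smul_dirY (r : X n) : ∑ i, r i • dirY i = (0, 0, r) := by
  simp [dirY, Prod.ext_iff, Prod.fst_sum, Prod.snd_sum, ← Pi.single_smul, univ_sum_single]

lemma eventuallyEq_zero_of_momentum {A : X n × X n × X n → ℂ} {ρ : ℝ}
    (hA : ∀ x p y, ρ < ‖p‖ → A (x, p, y) = 0) {z : X n × X n × X n} (hz : ρ < ‖z.2.1‖) :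
    A =ᶠ[𝓝 z] fun _ => 0 := by
  have hopen : IsOpen {z : X n × X n × X n | ρ < ‖z.2.1‖} :=
    isOpen_lt continuous_const (by fun_prop)
  exact (hopen.eventually_mem hz).mono fun z hz => hA z.1 z.2.1 z.2.2 hz

lemma lintegral_enorm_sq_oscIntegral_le {ℏ lam M ρ : ℝ} (hℏ : ℏ ≠ 0) (hlam : 0 < lam)
    {A : X n × X n × X n → ℂ} (hA : ContDiff ℝ ∞ A) (hA_supp : ∀ x p y, ρ < ‖p‖ → A (x, p, y) = 0)
    (hM : ∀ ws, ws <:+ positionDirs lam → ∀ z, ‖oneAddDirDs ws A z‖ ≤ M)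
    {w : X n → ℝ} (hw : Measurable w)
    (hAw : ∀ x p y, ‖oneAddDirDs (positionDirs lam) A (x, p, y)‖ ≤ w (x - y))
    {u : X n → ℂ} (hu : Continuous u) (hu_int : Integrable u) :
    ∫⁻ x, ‖oscIntegral ℏ A u x‖ₑ ^ 2 ≤
      ENNReal.ofReal ((2 * Real.pi * |ℏ|) ^ n) ^ 2 * ENNReal.ofReal (lam⁻¹ ^ n) ^ 2 *
        (∫⁻ z, ENNReal.ofReal (w z)) ^ 2 * ∫⁻ y, ‖u y‖ₑ ^ 2 := by
  set xs : List (X n × X n × X n) := List.ofFn fun i => lam • dirX i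
  set ys : List (X n × X n × X n) := List.ofFn fun i => lam • dirY i
  have hφ (ws) (hws : ws <:+ positionDirs lam) (x p y : X n) :
      ‖oneAddDirDs ws A (x, p, y)‖ ≤ (Metric.closedBall 0 ρ).indicator (fun _ => M) p := by
    by_cases hp : p ∈ Metric.closedBall (0 : X n) ρ
    · rw [Set.indicator_of_mem hp]
      exact hM ws hws _
    · have hp' : ρ < ‖p‖ := by simpa only [mem_closedBall_zero_iff, not_le] using hp
      rw [Set.indicator_of_notMem hp, (oneAddDirDs_congr (eventuallyEq_zero_of_momentum
        (z := (x, p, y)) hA_supp hp') ws).eq_of_nhds, oneAddDirDs_zero, norm_zero]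
  have hxs : xs <:+ positionDirs lam := List.suffix_append _ _
  have hφ_int : Integrable ((Metric.closedBall (0 : X n) ρ).indicator fun _ => M) :=
    (integrable_indicator_iff measurableSet_closedBall).2
      (integrableOn_const measure_closedBall_lt_top.ne)
  refine lintegral_enorm_sq_oscIntegral_of_average_le hℏ (isBoundedDensity_expKernel hlam)
    (contDiff_oneAddDirDs hA xs).continuous (contDiff_oneAddDirDs hA (positionDirs lam)).continuous
    hφ_int (hφ xs hxs) (hφ _ List.suffix_rfl) (fun x p y => ?_) (fun x p y => ?_) hw hAw hu hu_int
  · rw [← integral_sub_left_eq_self _ _ x]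
    simpa only [sum_smul_dirX, sub_sub_cancel, Prod.mk_sub_mk, sub_zero] using
      (integral_expKernel_oneAddDirDs hlam dirX hA
        (fun ws hws => hM ws (hws.trans hxs)) (x, p, y)).symm
  · rw [← integral_sub_left_eq_self _ _ y, positionDirs, oneAddDirDs_append]
    simpa only [sum_smul_dirY, sub_sub_cancel, Prod.mk_sub_mk, sub_zero] using
      (integral_expKernel_oneAddDirDs hlam dirY (contDiff_oneAddDirDs hA xs) (M := M)
        (fun ws hws z => by
          rw [← oneAddDirDs_append]
          exact hM _ (List.suffix_append_self_iff.2 hws) z) (x, p, y)).symm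

end PhaseSpaceDirections

section MultiIndexDerivatives

variable {E : Type*} [NormedAddCommGroup E] [NormedSpace ℝ E] {ι : Type*} {f : E → ℂ}

/-- The derivative `∏ (∂_{v i})^{α i}`, the product being taken over the list `l`. It unfolds to the
derivatives `mderiv1X` and `mderiv3X`. -/
def listDirD (v : ι → E) (α : ι → ℕ) (l : List ι) (f : E → ℂ) : E → ℂ :=
  l.foldr (fun i h => (dirD (v i))^[α i] h) f

lemma contDiff_iterate_dirD (hf : ContDiff ℝ ∞ f) (w : E) (k : ℕ) :
    ContDiff ℝ ∞ ((dirD w)^[k] f) := by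
  induction k with
  | zero => exact hf
  | succ k ih =>
    rw [Function.iterate_succ_apply']
    exact contDiff_dirD ih w

lemma contDiff_listDirD (hf : ContDiff ℝ ∞ f) (v : ι → E) (α : ι → ℕ) (l : List ι) :
    ContDiff ℝ ∞ (listDirD v α l f) := by
  induction l with
  | nil => exact hf
  | cons i l ih => exact contDiff_iterate_dirD ih _ _

lemma dirD_iterate_dirD (hf : ContDiff ℝ ∞ f) (v w : E) (k : ℕ) :
    dirD w ((dirD v)^[k] f) = (dirD v)^[k] (dirD w f) := by
  induction k generalizing f with
  | zero => rfl
  | succ k ih =>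
    rw [Function.iterate_succ_apply, Function.iterate_succ_apply, ih (contDiff_dirD hf v),
      dirD_comm (hf.of_le (WithTop.coe_le_coe.2 (le_top : (2 : ℕ∞) ≤ ⊤)))]

lemma dirD_listDirD (hf : ContDiff ℝ ∞ f) (v : ι → E) (α : ι → ℕ) (l : List ι) (w : E) :
    dirD w (listDirD v α l f) = listDirD v α l (dirD w f) := by
  induction l with
  | nil => rfl
  | cons i l ih =>
    exact (dirD_iterate_dirD (contDiff_listDirD hf v α l) _ _ _).trans
      (congrArg (dirD (v i))^[α i] ih)

lemma listDirD_congr (v : ι → E) {α β : ι → ℕ} {l : List ι} (h : ∀ i ∈ l, α i = β i) :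
    listDirD v α l f = listDirD v β l f := by
  induction l with
  | nil => rfl
  | cons i l ih =>
    rw [List.forall_mem_cons] at h
    simp only [listDirD, List.foldr_cons, h.1] at ih ⊢
    rw [ih h.2]

lemma listDirD_zero (v : ι → E) (l : List ι) (f : E → ℂ) : listDirD v 0 l f = f := by
  induction l with
  | nil => rfl
  | cons _ _ ih => exact ih

lemma dirD_listDirD_of_mem [DecidableEq ι] (hf : ContDiff ℝ ∞ f) (v : ι → E) (α : ι → ℕ)
    {l : List ι} (hl : l.Nodup) {j : ι} (hj : j ∈ l) :
    dirD (v j) (listDirD v α l f) = listDirD v (α + Pi.single j 1) l f := by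
  induction l with
  | nil => exact absurd hj List.not_mem_nil
  | cons i l ih =>
    rw [List.nodup_cons] at hl
    by_cases hij : j = i
    · subst hij
      have hcongr : listDirD v (α + Pi.single j 1) l f = listDirD v α l f :=
        listDirD_congr v fun i hi => by
          simp only [Pi.add_apply, Pi.single_eq_of_ne (ne_of_mem_of_not_mem hi hl.1), add_zero]
      simp only [listDirD, List.foldr_cons, Pi.add_apply, Pi.single_eq_same] at hcongr ⊢
      rw [hcongr, Function.iterate_succ_apply']
    · refine (dirD_iterate_dirD (contDiff_listDirD hf v α l) _ _ _).trans ?_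
      rw [ih hl.2 ((List.mem_cons.1 hj).resolve_left hij)]
      simp only [listDirD, List.foldr_cons, Pi.add_apply, Pi.single_eq_of_ne' hij, add_zero]

variable {n : ℕ} {χ : X n → ℂ} {a : X n × X n × X n → ℂ}

lemma contDiff_mderiv1X (hχ : ContDiff ℝ ∞ χ) (α : Fin n → ℕ) : ContDiff ℝ ∞ (mderiv1X α χ) :=
  contDiff_listDirD hχ (fun i => Pi.single i (1 : ℝ)) α _

lemma mderiv1X_zero (χ : X n → ℂ) : mderiv1X 0 χ = χ :=
  listDirD_zero (fun i => Pi.single i (1 : ℝ)) _ χ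

lemma dirD_mderiv1X (hχ : ContDiff ℝ ∞ χ) (α : Fin n → ℕ) (j : Fin n) :
    dirD (Pi.single j (1 : ℝ)) (mderiv1X α χ) = mderiv1X (α + Pi.single j 1) χ :=
  dirD_listDirD_of_mem hχ (fun i => Pi.single i (1 : ℝ)) α (List.nodup_finRange n)
    (List.mem_finRange j)

lemma mderiv3X_eq (α β γ : Fin n → ℕ) (a : X n × X n × X n → ℂ) :
    mderiv3X α β γ a = listDirD dirX α (List.finRange n)
      (listDirD dirP β (List.finRange n) (listDirD dirY γ (List.finRange n) a)) := rfl

lemma contDiff_mderiv3X (ha : ContDiff ℝ ∞ a) (α β γ : Fin n → ℕ) :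
    ContDiff ℝ ∞ (mderiv3X α β γ a) :=
  contDiff_listDirD (contDiff_listDirD (contDiff_listDirD ha _ _ _) _ _ _) dirX α _

lemma mderiv3X_zero (a : X n × X n × X n → ℂ) : mderiv3X 0 0 0 a = a := by
  simp only [mderiv3X_eq, listDirD_zero]

lemma dirD_dirX_mderiv3X (ha : ContDiff ℝ ∞ a) (α β γ : Fin n → ℕ) (j : Fin n) :
    dirD (dirX j) (mderiv3X α β γ a) = mderiv3X (α + Pi.single j 1) β γ a :=
  dirD_listDirD_of_mem (contDiff_listDirD (contDiff_listDirD ha _ _ _) _ _ _) dirX α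
    (List.nodup_finRange n) (List.mem_finRange j)

lemma dirD_dirP_mderiv3X (ha : ContDiff ℝ ∞ a) (α β γ : Fin n → ℕ) (j : Fin n) :
    dirD (dirP j) (mderiv3X α β γ a) = mderiv3X α (β + Pi.single j 1) γ a := by
  have hY := contDiff_listDirD ha dirY γ (List.finRange n)
  rw [mderiv3X_eq, dirD_listDirD (contDiff_listDirD hY _ _ _),
    dirD_listDirD_of_mem hY dirP β (List.nodup_finRange n) (List.mem_finRange j), mderiv3X_eq]

lemma dirD_dirY_mderiv3X (ha : ContDiff ℝ ∞ a) (α β γ : Fin n → ℕ) (j : Fin n) :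
    dirD (dirY j) (mderiv3X α β γ a) = mderiv3X α β (γ + Pi.single j 1) a := by
  have hY := contDiff_listDirD ha dirY γ (List.finRange n)
  rw [mderiv3X_eq, dirD_listDirD (contDiff_listDirD hY _ _ _), dirD_listDirD hY,
    dirD_listDirD_of_mem ha dirY γ (List.nodup_finRange n) (List.mem_finRange j), mderiv3X_eq]

end MultiIndexDerivatives

section Seminorms

variable {n : ℕ}

lemma degX_zero : degX (0 : Fin n → ℕ) = 0 := sum_eq_zero fun _ _ => rfl

lemma degX_add_single (α : Fin n → ℕ) (j : Fin n) : degX (α + Pi.single j 1) = degX α + 1 := by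
  simp only [degX, Pi.add_apply, sum_add_distrib, sum_pi_single', mem_univ, if_true]

lemma mem_idxX {N : ℕ} {α : Fin n → ℕ} (h : degX α ≤ N) : α ∈ idxX n N := by
  simp only [idxX, mem_filter, Fintype.mem_piFinset, mem_range, Nat.lt_succ_iff]
  exact ⟨fun i => (single_le_sum (fun _ _ => Nat.zero_le _) (mem_univ i)).trans h, h⟩

lemma one_le_brX (p : X n) : 1 ≤ brX p :=
  Real.one_le_sqrt.2 (le_add_of_nonneg_right (sum_nonneg fun _ _ => sq_nonneg _))

lemma brX_pos (p : X n) : 0 < brX p := one_pos.trans_le (one_le_brX p)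

lemma brX_sq (p : X n) : brX p ^ 2 = 1 + ∑ i, p i ^ 2 :=
  Real.sq_sqrt (add_nonneg zero_le_one (sum_nonneg fun _ _ => sq_nonneg _))

lemma norm_le_brX (p : X n) : ‖p‖ ≤ brX p := by
  refine (pi_norm_le_iff_of_nonneg (brX_pos p).le).2 fun i => Real.abs_le_sqrt ?_
  have := single_le_sum (f := fun i => p i ^ 2) (fun _ _ => sq_nonneg _) (mem_univ i)
  linarith

lemma brX_mul_le {p : X n} {r ε : ℝ} (hε : |ε| ≤ 1) (hp : ‖ε • p‖ ≤ r) :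
    brX p * |ε| ≤ Real.sqrt (1 + n * r ^ 2) := by
  refine Real.le_sqrt_of_sq_le ?_
  have hcoord (i : Fin n) : ε ^ 2 * p i ^ 2 ≤ r ^ 2 := by
    rw [← mul_pow]
    exact sq_le_sq' (neg_le_of_abs_le ((norm_le_pi_norm (ε • p) i).trans hp))
      (le_of_abs_le ((norm_le_pi_norm (ε • p) i).trans hp))
  calc (brX p * |ε|) ^ 2 = ε ^ 2 + ∑ i, ε ^ 2 * p i ^ 2 := by
        rw [mul_pow, brX_sq, sq_abs, ← mul_sum]; ring
    _ ≤ 1 + ∑ _i : Fin n, r ^ 2 :=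
        add_le_add ((sq_le_one_iff_abs_le_one ε).2 hε) (sum_le_sum fun i _ => hcoord i)
    _ = 1 + n * r ^ 2 := by simp only [sum_const, card_univ, Fintype.card_fin, nsmul_eq_mul]

lemma norm_mderiv1X_le {χ : X n → ℂ}
    (hχ : ∀ α : Fin n → ℕ, ∃ C : ℝ, ∀ x : X n, ‖mderiv1X α χ x‖ ≤ C)
    {N : ℕ} {α : Fin n → ℕ} (hα : degX α ≤ N) (x : X n) : ‖mderiv1X α χ x‖ ≤ ckNormX N χ := by
  obtain ⟨C, hC⟩ := hχ α
  calc ‖mderiv1X α χ x‖ ≤ ⨆ q, ‖mderiv1X α χ q‖ :=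
        le_ciSup (f := fun q => ‖mderiv1X α χ q‖) ⟨C, Set.forall_mem_range.2 hC⟩ x
    _ ≤ ckNormX N χ := single_le_sum (f := fun α => ⨆ q, ‖mderiv1X α χ q‖)
        (fun α _ => Real.iSup_nonneg fun q => norm_nonneg _) (mem_idxX hα)

lemma iSup_le_amp1Norm (m : ℝ) {N : ℕ} (a : X n × X n × X n → ℂ) {α β γ : Fin n → ℕ}
    (h : degX α + degX β + degX γ ≤ N) :
    ⨆ x : X n × X n × X n, brX x.2.1 ^ (-m + (degX β : ℝ)) * ‖mderiv3X α β γ a x‖ ≤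
      amp1Norm m N a := by
  have hnonneg (α β γ : Fin n → ℕ) : 0 ≤ if degX α + degX β + degX γ ≤ N then
      ⨆ x : X n × X n × X n, brX x.2.1 ^ (-m + (degX β : ℝ)) * ‖mderiv3X α β γ a x‖ else 0 := by
    split_ifs
    · exact Real.iSup_nonneg fun x =>
        mul_nonneg (Real.rpow_nonneg (brX_pos _).le _) (norm_nonneg _)
    · exact le_rfl
  refine le_trans ?_ (single_le_sum (fun α _ => sum_nonneg fun β _ => sum_nonneg fun γ _ =>
    hnonneg α β γ) (mem_idxX (by omega : degX α ≤ N)))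
  refine le_trans ?_ (single_le_sum (fun β _ => sum_nonneg fun γ _ => hnonneg α β γ)
    (mem_idxX (by omega : degX β ≤ N)))
  refine le_trans ?_ (single_le_sum (fun γ _ => hnonneg α β γ) (mem_idxX (by omega : degX γ ≤ N)))
  rw [if_pos h]

lemma norm_mderiv3X_le {m : ℝ} {a : X n × X n × X n → ℂ} (ha : IsAmp1 m a) {N : ℕ}
    {α β γ : Fin n → ℕ} (h : degX α + degX β + degX γ ≤ N) (z : X n × X n × X n) :
    ‖mderiv3X α β γ a z‖ ≤ amp1Norm m N a * brX z.2.1 ^ m * (brX z.2.1)⁻¹ ^ degX β := by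
  obtain ⟨C, hC⟩ := ha.2 α β γ
  have hbdd : BddAbove (Set.range fun x : X n × X n × X n =>
      brX x.2.1 ^ (-m + (degX β : ℝ)) * ‖mderiv3X α β γ a x‖) := by
    refine ⟨C, Set.forall_mem_range.2 fun x => ?_⟩
    have hp := Real.rpow_pos_of_pos (brX_pos x.2.1) (m - degX β)
    rw [show -m + (degX β : ℝ) = -(m - degX β) by ring, Real.rpow_neg (brX_pos _).le,
      inv_mul_le_iff₀ hp, mul_comm]
    exact hC x
  have hp := brX_pos z.2.1
  have hle := (le_ciSup hbdd z).trans (iSup_le_amp1Norm m a h)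
  have hsplit : brX z.2.1 ^ (-m + (degX β : ℝ)) = (brX z.2.1 ^ m * (brX z.2.1)⁻¹ ^ degX β)⁻¹ := by
    rw [Real.rpow_add hp, Real.rpow_neg hp.le, Real.rpow_natCast, mul_inv, inv_pow, inv_inv]
  simp only [hsplit] at hle
  rwa [inv_mul_le_iff₀ (by positivity), mul_comm, ← mul_assoc] at hle

end Seminorms

section AmplitudeBounds

lemma DerivsBoundedAt.dirD_smul {E : Type*} [NormedAddCommGroup E] [NormedSpace ℝ E] {ι : Type*}
    {v : ι → E} {K : ℕ} {f : E → ℂ} {x w : E} {M : ℝ} (h : DerivsBoundedAt v K (dirD w f) x M)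
    (hf : ContDiffAt ℝ ∞ f x) (r : ℝ) : DerivsBoundedAt v K (dirD (r • w) f) x (|r| * M) := by
  have := h.const_mul (contDiffAt_dirD hf w) r
  rwa [Complex.norm_real, Real.norm_eq_abs, funext fun y => (Complex.real_smul (x := r)).symm,
    ← dirD_smul_left] at this

variable {n : ℕ}

lemma derivsBoundedAt_comp_clm {E : Type*} [NormedAddCommGroup E] [NormedSpace ℝ E] {ι : Type*}
    {v : ι → E} {χ : X n → ℂ} (hχ : ContDiff ℝ ∞ χ)
    (hχ_bdd : ∀ α : Fin n → ℕ, ∃ C : ℝ, ∀ x : X n, ‖mderiv1X α χ x‖ ≤ C) {R : ℝ} (hR : 1 ≤ R)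
    (L : E →L[ℝ] X n) (hv : ∀ i, ∃ j, ∃ r : ℝ, |r| ≤ R ∧ L (v i) = r • Pi.single j (1 : ℝ))
    (N : ℕ) (z : E) : DerivsBoundedAt v N (fun y => χ (L y)) z (R ^ N * ckNormX N χ) := by
  suffices h : ∀ K (α : Fin n → ℕ), degX α + K ≤ N →
      DerivsBoundedAt v K (fun y => mderiv1X α χ (L y)) z (R ^ K * ckNormX N χ) by
    simpa only [mderiv1X_zero] using h N 0 (by rw [degX_zero, zero_add])
  intro K
  induction K with
  | zero =>
    intro α hα
    exact (norm_mderiv1X_le hχ_bdd (by omega) _).trans (by rw [pow_zero, one_mul])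
  | succ K ih =>
    intro α hα
    have hnorm := norm_mderiv1X_le hχ_bdd (by omega : degX α ≤ N) (L z)
    have hck : 0 ≤ ckNormX N χ := (norm_nonneg _).trans hnorm
    have hsmooth := contDiff_mderiv1X hχ α
    refine ⟨hnorm.trans (le_mul_of_one_le_left hck (one_le_pow₀ hR)), fun i => ?_⟩
    obtain ⟨j, r, hr, hL⟩ := hv i
    have hj := ih (α + Pi.single j 1) (by rw [degX_add_single]; omega)
    rw [dirD_comp_clm L (hsmooth.differentiable (by simp)), hL, dirD_smul_left,
      dirD_mderiv1X hχ]
    refine ((hj.const_mul ((contDiff_mderiv1X hχ _).comp L.contDiff).contDiffAt r).mono ?_).congr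
      (.of_forall fun y => (Complex.real_smul (x := r)).symm)
    rw [Complex.norm_real, Real.norm_eq_abs, pow_succ', mul_assoc]
    gcongr

lemma derivsBoundedAt_comp_fst {χ : X n → ℂ} (hχ : ContDiff ℝ ∞ χ)
    (hχ_bdd : ∀ α : Fin n → ℕ, ∃ C : ℝ, ∀ x : X n, ‖mderiv1X α χ x‖ ≤ C) {lam : ℝ}
    (hlam : |lam| ≤ 1) (r : ℝ) (N : ℕ) (z : X n × X n × X n) :
    DerivsBoundedAt (scaledDirs lam r) N (fun y => χ y.1) z (ckNormX N χ) := by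
  have := derivsBoundedAt_comp_clm (v := scaledDirs lam r) hχ hχ_bdd le_rfl
    (ContinuousLinearMap.fst ℝ (X n) (X n × X n)) (by
      rintro (i | i | i)
      exacts [⟨i, lam, hlam, by simp [scaledDirs, dirX]⟩,
        ⟨i, 0, by simp, by simp [scaledDirs, dirP]⟩,
        ⟨i, 0, by simp, by simp [scaledDirs, dirY]⟩]) N z
  rwa [one_pow, one_mul] at this

lemma derivsBoundedAt_comp_snd_snd {χ : X n → ℂ} (hχ : ContDiff ℝ ∞ χ)
    (hχ_bdd : ∀ α : Fin n → ℕ, ∃ C : ℝ, ∀ x : X n, ‖mderiv1X α χ x‖ ≤ C) {lam : ℝ}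
    (hlam : |lam| ≤ 1) (r : ℝ) (N : ℕ) (z : X n × X n × X n) :
    DerivsBoundedAt (scaledDirs lam r) N (fun y => χ y.2.2) z (ckNormX N χ) := by
  have := derivsBoundedAt_comp_clm (v := scaledDirs lam r) hχ hχ_bdd le_rfl
    ((ContinuousLinearMap.snd ℝ (X n) (X n)).comp (ContinuousLinearMap.snd ℝ (X n) (X n × X n)))
    (by
      rintro (i | i | i)
      exacts [⟨i, 0, by simp, by simp [scaledDirs, dirX]⟩,
        ⟨i, 0, by simp, by simp [scaledDirs, dirP]⟩,
        ⟨i, lam, hlam, by simp [scaledDirs, dirY]⟩]) N z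
  rwa [one_pow, one_mul] at this

lemma exists_norm_mderiv1X_le_of_hasCompactSupport {ψ : X n → ℂ} (hψ : ContDiff ℝ ∞ ψ)
    (hψ_supp : HasCompactSupport ψ) (α : Fin n → ℕ) : ∃ C, ∀ x, ‖mderiv1X α ψ x‖ ≤ C := by
  have hiter (w : X n) (f : X n → ℂ) (hf : HasCompactSupport f) (k : ℕ) :
      HasCompactSupport ((dirD w)^[k] f) := by
    induction k with
    | zero => exact hf
    | succ k ih =>
      rw [Function.iterate_succ_apply']
      exact ih.mono' ((subset_tsupport _).trans (tsupport_fderiv_apply_subset ℝ w))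
  have hlist (l : List (Fin n)) :
      HasCompactSupport (listDirD (fun i => Pi.single i (1 : ℝ)) α l ψ) := by
    induction l with
    | nil => exact hψ_supp
    | cons i l ih => exact hiter _ _ ih _
  exact (contDiff_mderiv1X hψ α).continuous.bounded_above_of_compact_support (hlist _)

-- On the support of `ψ (ε p)` the momentum is at most of size `ε⁻¹`, so the factor `ε` from each
-- derivative compensates the length `brX p` of the momentum directions.
lemma derivsBoundedAt_cutoff {ψ : X n → ℂ} (hψ : ContDiff ℝ ∞ ψ) {r : ℝ}
    (hψ_supp : tsupport ψ ⊆ Metric.closedBall 0 r) {ε : ℝ} (hε : |ε| ≤ 1) (lam : ℝ) (N : ℕ)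
    (z : X n × X n × X n) :
    DerivsBoundedAt (scaledDirs lam (brX z.2.1)) N (fun y => ψ (ε • y.2.1)) z
      (Real.sqrt (1 + n * r ^ 2) ^ N * ckNormX N ψ) := by
  have hψ_cpt : HasCompactSupport ψ :=
    (isCompact_closedBall 0 r).of_isClosed_subset (isClosed_tsupport _) hψ_supp
  have hψ_bdd := exists_norm_mderiv1X_le_of_hasCompactSupport hψ hψ_cpt
  have hR : 1 ≤ Real.sqrt (1 + n * r ^ 2) :=
    Real.one_le_sqrt.2 (le_add_of_nonneg_right (by positivity))
  by_cases hz : ε • z.2.1 ∈ tsupport ψ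
  · have hp : |brX z.2.1 * ε| ≤ Real.sqrt (1 + n * r ^ 2) := by
      rw [abs_mul, abs_of_pos (brX_pos _)]
      exact brX_mul_le hε (mem_closedBall_zero_iff.1 (hψ_supp hz))
    exact derivsBoundedAt_comp_clm hψ hψ_bdd hR
      (ε • (ContinuousLinearMap.fst ℝ (X n) (X n)).comp
        (ContinuousLinearMap.snd ℝ (X n) (X n × X n))) (by
        rintro (i | i | i)
        exacts [⟨i, 0, by simp, by simp [scaledDirs, dirX]⟩,
          ⟨i, brX z.2.1 * ε, hp, by simp [scaledDirs, dirP, mul_comm, mul_smul, smul_comm ε]⟩,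
          ⟨i, 0, by simp, by simp [scaledDirs, dirY]⟩]) N z
  · have hcont : Continuous fun y : X n × X n × X n => ε • y.2.1 := by fun_prop
    refine .of_eventuallyEq_zero _ _ ((hcont.tendsto z).eventually
      (notMem_tsupport_iff_eventuallyEq.1 hz)) (mul_nonneg (by positivity) ?_)
    exact (norm_nonneg _).trans (norm_mderiv1X_le hψ_bdd (degX_zero.trans_le N.zero_le) 0)

lemma IsAmp1.derivsBoundedAt {m : ℝ} {a : X n × X n × X n → ℂ} (ha : IsAmp1 m a) {lam : ℝ}
    (hlam : |lam| ≤ 1) (N : ℕ) (z : X n × X n × X n) :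
    DerivsBoundedAt (scaledDirs lam (brX z.2.1)) N a z (amp1Norm m N a * brX z.2.1 ^ m) := by
  have hp := brX_pos z.2.1
  suffices h : ∀ K (α β γ : Fin n → ℕ), degX α + degX β + degX γ + K ≤ N →
      DerivsBoundedAt (scaledDirs lam (brX z.2.1)) K (mderiv3X α β γ a) z
        (amp1Norm m N a * brX z.2.1 ^ m * (brX z.2.1)⁻¹ ^ degX β) by
    simpa only [mderiv3X_zero, degX_zero, pow_zero, mul_one] using
      h N 0 0 0 (by simp only [degX_zero, zero_add, le_refl])
  intro K
  induction K with
  | zero => exact fun α β γ h => norm_mderiv3X_le ha h z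
  | succ K ih =>
    intro α β γ h
    have hnorm := norm_mderiv3X_le ha (by omega : degX α + degX β + degX γ ≤ N) z
    have hsmooth := (contDiff_mderiv3X ha.1 α β γ).contDiffAt (x := z)
    have hM := (norm_nonneg _).trans hnorm
    refine ⟨hnorm, ?_⟩
    rintro (i | i | i)
    · have hi := ih (α + Pi.single i 1) β γ (by rw [degX_add_single]; omega)
      rw [← dirD_dirX_mderiv3X ha.1] at hi
      exact (hi.dirD_smul hsmooth lam).mono (mul_le_of_le_one_left hM hlam)
    · have hi := ih α (β + Pi.single i 1) γ (by rw [degX_add_single]; omega)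
      rw [← dirD_dirP_mderiv3X ha.1, degX_add_single] at hi
      refine (hi.dirD_smul hsmooth (brX z.2.1)).mono (le_of_eq ?_)
      rw [abs_of_pos hp, pow_succ]
      field_simp
    · have hi := ih α β (γ + Pi.single i 1) (by rw [degX_add_single]; omega)
      rw [← dirD_dirY_mderiv3X ha.1] at hi
      exact (hi.dirD_smul hsmooth lam).mono (mul_le_of_le_one_left hM hlam)

end AmplitudeBounds

section RegularisedDistance

variable {n : ℕ} {σ : ℝ}

/-- The squared Euclidean distance of the two position variables, regularised by `σ`. -/
def regSqDist (σ : ℝ) (z : X n × X n × X n) : ℝ := σ + ∑ i, (z.1 i - z.2.2 i) ^ 2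

/-- The difference of the `i`-th coordinates of the two position variables, as a complex number. -/
def posDiff (i : Fin n) : X n × X n × X n →L[ℝ] ℂ :=
  Complex.ofRealCLM.comp ((ContinuousLinearMap.proj i : X n →L[ℝ] ℝ).comp
    (ContinuousLinearMap.fst ℝ (X n) (X n × X n) - (ContinuousLinearMap.snd ℝ (X n) (X n)).comp
      (ContinuousLinearMap.snd ℝ (X n) (X n × X n))))

lemma posDiff_apply (i : Fin n) (z : X n × X n × X n) :
    posDiff i z = ((z.1 i - z.2.2 i : ℝ) : ℂ) := by
  simp [posDiff]

lemma norm_posDiff (i : Fin n) (z : X n × X n × X n) : ‖posDiff i z‖ = |z.1 i - z.2.2 i| := by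
  rw [posDiff_apply, Complex.norm_real, Real.norm_eq_abs]

lemma norm_posDiff_scaledDirs_le (i : Fin n) (lam r : ℝ) (j : Fin n ⊕ Fin n ⊕ Fin n) :
    ‖posDiff i (scaledDirs lam r j)‖ ≤ |lam| := by
  have hsingle (j : Fin n) : |lam * (Pi.single j 1 : X n) i| ≤ |lam| := by
    rw [Pi.single_apply]
    split_ifs <;> simp
  rw [norm_posDiff]
  rcases j with j | j | j
  · simpa [scaledDirs, dirX] using hsingle j
  · simp [scaledDirs, dirP]
  · simpa [scaledDirs, dirY] using hsingle j

lemma ofReal_regSqDist (σ : ℝ) (z : X n × X n × X n) :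
    (regSqDist σ z : ℂ) = σ + ∑ i, posDiff i z * posDiff i z := by
  simp only [regSqDist, posDiff_apply, pow_two]
  push_cast
  rfl

lemma contDiff_regSqDist (σ : ℝ) :
    ContDiff ℝ ∞ fun z : X n × X n × X n => (regSqDist σ z : ℂ) := by
  simp only [ofReal_regSqDist]
  exact contDiff_const.add (.sum fun i _ => (posDiff i).contDiff.mul (posDiff i).contDiff)

lemma derivsBoundedAt_regSqDist (K : ℕ) (hσ : 0 ≤ σ) {lam : ℝ} (r : ℝ) {z : X n × X n × X n}
    (h : lam ^ 2 ≤ regSqDist σ z) :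
    DerivsBoundedAt (scaledDirs lam r) K (fun z => (regSqDist σ z : ℂ)) z
      ((1 + 2 ^ (K + 1) * (1 + n)) * regSqDist σ z) := by
  have hsmooth (i : Fin n) : ContDiffAt ℝ ∞ (posDiff i) z := (posDiff i).contDiff.contDiffAt
  have hdiff (i : Fin n) :
      DerivsBoundedAt (scaledDirs lam r) K (posDiff i) z (|z.1 i - z.2.2 i| + |lam|) :=
    .clm K _ ((norm_posDiff i z).trans_le (le_add_of_nonneg_right (abs_nonneg _))) fun j =>
      (norm_posDiff_scaledDirs_le i lam r j).trans (le_add_of_nonneg_left (abs_nonneg _))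
  have hsum := (DerivsBoundedAt.const (scaledDirs lam r) K z
      (Complex.norm_of_nonneg hσ).le).add
    (.sum univ (fun i _ => (hdiff i).mul (hdiff i) (hsmooth i) (hsmooth i))
      fun i _ => (hsmooth i).mul (hsmooth i)) contDiffAt_const
    (.sum fun i _ => (hsmooth i).mul (hsmooth i))
  simp only [ofReal_regSqDist]
  refine hsum.mono ?_
  have hsq (i : Fin n) : 2 ^ K * (|z.1 i - z.2.2 i| + |lam|) * (|z.1 i - z.2.2 i| + |lam|) ≤
      2 ^ (K + 1) * ((z.1 i - z.2.2 i) ^ 2 + lam ^ 2) := by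
    rw [pow_succ, mul_assoc, mul_assoc, ← sq_abs (z.1 i - z.2.2 i), ← sq_abs lam, ← pow_two]
    gcongr
    exact add_sq_le
  have hdist : 0 ≤ ∑ i, (z.1 i - z.2.2 i) ^ 2 := sum_nonneg fun _ _ => sq_nonneg _
  calc σ + ∑ i, 2 ^ K * (|z.1 i - z.2.2 i| + |lam|) * (|z.1 i - z.2.2 i| + |lam|)
      ≤ σ + 2 ^ (K + 1) * (∑ i, (z.1 i - z.2.2 i) ^ 2 + n * lam ^ 2) := by
        refine add_le_add le_rfl ((sum_le_sum fun i _ => hsq i).trans_eq ?_)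
        simp only [← mul_sum, sum_add_distrib, sum_const, card_univ, Fintype.card_fin,
          nsmul_eq_mul]
    _ ≤ regSqDist σ z + 2 ^ (K + 1) * (regSqDist σ z + n * regSqDist σ z) := by
        gcongr
        · exact le_add_of_nonneg_right hdist
        · exact le_add_of_nonneg_left hσ
    _ = (1 + 2 ^ (K + 1) * (1 + n)) * regSqDist σ z := by ring

end RegularisedDistance

section MomentumLaplacian

variable {n : ℕ} {σ ℏ lam : ℝ} {f : X n × X n × X n → ℂ} {z : X n × X n × X n}

/-- The operator `σ - ℏ² Δ_p`. It multiplies the plane wave by `regSqDist σ`. -/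
def regLaplacianP (σ ℏ : ℝ) (f : X n × X n × X n → ℂ) : X n × X n × X n → ℂ :=
  fun y => (σ : ℂ) * f y + ∑ i, -(ℏ : ℂ) ^ 2 * dirD (dirP i) (dirD (dirP i) f) y

lemma contDiff_regLaplacianP (σ ℏ : ℝ) (hf : ContDiff ℝ ∞ f) :
    ContDiff ℝ ∞ (regLaplacianP σ ℏ f) :=
  (contDiff_const.mul hf).add
    (.sum fun _ _ => contDiff_const.mul (contDiff_dirD (contDiff_dirD hf _) _))

lemma contDiff_iterate_regLaplacianP (σ ℏ : ℝ) (hf : ContDiff ℝ ∞ f) (k : ℕ) :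
    ContDiff ℝ ∞ ((regLaplacianP σ ℏ)^[k] f) := by
  induction k with
  | zero => exact hf
  | succ k ih =>
    rw [Function.iterate_succ_apply']
    exact contDiff_regLaplacianP σ ℏ ih

lemma regLaplacianP_eventuallyEq_zero (σ ℏ : ℝ) (h : f =ᶠ[𝓝 z] fun _ => 0) :
    regLaplacianP σ ℏ f =ᶠ[𝓝 z] fun _ => 0 := by
  have hsnd (i : Fin n) : dirD (dirP i) (dirD (dirP i) f) =ᶠ[𝓝 z] fun _ => 0 := by
    have := dirD_congr (dirD_congr h (dirP i)) (dirP i)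
    rwa [dirD_const, dirD_const] at this
  filter_upwards [h, eventually_all.2 hsnd] with y hy hsnd
  simp only [regLaplacianP, hy, hsnd, mul_zero, sum_const_zero, add_zero]

lemma iterate_regLaplacianP_eventuallyEq_zero (σ ℏ : ℝ) (h : f =ᶠ[𝓝 z] fun _ => 0) (k : ℕ) :
    (regLaplacianP σ ℏ)^[k] f =ᶠ[𝓝 z] fun _ => 0 := by
  induction k with
  | zero => exact h
  | succ k ih =>
    rw [Function.iterate_succ_apply']
    exact regLaplacianP_eventuallyEq_zero σ ℏ ih

lemma DerivsBoundedAt.dirD_dirP {K : ℕ} {r M : ℝ} (hr : 0 < r)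
    (h : DerivsBoundedAt (scaledDirs lam r) (K + 1) f z M) (hf : ContDiff ℝ ∞ f) (i : Fin n) :
    DerivsBoundedAt (scaledDirs lam r) K (dirD (dirP i) f) z (r⁻¹ * M) := by
  have := (h.2 (.inr (.inl i))).dirD_smul hf.contDiffAt r⁻¹
  rwa [abs_of_pos (inv_pos.2 hr), scaledDirs, Sum.elim_inr, Sum.elim_inl,
    inv_smul_smul₀ hr.ne'] at this

lemma DerivsBoundedAt.regLaplacianP {K : ℕ} {r M : ℝ} (hr : 0 < r) (hσ : 0 ≤ σ)
    (h : DerivsBoundedAt (scaledDirs lam r) (K + 2) f z M) (hf : ContDiff ℝ ∞ f) (ℏ : ℝ) :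
    DerivsBoundedAt (scaledDirs lam r) K (regLaplacianP σ ℏ f) z
      ((σ + n * (ℏ / r) ^ 2) * M) := by
  have hsmooth (i : Fin n) : ContDiff ℝ ∞ (dirD (dirP i) (dirD (dirP i) f)) :=
    contDiff_dirD (contDiff_dirD hf _) _
  have hsnd (i : Fin n) :=
    ((h.dirD_dirP hr hf i).dirD_dirP hr (contDiff_dirD hf _) i).const_mul
      (hsmooth i).contDiffAt (-(ℏ : ℂ) ^ 2)
  refine (((h.of_le (by omega)).const_mul hf.contDiffAt (σ : ℂ)).add
    (.sum univ (fun i _ => hsnd i) fun i _ => contDiffAt_const.mul (hsmooth i).contDiffAt)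
    (contDiffAt_const.mul hf.contDiffAt)
    (.sum fun i _ => contDiffAt_const.mul (hsmooth i).contDiffAt)).mono (le_of_eq ?_)
  simp only [norm_neg, norm_pow, Complex.norm_real, Real.norm_eq_abs, abs_of_nonneg hσ, sq_abs,
    sum_const, card_univ, Fintype.card_fin, nsmul_eq_mul]
  field_simp

lemma DerivsBoundedAt.iterate_regLaplacianP {K k : ℕ} {r M : ℝ} (hr : 0 < r) (hσ : 0 ≤ σ)
    (h : DerivsBoundedAt (scaledDirs lam r) (K + 2 * k) f z M) (hf : ContDiff ℝ ∞ f) (ℏ : ℝ) :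
    DerivsBoundedAt (scaledDirs lam r) K ((_root_.regLaplacianP σ ℏ)^[k] f) z
      ((σ + n * (ℏ / r) ^ 2) ^ k * M) := by
  induction k generalizing f M with
  | zero => exact h.mono (by rw [pow_zero, one_mul])
  | succ k ih =>
    rw [Function.iterate_succ_apply, pow_succ, mul_assoc]
    exact ih (DerivsBoundedAt.regLaplacianP (K := K + 2 * k) hr hσ h hf ℏ)
      (contDiff_regLaplacianP σ ℏ hf)

end MomentumLaplacian

section ByPartsAmplitude

variable {n : ℕ} {σ ℏ : ℝ} {k : ℕ} {χ₁ χ₂ : X n → ℂ} {f : X n × X n × X n → ℂ}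
  {z : X n × X n × X n}

/-- The amplitude `χ₁ f χ₂` after `k` integrations by parts in momentum, each replacing `f` by
`(σ + |x - y|²)⁻¹ (σ - ℏ² Δ_p) f`. -/
def byPartsAmp (σ ℏ : ℝ) (k : ℕ) (χ₁ χ₂ : X n → ℂ) (f : X n × X n × X n → ℂ) :
    X n × X n × X n → ℂ :=
  fun z => χ₁ z.1 * χ₂ z.2.2 * ((regSqDist σ z : ℂ)⁻¹ ^ k * (regLaplacianP σ ℏ)^[k] f z)

lemma byPartsAmp_eventuallyEq_zero_of_fst (h : z.1 ∉ tsupport χ₁) :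
    byPartsAmp σ ℏ k χ₁ χ₂ f =ᶠ[𝓝 z] fun _ => 0 := by
  filter_upwards [(continuous_fst.tendsto z).eventually (notMem_tsupport_iff_eventuallyEq.1 h)]
    with y hy
  simp only [byPartsAmp, hy, Pi.zero_apply, zero_mul]

lemma byPartsAmp_eventuallyEq_zero_of_snd_snd (h : z.2.2 ∉ tsupport χ₂) :
    byPartsAmp σ ℏ k χ₁ χ₂ f =ᶠ[𝓝 z] fun _ => 0 := by
  filter_upwards [(continuous_snd.snd.tendsto z).eventually
    (notMem_tsupport_iff_eventuallyEq.1 h)] with y hy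
  simp only [byPartsAmp, hy, Pi.zero_apply, zero_mul, mul_zero]

lemma byPartsAmp_eventuallyEq_zero (h : f =ᶠ[𝓝 z] fun _ => 0) :
    byPartsAmp σ ℏ k χ₁ χ₂ f =ᶠ[𝓝 z] fun _ => 0 := by
  filter_upwards [iterate_regLaplacianP_eventuallyEq_zero σ ℏ h k] with y hy
  simp only [byPartsAmp, hy, mul_zero]

lemma contDiffAt_inv_regSqDist (h : regSqDist σ z ≠ 0) :
    ContDiffAt ℝ ∞ (fun z : X n × X n × X n => (regSqDist σ z : ℂ)⁻¹) z :=
  (contDiff_regSqDist σ).contDiffAt.inv (Complex.ofReal_ne_zero.2 h)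

lemma contDiffAt_byPartsAmp (hχ₁ : ContDiff ℝ ∞ χ₁) (hχ₂ : ContDiff ℝ ∞ χ₂) (hf : ContDiff ℝ ∞ f)
    (h : regSqDist σ z ≠ 0) : ContDiffAt ℝ ∞ (byPartsAmp σ ℏ k χ₁ χ₂ f) z :=
  ((hχ₁.comp contDiff_fst).mul (hχ₂.comp contDiff_snd.snd)).contDiffAt.mul
    (((contDiffAt_inv_regSqDist h).pow k).mul
      (contDiff_iterate_regLaplacianP σ ℏ hf k).contDiffAt)

lemma contDiff_byPartsAmp (hχ₁ : ContDiff ℝ ∞ χ₁) (hχ₂ : ContDiff ℝ ∞ χ₂) (hf : ContDiff ℝ ∞ f)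
    (h : ∀ z : X n × X n × X n, z.1 ∈ tsupport χ₁ → z.2.2 ∈ tsupport χ₂ → regSqDist σ z ≠ 0) :
    ContDiff ℝ ∞ (byPartsAmp σ ℏ k χ₁ χ₂ f) := by
  refine contDiff_iff_contDiffAt.2 fun z => ?_
  by_cases hz₁ : z.1 ∈ tsupport χ₁
  · by_cases hz₂ : z.2.2 ∈ tsupport χ₂
    · exact contDiffAt_byPartsAmp hχ₁ hχ₂ hf (h z hz₁ hz₂)
    · exact contDiffAt_const.congr_of_eventuallyEq (byPartsAmp_eventuallyEq_zero_of_snd_snd hz₂)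
  · exact contDiffAt_const.congr_of_eventuallyEq (byPartsAmp_eventuallyEq_zero_of_fst hz₁)

/-- The constant in the derivative bounds for `byPartsAmp`. -/
def byPartsConst (n K k : ℕ) : ℝ :=
  2 ^ K * 2 ^ K * 2 ^ K * (2 ^ K * derivsInvConst (1 + 2 ^ (K + 1) * (1 + n)) K) ^ k

lemma byPartsConst_nonneg (n K k : ℕ) : 0 ≤ byPartsConst n K k := by
  have := derivsInvConst_nonneg (C := 1 + 2 ^ (K + 1) * (1 + n)) (by positivity) K
  unfold byPartsConst
  positivity

lemma derivsBoundedAt_byPartsAmp {K N : ℕ} (hK : K ≤ N) (hσ : 0 ≤ σ) {lam r M : ℝ}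
    (hlam : lam ≠ 0) (hlam_le : |lam| ≤ 1) (hr : 0 < r) (hχ₁ : ContDiff ℝ ∞ χ₁)
    (hχ₂ : ContDiff ℝ ∞ χ₂) (hχ₁_bdd : ∀ α : Fin n → ℕ, ∃ C : ℝ, ∀ x : X n, ‖mderiv1X α χ₁ x‖ ≤ C)
    (hχ₂_bdd : ∀ α : Fin n → ℕ, ∃ C : ℝ, ∀ x : X n, ‖mderiv1X α χ₂ x‖ ≤ C)
    (hf : ContDiff ℝ ∞ f) (hz : lam ^ 2 ≤ regSqDist σ z)
    (h : DerivsBoundedAt (scaledDirs lam r) (K + 2 * k) f z M) :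
    DerivsBoundedAt (scaledDirs lam r) K (byPartsAmp σ ℏ k χ₁ χ₂ f) z
      (byPartsConst n K k * (ckNormX N χ₁ * ckNormX N χ₂) *
        (((regSqDist σ z)⁻¹ * (σ + n * (ℏ / r) ^ 2)) ^ k * M)) := by
  have hpos : 0 < regSqDist σ z := (by positivity : 0 < lam ^ 2).trans_le hz
  have hnorm : ‖(regSqDist σ z : ℂ)‖ = regSqDist σ z := Complex.norm_of_nonneg hpos.le
  have hinv := DerivsBoundedAt.inv (K := K) (C := 1 + 2 ^ (K + 1) * (1 + n)) (by positivity)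
    (by simpa only [hnorm] using derivsBoundedAt_regSqDist K hσ r hz)
    (contDiff_regSqDist σ).contDiffAt (Complex.ofReal_ne_zero.2 hpos.ne')
  have hsmooth_inv := contDiffAt_inv_regSqDist hpos.ne'
  have hsmooth_f := (contDiff_iterate_regLaplacianP σ ℏ hf k).contDiffAt (x := z)
  have hsmooth₁ : ContDiffAt ℝ ∞ (fun y : X n × X n × X n => χ₁ y.1) z :=
    (hχ₁.comp contDiff_fst).contDiffAt
  have hsmooth₂ : ContDiffAt ℝ ∞ (fun y : X n × X n × X n => χ₂ y.2.2) z :=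
    (hχ₂.comp contDiff_snd.snd).contDiffAt
  have hcut := ((derivsBoundedAt_comp_fst hχ₁ hχ₁_bdd hlam_le r N z).of_le hK).mul
    ((derivsBoundedAt_comp_snd_snd hχ₂ hχ₂_bdd hlam_le r N z).of_le hK) hsmooth₁ hsmooth₂
  have hamp := (hinv.pow hsmooth_inv k).mul (h.iterate_regLaplacianP hr hσ hf ℏ)
    (hsmooth_inv.pow k) hsmooth_f
  refine (hcut.mul hamp (hsmooth₁.mul hsmooth₂) ((hsmooth_inv.pow k).mul hsmooth_f)).mono
    (le_of_eq ?_)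
  rw [hnorm, byPartsConst]
  simp only [mul_pow]
  ring

end ByPartsAmplitude

section IntegrationByParts

variable {n : ℕ} {σ ℏ ρ : ℝ} {f : X n × X n × X n → ℂ}

lemma dirD_eq_zero_of_momentum (hf_supp : ∀ x p y, ρ < ‖p‖ → f (x, p, y) = 0)
    (v : X n × X n × X n) (x p y : X n) (hp : ρ < ‖p‖) : dirD v f (x, p, y) = 0 := by
  have hf_zero := eventuallyEq_zero_of_momentum (z := (x, p, y)) hf_supp hp
  rw [(dirD_congr hf_zero v).eq_of_nhds, dirD_const]

lemma iterate_regLaplacianP_eq_zero_of_momentum (σ ℏ : ℝ)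
    (hf_supp : ∀ x p y, ρ < ‖p‖ → f (x, p, y) = 0) (k : ℕ) (x p y : X n) (hp : ρ < ‖p‖) :
    (regLaplacianP σ ℏ)^[k] f (x, p, y) = 0 :=
  (iterate_regLaplacianP_eventuallyEq_zero σ ℏ
    (eventuallyEq_zero_of_momentum (z := (x, p, y)) hf_supp hp) k).eq_of_nhds

lemma integrable_mul_planeWave (hf : Continuous f)
    (hf_supp : ∀ x p y, ρ < ‖p‖ → f (x, p, y) = 0) (ℏ : ℝ) (x y w : X n) :
    Integrable fun p => f (x, p, y) * planeWave ℏ p w := by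
  refine Continuous.integrable_of_hasCompactSupport (by fun_prop)
    (.intro (isCompact_closedBall 0 ρ) fun p hp => ?_)
  rw [hf_supp x p y (by simpa using hp), zero_mul]

lemma fderiv_momentum_slice (hf : Differentiable ℝ f) (x p y : X n) (i : Fin n) :
    fderiv ℝ (fun p => f (x, p, y)) p (Pi.single i 1) = dirD (dirP i) f (x, p, y) := by
  have hslice : HasFDerivAt (fun p : X n => (x, p, y))
      ((ContinuousLinearMap.inr ℝ (X n) (X n × X n)).comp
        (ContinuousLinearMap.inl ℝ (X n) (X n))) p :=
    (hasFDerivAt_prodMk_right x (p, y)).comp p (hasFDerivAt_prodMk_left p y)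
  have h := ((hf (x, p, y)).hasFDerivAt.comp (f := fun p : X n => (x, p, y)) p hslice).fderiv
  exact DFunLike.congr_fun h (Pi.single i 1)

lemma hasFDerivAt_planeWave (ℏ : ℝ) (p w : X n) :
    HasFDerivAt (fun p => planeWave ℏ p w) (planeWave ℏ p w • (Complex.I / (ℏ : ℂ)) •
      Complex.ofRealCLM.comp
        (∑ i, w i • (ContinuousLinearMap.proj i : X n →L[ℝ] ℝ))) p := by
  set L : X n →L[ℝ] ℂ := (Complex.I / (ℏ : ℂ)) • Complex.ofRealCLM.comp
    (∑ i, w i • (ContinuousLinearMap.proj i : X n →L[ℝ] ℝ)) with hL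
  have hexp : (fun p => planeWave ℏ p w) = fun p => Complex.exp (L p) := by
    funext q
    simp [planeWave, hL, mul_comm, mul_div_right_comm]
  rw [hexp, congrFun hexp p]
  exact L.hasFDerivAt.cexp

lemma fderiv_planeWave (ℏ : ℝ) (p w : X n) (i : Fin n) :
    fderiv ℝ (fun p => planeWave ℏ p w) p (Pi.single i 1) =
      Complex.I * w i / ℏ * planeWave ℏ p w := by
  rw [(hasFDerivAt_planeWave ℏ p w).fderiv]
  simp [Pi.single_apply]
  ring

lemma integral_dirD_dirP_mul_planeWave (hf : ContDiff ℝ ∞ f)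
    (hf_supp : ∀ x p y, ρ < ‖p‖ → f (x, p, y) = 0) (ℏ : ℝ) (x y w : X n) (i : Fin n) :
    ∫ p, dirD (dirP i) f (x, p, y) * planeWave ℏ p w =
      -(Complex.I * w i / ℏ) * ∫ p, f (x, p, y) * planeWave ℏ p w := by
  have hdiff : Differentiable ℝ f := hf.differentiable (by simp)
  have hf_int := integrable_mul_planeWave hf.continuous hf_supp ℏ x y w
  have hdf_int := integrable_mul_planeWave (contDiff_dirD hf (dirP i)).continuous
    (dirD_eq_zero_of_momentum hf_supp (dirP i)) ℏ x y w
  have h := integral_mul_fderiv_eq_neg_fderiv_mul_of_integrable (μ := volume)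
    (f := fun p => f (x, p, y)) (g := fun p => planeWave ℏ p w) (v := Pi.single i 1)
    (by simpa only [fderiv_momentum_slice hdiff] using hdf_int)
    (by simpa only [fderiv_planeWave, mul_left_comm] using hf_int.const_mul _) hf_int
    (fun p _ => (hdiff _).comp p (by fun_prop))
    fun p _ => (hasFDerivAt_planeWave ℏ p w).differentiableAt
  simp only [fderiv_momentum_slice hdiff, fderiv_planeWave, mul_left_comm (f _),
    integral_const_mul] at h
  rw [neg_mul, h, neg_neg]

lemma integral_regLaplacianP_mul_planeWave (hℏ : ℏ ≠ 0) (hf : ContDiff ℝ ∞ f)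
    (hf_supp : ∀ x p y, ρ < ‖p‖ → f (x, p, y) = 0) (σ : ℝ) (x y : X n) :
    ∫ p, regLaplacianP σ ℏ f (x, p, y) * planeWave ℏ p (x - y) =
      regSqDist σ (x, 0, y) * ∫ p, f (x, p, y) * planeWave ℏ p (x - y) := by
  have hdf (i : Fin n) := contDiff_dirD hf (dirP i)
  have hdf_supp (i : Fin n) := dirD_eq_zero_of_momentum hf_supp (dirP i)
  have hsnd_int (i : Fin n) := integrable_mul_planeWave
    (contDiff_dirD (hdf i) (dirP i)).continuous
    (dirD_eq_zero_of_momentum (hdf_supp i) (dirP i)) ℏ x y (x - y)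
  have hsnd (i : Fin n) :
      -(ℏ : ℂ) ^ 2 * ∫ p, dirD (dirP i) (dirD (dirP i) f) (x, p, y) * planeWave ℏ p (x - y) =
        ((x i - y i : ℝ) : ℂ) ^ 2 * ∫ p, f (x, p, y) * planeWave ℏ p (x - y) := by
    rw [integral_dirD_dirP_mul_planeWave (hdf i) (hdf_supp i),
      integral_dirD_dirP_mul_planeWave hf hf_supp, Pi.sub_apply]
    have : (ℏ : ℂ) ≠ 0 := Complex.ofReal_ne_zero.2 hℏ
    field_simp
    rw [Complex.I_sq]
    ring
  simp only [regLaplacianP, add_mul, sum_mul, mul_assoc]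
  rw [integral_add ((integrable_mul_planeWave hf.continuous hf_supp ℏ x y _).const_mul _)
      (integrable_finsetSum _ fun i _ => (hsnd_int i).const_mul _),
    integral_finsetSum _ fun i _ => (hsnd_int i).const_mul _]
  simp only [integral_const_mul, hsnd, ← sum_mul, ← add_mul, regSqDist]
  push_cast
  rfl

lemma integral_iterate_regLaplacianP_mul_planeWave (hℏ : ℏ ≠ 0) (hf : ContDiff ℝ ∞ f)
    (hf_supp : ∀ x p y, ρ < ‖p‖ → f (x, p, y) = 0) (σ : ℝ) (k : ℕ) (x y : X n) :
    ∫ p, (regLaplacianP σ ℏ)^[k] f (x, p, y) * planeWave ℏ p (x - y) =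
      (regSqDist σ (x, 0, y) : ℂ) ^ k * ∫ p, f (x, p, y) * planeWave ℏ p (x - y) := by
  induction k with
  | zero => rw [Function.iterate_zero_apply, pow_zero, one_mul]
  | succ k ih =>
    rw [Function.iterate_succ_apply', integral_regLaplacianP_mul_planeWave hℏ
      (contDiff_iterate_regLaplacianP σ ℏ hf k)
      (iterate_regLaplacianP_eq_zero_of_momentum σ ℏ hf_supp k), ih, pow_succ', mul_assoc]

variable {u χ₁ χ₂ : X n → ℂ}

lemma integrable_oscIntegrand (hf : Continuous f)
    (hf_supp : ∀ x p y, ρ < ‖p‖ → f (x, p, y) = 0) (hu : Continuous u)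
    (hu_supp : HasCompactSupport u) (ℏ : ℝ) (x : X n) :
    Integrable fun q : X n × X n => f (x, q.1, q.2) * planeWave ℏ q.1 (x - q.2) * u q.2 := by
  refine Continuous.integrable_of_hasCompactSupport (by fun_prop)
    (.intro ((isCompact_closedBall (0 : X n) ρ).prod hu_supp) fun q hq => ?_)
  by_cases hq₂ : q.2 ∈ tsupport u
  · have hq₁ : ρ < ‖q.1‖ := by simpa [hq₂] using hq
    rw [hf_supp x q.1 q.2 hq₁, zero_mul, zero_mul]
  · rw [image_eq_zero_of_notMem_tsupport hq₂, mul_zero]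

lemma oscIntegral_eq_integral_mul (hf : Continuous f)
    (hf_supp : ∀ x p y, ρ < ‖p‖ → f (x, p, y) = 0) (hu : Continuous u)
    (hu_supp : HasCompactSupport u) (ℏ : ℝ) (x : X n) :
    oscIntegral ℏ f u x = ∫ y, (∫ p, f (x, p, y) * planeWave ℏ p (x - y)) * u y := by
  simp only [oscIntegral, ← integral_mul_const]
  exact integral_integral_swap (integrable_oscIntegrand hf hf_supp hu hu_supp ℏ x)

lemma oscIntegral_add {g : X n × X n × X n → ℂ} (hf : Continuous f)
    (hf_supp : ∀ x p y, ρ < ‖p‖ → f (x, p, y) = 0) (hg : Continuous g)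
    (hg_supp : ∀ x p y, ρ < ‖p‖ → g (x, p, y) = 0) (hu : Continuous u)
    (hu_supp : HasCompactSupport u) (ℏ : ℝ) (x : X n) :
    oscIntegral ℏ (fun z => f z + g z) u x = oscIntegral ℏ f u x + oscIntegral ℏ g u x := by
  have h := integral_integral_add (μ := volume) (ν := volume)
    (integrable_oscIntegrand hf hf_supp hu hu_supp ℏ x)
    (integrable_oscIntegrand hg hg_supp hu hu_supp ℏ x)
  simp only [oscIntegral, add_mul]
  exact h

lemma byPartsAmp_eq_zero_of_momentum (hf_supp : ∀ x p y, ρ < ‖p‖ → f (x, p, y) = 0) (k : ℕ)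
    (x p y : X n) (hp : ρ < ‖p‖) : byPartsAmp σ ℏ k χ₁ χ₂ f (x, p, y) = 0 := by
  rw [byPartsAmp, iterate_regLaplacianP_eq_zero_of_momentum σ ℏ hf_supp k x p y hp, mul_zero,
    mul_zero]

lemma mul_oscIntegral_mul_eq_oscIntegral_byPartsAmp (hℏ : ℏ ≠ 0) (hχ₁ : ContDiff ℝ ∞ χ₁)
    (hχ₂ : ContDiff ℝ ∞ χ₂) (hf : ContDiff ℝ ∞ f)
    (hf_supp : ∀ x p y, ρ < ‖p‖ → f (x, p, y) = 0)
    (h : ∀ z : X n × X n × X n, z.1 ∈ tsupport χ₁ → z.2.2 ∈ tsupport χ₂ → regSqDist σ z ≠ 0)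
    (hu : Continuous u) (hu_supp : HasCompactSupport u) (k : ℕ) (x : X n) :
    χ₁ x * oscIntegral ℏ f (fun y => χ₂ y * u y) x =
      oscIntegral ℏ (byPartsAmp σ ℏ k χ₁ χ₂ f) u x := by
  have hχu : Continuous fun y => χ₂ y * u y := hχ₂.continuous.mul hu
  have hχu_supp : HasCompactSupport fun y => χ₂ y * u y := hu_supp.mul_left
  rw [oscIntegral_eq_integral_mul hf.continuous hf_supp hχu hχu_supp,
    oscIntegral_eq_integral_mul (contDiff_byPartsAmp hχ₁ hχ₂ hf h).continuous
      (byPartsAmp_eq_zero_of_momentum hf_supp k) hu hu_supp, ← integral_const_mul]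
  congr 1 with y
  have hdist (p : X n) : regSqDist σ (x, p, y) = regSqDist σ (x, 0, y) := rfl
  simp only [byPartsAmp, hdist, mul_assoc, integral_const_mul]
  rw [integral_iterate_regLaplacianP_mul_planeWave hℏ hf hf_supp]
  by_cases hx : χ₁ x = 0
  · simp only [hx, zero_mul]
  by_cases hy : χ₂ y = 0
  · simp only [hy, zero_mul, mul_zero]
  have hne : (regSqDist σ (x, 0, y) : ℂ) ≠ 0 := Complex.ofReal_ne_zero.2
    (h (x, 0, y) (subset_tsupport _ hx) (subset_tsupport _ hy))
  field_simp
  rw [mul_assoc, ← mul_pow, one_div_mul_cancel hne, one_pow, mul_one]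

end IntegrationByParts

section PolynomialDecay

variable {n : ℕ} {lam : ℝ}

/-- The integrable profile `(1 + ‖z‖ / lam)⁻⁽ⁿ⁺¹⁾` on `ℝⁿ`, with decay length `lam`. -/
def polyDecay (lam : ℝ) (z : X n) : ℝ := ((1 + ‖z‖ / lam) ^ (n + 1))⁻¹

lemma polyDecay_nonneg (hlam : 0 ≤ lam) (z : X n) : 0 ≤ polyDecay lam z := by
  unfold polyDecay
  positivity

lemma polyDecay_le_one (hlam : 0 ≤ lam) (z : X n) : polyDecay lam z ≤ 1 :=
  inv_le_one_of_one_le₀ (one_le_pow₀ (le_add_of_nonneg_right (by positivity)))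

lemma measurable_polyDecay (lam : ℝ) : Measurable (polyDecay lam : X n → ℝ) := by
  unfold polyDecay
  fun_prop

lemma integrable_polyDecay_one : Integrable (polyDecay 1 : X n → ℝ) := by
  have h : (polyDecay 1 : X n → ℝ) = fun z => (1 + ‖z‖) ^ (-((n + 1 : ℕ) : ℝ)) := by
    funext z
    rw [polyDecay, div_one, Real.rpow_neg (by positivity), Real.rpow_natCast]
  rw [h]
  exact integrable_one_add_norm (by simp)

lemma lintegral_polyDecay (hlam : 0 < lam) :
    ∫⁻ z : X n, ENNReal.ofReal (polyDecay lam z) =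
      ENNReal.ofReal (lam ^ n * ∫ z : X n, polyDecay 1 z) := by
  have h : (polyDecay lam : X n → ℝ) = fun z => polyDecay 1 (lam⁻¹ • z) := by
    funext z
    rw [polyDecay, polyDecay, norm_smul, norm_inv, Real.norm_of_nonneg hlam.le, div_one,
      inv_mul_eq_div]
  have h_int : Integrable (polyDecay lam : X n → ℝ) := by
    rw [h]
    exact integrable_polyDecay_one.comp_smul (inv_ne_zero hlam.ne')
  rw [← ofReal_integral_eq_lintegral_ofReal h_int
    (.of_forall fun z => polyDecay_nonneg hlam.le z), h,
    Measure.integral_comp_inv_smul_of_nonneg _ _ hlam.le, Module.finrank_fin_fun, smul_eq_mul]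

end PolynomialDecay

section OffDiagonalEstimate

variable {n : ℕ} {ℏ : ℝ} {u : X n → ℂ}

lemma opAmpX_eq (ℏ : ℝ) (a : X n × X n × X n → ℂ) (u : X n → ℂ) :
    OpAmpX ℏ a u = (((2 * Real.pi * ℏ) ^ n)⁻¹ : ℝ) • oscIntegral ℏ a u := rfl

lemma stronglyMeasurable_opAmpX (ℏ : ℝ) {a : X n × X n × X n → ℂ} (ha : Continuous a)
    (hu : Continuous u) : StronglyMeasurable (OpAmpX ℏ a u) := by
  have hphase : Continuous fun q : X n × X n => planeWave ℏ q.2 q.1 := by fun_prop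
  have h : StronglyMeasurable (oscIntegral ℏ a u) := by
    rw [show oscIntegral ℏ a u = fun x => ∫ p, planeWave ℏ p x * momentumIntegral ℏ a u x p from
      funext fun x => oscIntegral_eq ..]
    exact (hphase.stronglyMeasurable.mul
      (stronglyMeasurable_momentumIntegral ℏ ha hu)).integral_prod_right'
  exact h.const_smul (((2 * Real.pi * ℏ) ^ n)⁻¹ : ℝ)

lemma opAmpX_add {a b : X n × X n × X n → ℂ} {ρ : ℝ} (ha : Continuous a)
    (ha_supp : ∀ x p y, ρ < ‖p‖ → a (x, p, y) = 0) (hb : Continuous b)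
    (hb_supp : ∀ x p y, ρ < ‖p‖ → b (x, p, y) = 0) (hu : Continuous u)
    (hu_supp : HasCompactSupport u) (ℏ : ℝ) :
    OpAmpX ℏ (fun z => a z + b z) u = OpAmpX ℏ a u + OpAmpX ℏ b u := by
  have h : oscIntegral ℏ (fun z => a z + b z) u = oscIntegral ℏ a u + oscIntegral ℏ b u :=
    funext <| oscIntegral_add ha ha_supp hb hb_supp hu hu_supp ℏ
  rw [opAmpX_eq, h, smul_add, opAmpX_eq, opAmpX_eq]

lemma eLpNorm_opAmpX_le {lam c ρ : ℝ} (hℏ : 0 < ℏ) (hlam : 0 < lam) (hc : 0 ≤ c)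
    {a : X n × X n × X n → ℂ} (ha : ContDiff ℝ ∞ a) (ha_supp : ∀ x p y, ρ < ‖p‖ → a (x, p, y) = 0)
    (h : ∀ ws, ws <:+ positionDirs lam → ∀ z,
      ‖oneAddDirDs ws a z‖ ≤ c * polyDecay lam (z.1 - z.2.2))
    (hu : Continuous u) (hu_int : Integrable u) :
    eLpNorm (OpAmpX ℏ a u) 2 volume ≤
      ENNReal.ofReal (c * ∫ z : X n, polyDecay 1 z) * eLpNorm u 2 volume := by
  have : 0 ≤ ∫ z : X n, polyDecay 1 z := integral_nonneg (polyDecay_nonneg zero_le_one)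
  have hosc := lintegral_enorm_sq_oscIntegral_le hℏ.ne' hlam ha ha_supp (M := c)
    (fun ws hws z => (h ws hws z).trans
      (mul_le_of_le_one_right hc (polyDecay_le_one hlam.le _)))
    ((measurable_polyDecay lam).const_mul c) (fun x p y => h _ List.suffix_rfl (x, p, y)) hu hu_int
  simp only [ENNReal.ofReal_mul hc] at hosc
  rw [lintegral_const_mul _ (measurable_polyDecay lam).ennreal_ofReal, lintegral_polyDecay hlam,
    lintegral_enorm_sq_eq_eLpNorm_sq, lintegral_enorm_sq_eq_eLpNorm_sq, ← mul_pow, ← mul_pow,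
    ← mul_pow, (ENNReal.pow_right_strictMono two_ne_zero).le_iff_le, abs_of_pos hℏ] at hosc
  rw [opAmpX_eq, eLpNorm_const_smul, Real.enorm_of_nonneg (by positivity)]
  calc ENNReal.ofReal ((2 * Real.pi * ℏ) ^ n)⁻¹ * eLpNorm (oscIntegral ℏ a u) 2 volume
    _ ≤ ENNReal.ofReal ((2 * Real.pi * ℏ) ^ n)⁻¹ * (ENNReal.ofReal ((2 * Real.pi * ℏ) ^ n) *
        ENNReal.ofReal (lam⁻¹ ^ n) *
        (ENNReal.ofReal c * ENNReal.ofReal (lam ^ n * ∫ z : X n, polyDecay 1 z)) *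
        eLpNorm u 2 volume) := by gcongr
    _ = ENNReal.ofReal (c * ∫ z : X n, polyDecay 1 z) * eLpNorm u 2 volume := by
      rw [← ENNReal.ofReal_mul (by positivity), ← ENNReal.ofReal_mul hc,
        ← ENNReal.ofReal_mul (by positivity), ← mul_assoc, ← ENNReal.ofReal_mul (by positivity)]
      congr 2
      rw [inv_pow]
      field_simp

/-- Smooth functions with bounded derivatives whose supports are at distance at least `δ`. -/
structure AreSeparatedCutoffs (δ : ℝ) (χ₁ χ₂ : X n → ℂ) : Prop where
  contDiff_left : ContDiff ℝ ∞ χ₁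
  contDiff_right : ContDiff ℝ ∞ χ₂
  bdd_left : ∀ α : Fin n → ℕ, ∃ C : ℝ, ∀ x : X n, ‖mderiv1X α χ₁ x‖ ≤ C
  bdd_right : ∀ α : Fin n → ℕ, ∃ C : ℝ, ∀ x : X n, ‖mderiv1X α χ₂ x‖ ≤ C
  le_dist : ∀ x ∈ tsupport χ₁, ∀ y ∈ tsupport χ₂, δ ≤ dist x y

lemma ckNormX_nonneg (N : ℕ) (χ : X n → ℂ) : 0 ≤ ckNormX N χ :=
  sum_nonneg fun _ _ => Real.iSup_nonneg fun _ => norm_nonneg _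

lemma add_norm_sub_sq_le_regSqDist (σ : ℝ) (z : X n × X n × X n) :
    σ + ‖z.1 - z.2.2‖ ^ 2 ≤ regSqDist σ z := by
  have hsum : 0 ≤ ∑ i, (z.1 i - z.2.2 i) ^ 2 := sum_nonneg fun _ _ => sq_nonneg _
  refine add_le_add_right ((Real.le_sqrt (norm_nonneg _) hsum).1 ?_) σ
  refine (pi_norm_le_iff_of_nonneg (Real.sqrt_nonneg _)).2 fun i => Real.abs_le_sqrt ?_
  exact single_le_sum (f := fun i => (z.1 i - z.2.2 i) ^ 2) (fun _ _ => sq_nonneg _) (mem_univ i)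

/-- The constant of `AreSeparatedCutoffs.eLpNorm_mul_opAmpX_mul_le`. -/
def offDiagonalConst (n k : ℕ) : ℝ :=
  2 ^ (2 * n) * byPartsConst n (2 * n) k * ∫ z : X n, polyDecay 1 z

lemma offDiagonalConst_nonneg (n k : ℕ) : 0 ≤ offDiagonalConst n k :=
  mul_nonneg (mul_nonneg (by positivity) (byPartsConst_nonneg ..))
    (integral_nonneg (polyDecay_nonneg zero_le_one))

namespace AreSeparatedCutoffs

variable {δ σ : ℝ} {χ₁ χ₂ : X n → ℂ} {z : X n × X n × X n}

lemma le_norm_sub (hχ : AreSeparatedCutoffs δ χ₁ χ₂) (hz₁ : z.1 ∈ tsupport χ₁)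
    (hz₂ : z.2.2 ∈ tsupport χ₂) : δ ≤ ‖z.1 - z.2.2‖ :=
  dist_eq_norm z.1 z.2.2 ▸ hχ.le_dist _ hz₁ _ hz₂

lemma regSqDist_pos (hχ : AreSeparatedCutoffs δ χ₁ χ₂) (hδ : 0 < δ) (hσ : 0 ≤ σ)
    (hz₁ : z.1 ∈ tsupport χ₁) (hz₂ : z.2.2 ∈ tsupport χ₂) : 0 < regSqDist σ z := by
  have hdist := hδ.trans_le (hχ.le_norm_sub hz₁ hz₂)
  exact (by positivity : 0 < σ + ‖z.1 - z.2.2‖ ^ 2).trans_le (add_norm_sub_sq_le_regSqDist σ z)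

variable {lam : ℝ} {f : X n × X n × X n → ℂ} {N k : ℕ}

lemma norm_oneAddDirDs_byPartsAmp_le (hχ : AreSeparatedCutoffs δ χ₁ χ₂) (hδ : 0 < δ)
    (hN : 2 * n ≤ N) (hσ : 0 ≤ σ) {r M B : ℝ} (hlam : 0 < lam) (hlam_le : lam ≤ 1) (hr : 0 < r)
    (hf : ContDiff ℝ ∞ f) (h : DerivsBoundedAt (scaledDirs lam r) (2 * n + 2 * k) f z M)
    (hB : 0 ≤ B)
    (hz : z.1 ∈ tsupport χ₁ → z.2.2 ∈ tsupport χ₂ → z ∈ tsupport f → lam ^ 2 ≤ regSqDist σ z ∧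
      ((regSqDist σ z)⁻¹ * (σ + n * (ℏ / r) ^ 2)) ^ k * M ≤ B)
    {ws : List (X n × X n × X n)} (hws : ws <:+ positionDirs lam) :
    ‖oneAddDirDs ws (byPartsAmp σ ℏ k χ₁ χ₂ f) z‖ ≤
      2 ^ (2 * n) * (byPartsConst n (2 * n) k * (ckNormX N χ₁ * ckNormX N χ₂) * B) := by
  have hck := mul_nonneg (ckNormX_nonneg N χ₁) (ckNormX_nonneg N χ₂)
  have hconst := byPartsConst_nonneg n (2 * n) k
  have hzero (h₀ : byPartsAmp σ ℏ k χ₁ χ₂ f =ᶠ[𝓝 z] fun _ => 0) :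
      ‖oneAddDirDs ws (byPartsAmp σ ℏ k χ₁ χ₂ f) z‖ ≤
        2 ^ (2 * n) * (byPartsConst n (2 * n) k * (ckNormX N χ₁ * ckNormX N χ₂) * B) := by
    rw [(oneAddDirDs_congr h₀ ws).eq_of_nhds, oneAddDirDs_zero, norm_zero]
    positivity
  by_cases hz₁ : z.1 ∈ tsupport χ₁
  swap; · exact hzero (byPartsAmp_eventuallyEq_zero_of_fst hz₁)
  by_cases hz₂ : z.2.2 ∈ tsupport χ₂
  swap; · exact hzero (byPartsAmp_eventuallyEq_zero_of_snd_snd hz₂)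
  by_cases hz₃ : z ∈ tsupport f
  swap; · exact hzero (byPartsAmp_eventuallyEq_zero (notMem_tsupport_iff_eventuallyEq.1 hz₃))
  obtain ⟨hlam_sq, hB_le⟩ := hz hz₁ hz₂ hz₃
  have hlength : ws.length ≤ 2 * n := length_positionDirs lam ▸ hws.length_le
  have hamp := derivsBoundedAt_byPartsAmp (ℏ := ℏ) hN hσ hlam.ne' (by rwa [abs_of_pos hlam]) hr
    hχ.contDiff_left hχ.contDiff_right hχ.bdd_left hχ.bdd_right hf hlam_sq h
  have hsmooth : ContDiff ℝ ∞ (byPartsAmp σ ℏ k χ₁ χ₂ f) :=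
    contDiff_byPartsAmp hχ.contDiff_left hχ.contDiff_right hf
      fun z h₁ h₂ => (hχ.regSqDist_pos hδ hσ h₁ h₂).ne'
  refine ((hamp.of_le (K' := 0 + ws.length) (by simpa using hlength)).oneAddDirDs hsmooth
    fun w hw => mem_range_scaledDirs r (hws.subset hw)).norm_le.trans ?_
  exact mul_le_mul (pow_le_pow_right₀ one_le_two hlength) (by gcongr) hamp.nonneg (by positivity)

lemma eLpNorm_mul_opAmpX_mul_le (hχ : AreSeparatedCutoffs δ χ₁ χ₂) (hδ : 0 < δ) (hN : 2 * n ≤ N)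
    (hσ : 0 ≤ σ) (hℏ : 0 < ℏ) (hlam : 0 < lam) (hlam_le : lam ≤ 1) (hf : ContDiff ℝ ∞ f) {ρ : ℝ}
    (hf_supp : ∀ x p y, ρ < ‖p‖ → f (x, p, y) = 0) {M : X n × X n × X n → ℝ} {B : ℝ} (hB : 0 ≤ B)
    (h : ∀ z, DerivsBoundedAt (scaledDirs lam (brX z.2.1)) (2 * n + 2 * k) f z (M z))
    (hfB : ∀ z, z.1 ∈ tsupport χ₁ → z.2.2 ∈ tsupport χ₂ → z ∈ tsupport f →
      lam ^ 2 ≤ regSqDist σ z ∧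
      ((regSqDist σ z)⁻¹ * (σ + n * (ℏ / brX z.2.1) ^ 2)) ^ k * M z ≤
        B * polyDecay lam (z.1 - z.2.2))
    (hu : Continuous u) (hu_supp : HasCompactSupport u) :
    eLpNorm (fun x => χ₁ x * OpAmpX ℏ f (fun y => χ₂ y * u y) x) 2 volume ≤
      ENNReal.ofReal (offDiagonalConst n k * (ckNormX N χ₁ * ckNormX N χ₂) * B) *
        eLpNorm u 2 volume := by
  have hne (z : X n × X n × X n) (h₁ : z.1 ∈ tsupport χ₁) (h₂ : z.2.2 ∈ tsupport χ₂) :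
      regSqDist σ z ≠ 0 := (hχ.regSqDist_pos hδ hσ h₁ h₂).ne'
  have hck := mul_nonneg (ckNormX_nonneg N χ₁) (ckNormX_nonneg N χ₂)
  have hconst := byPartsConst_nonneg n (2 * n) k
  have hparts : (fun x => χ₁ x * OpAmpX ℏ f (fun y => χ₂ y * u y) x) =
      OpAmpX ℏ (byPartsAmp σ ℏ k χ₁ χ₂ f) u := by
    funext x
    rw [opAmpX_eq, opAmpX_eq, Pi.smul_apply, Pi.smul_apply, mul_smul_comm,
      mul_oscIntegral_mul_eq_oscIntegral_byPartsAmp hℏ.ne' hχ.contDiff_left hχ.contDiff_right hf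
        hf_supp hne hu hu_supp k]
  rw [hparts]
  refine (eLpNorm_opAmpX_le hℏ hlam
    (c := 2 ^ (2 * n) * (byPartsConst n (2 * n) k * (ckNormX N χ₁ * ckNormX N χ₂) * B))
    (by positivity) (contDiff_byPartsAmp hχ.contDiff_left hχ.contDiff_right hf hne)
    (byPartsAmp_eq_zero_of_momentum hf_supp k) (fun ws hws z => ?_) hu
    (hu.integrable_of_hasCompactSupport hu_supp)).trans_eq ?_
  · refine (hχ.norm_oneAddDirDs_byPartsAmp_le hδ hN hσ hlam hlam_le (brX_pos _) hf (h z)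
      (mul_nonneg hB (polyDecay_nonneg hlam.le _)) (hfB z) hws).trans_eq ?_
    ring
  · rw [offDiagonalConst]
    congr 2
    ring

end AreSeparatedCutoffs

end OffDiagonalEstimate

section FrequencyScales

variable {n N : ℕ} {m r w g δ ℏ lam : ℝ}

lemma rpow_le_pow_of_one_le (hN : m ≤ N) (hr : 1 ≤ r) : r ^ m ≤ r ^ N := by
  rw [← Real.rpow_natCast]
  exact Real.rpow_le_rpow_of_exponent_le hr hN

lemma high_frequency_gain_le (hN : m ≤ N) (hr : 1 ≤ r) (hlam : 0 < lam) (hlam_le : lam ≤ δ)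
    (hw : δ ≤ w) (hℏ : 0 < ℏ) (hℏ_le : ℏ ≤ lam * r) (hg : w ^ 2 ≤ g) :
    (g⁻¹ * (0 + n * (ℏ / r) ^ 2)) ^ (N + n + 1) * r ^ m ≤
      n ^ (N + n + 1) * 2 ^ (n + 1) * (ℏ / δ) ^ N * ((1 + w / lam) ^ (n + 1))⁻¹ := by
  have hδ : 0 < δ := hlam.trans_le hlam_le
  have hw_pos : 0 < w := hδ.trans_le hw
  set t := ℏ / (r * w) with ht
  have hgain : g⁻¹ * (0 + n * (ℏ / r) ^ 2) ≤ n * t ^ 2 :=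
    calc g⁻¹ * (0 + n * (ℏ / r) ^ 2)
      _ ≤ (w ^ 2)⁻¹ * (0 + n * (ℏ / r) ^ 2) := by gcongr
      _ = n * t ^ 2 := by rw [ht]; field_simp; ring
  have ht_le : t ≤ lam / w := by
    rw [ht, div_mul_eq_div_div]
    gcongr
    rwa [div_le_iff₀ (by positivity)]
  have ht_one : t ≤ 1 := ht_le.trans ((div_le_one hw_pos).2 (hlam_le.trans hw))
  have htr : t * r ≤ ℏ / δ :=
    calc t * r
      _ = ℏ / w := by rw [ht]; field_simp
      _ ≤ ℏ / δ := by gcongr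
  have hdecay : t ≤ 2 * (1 + w / lam)⁻¹ := by
    refine ht_le.trans ?_
    rw [← div_eq_mul_inv, one_add_div hlam.ne', div_div_eq_mul_div, mul_comm 2]
    rw [div_le_div_iff₀ hw_pos (by positivity)]
    nlinarith
  calc (g⁻¹ * (0 + n * (ℏ / r) ^ 2)) ^ (N + n + 1) * r ^ m
    _ ≤ (n * t ^ 2) ^ (N + n + 1) * r ^ N := by
      have hg_pos : 0 < g := (by positivity : 0 < w ^ 2).trans_le hg
      gcongr
      exact rpow_le_pow_of_one_le hN hr
    _ = n ^ (N + n + 1) * t ^ (N + n + 1) * ((t * r) ^ N * t ^ (n + 1)) := by ring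
    _ ≤ n ^ (N + n + 1) * 1 * ((ℏ / δ) ^ N * (2 * (1 + w / lam)⁻¹) ^ (n + 1)) := by
      gcongr
      exact pow_le_one₀ (by positivity) ht_one
    _ = _ := by rw [mul_pow, inv_pow]; ring

lemma low_frequency_gain_le {κ : ℝ} (hN : m ≤ N) (hr : 1 ≤ r) (hw : 0 ≤ w) (hℏ : 0 < ℏ)
    (hκ : r ≤ κ * (ℏ / δ)) (hg : ℏ ^ 2 + w ^ 2 ≤ g) :
    (g⁻¹ * (ℏ ^ 2 + n * (ℏ / r) ^ 2)) ^ (N + n + 1) * r ^ m ≤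
      (1 + n) ^ (N + n + 1) * 2 ^ (n + 1) * κ ^ N * (ℏ / δ) ^ N * ((1 + w / ℏ) ^ (n + 1))⁻¹ := by
  have hr_pos : 0 < r := one_pos.trans_le hr
  have hg_pos : 0 < g := (by positivity : 0 < ℏ ^ 2 + w ^ 2).trans_le hg
  set s := g⁻¹ * ℏ ^ 2 with hs
  have hgain : g⁻¹ * (ℏ ^ 2 + n * (ℏ / r) ^ 2) ≤ (1 + n) * s :=
    calc g⁻¹ * (ℏ ^ 2 + n * (ℏ / r) ^ 2)
      _ ≤ g⁻¹ * (ℏ ^ 2 + n * ℏ ^ 2) := by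
        gcongr
        exact div_le_self hℏ.le hr
      _ = (1 + n) * s := by rw [hs]; ring
  have hs_le : s ≤ (1 + (w / ℏ) ^ 2)⁻¹ :=
    calc s
      _ ≤ (ℏ ^ 2 + w ^ 2)⁻¹ * ℏ ^ 2 := by rw [hs]; gcongr
      _ = (1 + (w / ℏ) ^ 2)⁻¹ := by field_simp
  have hs_one : s ≤ 1 :=
    hs_le.trans (inv_le_one_of_one_le₀ (le_add_of_nonneg_right (by positivity)))
  have hdecay : s ≤ 2 * (1 + w / ℏ)⁻¹ := by
    have : 0 ≤ w / ℏ := by positivity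
    refine hs_le.trans ?_
    rw [← div_eq_mul_inv, inv_eq_one_div, div_le_div_iff₀ (by positivity) (by positivity)]
    nlinarith [sq_nonneg (w / ℏ - 1)]
  calc (g⁻¹ * (ℏ ^ 2 + n * (ℏ / r) ^ 2)) ^ (N + n + 1) * r ^ m
    _ ≤ ((1 + n) * s) ^ (N + n + 1) * (κ * (ℏ / δ)) ^ N := by
      gcongr
      exact (rpow_le_pow_of_one_le hN hr).trans (by gcongr)
    _ = (1 + n) ^ (N + n + 1) * s ^ N * (s ^ (n + 1) * (κ * (ℏ / δ)) ^ N) := by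
      rw [mul_pow (1 + (n : ℝ)) s]
      ring
    _ ≤ (1 + n) ^ (N + n + 1) * 1 * ((2 * (1 + w / ℏ)⁻¹) ^ (n + 1) * (κ * (ℏ / δ)) ^ N) := by
      have hκ_nonneg : 0 ≤ κ * (ℏ / δ) := hr_pos.le.trans hκ
      gcongr
      exact pow_le_one₀ (by positivity) hs_one
    _ = _ := by simp only [mul_pow, inv_pow]; ring

end FrequencyScales

section FrequencyPieces

variable {n N : ℕ} {m δ ℏ lam : ℝ} {χ₁ χ₂ u : X n → ℂ} {a c : X n × X n × X n → ℂ}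

/-- The number of derivatives entering the estimate: `2 n` for the `L²` bound, and two for each of
the `N + n + 1` integrations by parts. -/
def derivOrder (n N : ℕ) : ℕ := 2 * n + 2 * (N + n + 1)

/-- The right-hand side of the disjoint-support estimate, up to its constant. -/
def errorScale (m : ℝ) (N : ℕ) (δ ℏ : ℝ) (χ₁ χ₂ : X n → ℂ) (a : X n × X n × X n → ℂ) : ℝ :=
  ckNormX (derivOrder n N) χ₁ * ckNormX (derivOrder n N) χ₂ *
    (amp1Norm m (N + derivOrder n N) a * (ℏ / δ) ^ N)

lemma amp1Norm_nonneg (m : ℝ) (N : ℕ) (a : X n × X n × X n → ℂ) : 0 ≤ amp1Norm m N a :=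
  (Real.iSup_nonneg fun _ => mul_nonneg (Real.rpow_nonneg (brX_pos _).le _) (norm_nonneg _)).trans
    (iSup_le_amp1Norm m (α := 0) (β := 0) (γ := 0) a (by simp only [degX_zero, add_zero, zero_le]))

lemma errorScale_nonneg (hδ : 0 ≤ δ) (hℏ : 0 ≤ ℏ) (m : ℝ) (N : ℕ) (χ₁ χ₂ : X n → ℂ)
    (a : X n × X n × X n → ℂ) : 0 ≤ errorScale m N δ ℏ χ₁ χ₂ a :=
  mul_nonneg (mul_nonneg (ckNormX_nonneg ..) (ckNormX_nonneg ..))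
    (mul_nonneg (amp1Norm_nonneg ..) (by positivity))

/-- The constant of the high-frequency estimate. -/
def highFreqConst (n N : ℕ) : ℝ :=
  offDiagonalConst n (N + n + 1) * 2 ^ derivOrder n N * (n ^ (N + n + 1) * 2 ^ (n + 1))

/-- The constant of the low-frequency estimate, where `brX p ≤ κ * (ℏ / δ)`. -/
def lowFreqConst (n N : ℕ) (κ : ℝ) : ℝ :=
  offDiagonalConst n (N + n + 1) * 2 ^ derivOrder n N *
    ((1 + n) ^ (N + n + 1) * 2 ^ (n + 1) * κ ^ N)

lemma highFreqConst_nonneg (n N : ℕ) : 0 ≤ highFreqConst n N :=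
  mul_nonneg (mul_nonneg (offDiagonalConst_nonneg ..) (by positivity)) (by positivity)

lemma lowFreqConst_nonneg (n N : ℕ) {κ : ℝ} (hκ : 0 ≤ κ) : 0 ≤ lowFreqConst n N κ :=
  mul_nonneg (mul_nonneg (offDiagonalConst_nonneg ..) (by positivity)) (by positivity)

namespace AreSeparatedCutoffs

lemma eLpNorm_mul_opAmpX_mul_mul_le {σ ρ b Cc : ℝ} (hχ : AreSeparatedCutoffs δ χ₁ χ₂)
    (hδ : 0 < δ) (hσ : 0 ≤ σ) (hℏ : 0 < ℏ) (hlam : 0 < lam) (hlam_le : lam ≤ 1) (ha : IsAmp1 m a)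
    (hc : ContDiff ℝ ∞ c) (hc_supp : ∀ x p y, ρ < ‖p‖ → c (x, p, y) = 0)
    (hc_bdd : ∀ z, DerivsBoundedAt (scaledDirs lam (brX z.2.1)) (derivOrder n N) c z Cc)
    (hb : 0 ≤ b)
    (hcb : ∀ z, z.1 ∈ tsupport χ₁ → z.2.2 ∈ tsupport χ₂ → z ∈ tsupport c →
      lam ^ 2 ≤ regSqDist σ z ∧
      ((regSqDist σ z)⁻¹ * (σ + n * (ℏ / brX z.2.1) ^ 2)) ^ (N + n + 1) * brX z.2.1 ^ m ≤
        b * (ℏ / δ) ^ N * polyDecay lam (z.1 - z.2.2))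
    (hu : Continuous u) (hu_supp : HasCompactSupport u) :
    eLpNorm (fun x => χ₁ x * OpAmpX ℏ (fun z => a z * c z) (fun y => χ₂ y * u y) x) 2 volume ≤
      ENNReal.ofReal (offDiagonalConst n (N + n + 1) * 2 ^ derivOrder n N * b * Cc *
        errorScale m N δ ℏ χ₁ χ₂ a) * eLpNorm u 2 volume := by
  have hCc : 0 ≤ Cc := (hc_bdd 0).nonneg
  set A := amp1Norm m (N + derivOrder n N) a
  have hA_nonneg : 0 ≤ A := amp1Norm_nonneg ..
  have hac (z : X n × X n × X n) : DerivsBoundedAt (scaledDirs lam (brX z.2.1)) (derivOrder n N)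
      (fun z => a z * c z) z (2 ^ derivOrder n N * (A * brX z.2.1 ^ m) * Cc) :=
    ((ha.derivsBoundedAt (by rwa [abs_of_pos hlam]) _ z).of_le (Nat.le_add_left _ N)).mul
      (hc_bdd z) ha.1.contDiffAt hc.contDiffAt
  refine (hχ.eLpNorm_mul_opAmpX_mul_le (N := derivOrder n N) hδ (Nat.le_add_right ..) hσ hℏ hlam
    hlam_le (ha.1.mul hc) (fun x p y hp => by rw [hc_supp x p y hp, mul_zero])
    (B := 2 ^ derivOrder n N * A * Cc * (b * (ℏ / δ) ^ N)) (by positivity) hac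
    (fun z hz₁ hz₂ hz => ?_) hu hu_supp).trans_eq ?_
  · obtain ⟨hlam_sq, hb_le⟩ := hcb z hz₁ hz₂ (tsupport_mul_subset_right hz)
    refine ⟨hlam_sq, (le_of_eq ?_).trans ((mul_le_mul_of_nonneg_left hb_le
      (by positivity : 0 ≤ 2 ^ derivOrder n N * A * Cc)).trans_eq ?_)⟩ <;> ring
  · rw [errorScale]
    congr 2
    ring

lemma eLpNorm_high_frequency_le {ρ Cc : ℝ} (hN : m ≤ N) (hχ : AreSeparatedCutoffs δ χ₁ χ₂)
    (hℏ : 0 < ℏ) (hlam : 0 < lam) (hlam_le : lam ≤ 1) (hlam_le' : lam ≤ δ) (ha : IsAmp1 m a)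
    (hc : ContDiff ℝ ∞ c) (hc_supp : ∀ x p y, ρ < ‖p‖ → c (x, p, y) = 0)
    (hc_bdd : ∀ z, DerivsBoundedAt (scaledDirs lam (brX z.2.1)) (derivOrder n N) c z Cc)
    (hc_high : ∀ z ∈ tsupport c, ℏ ≤ lam * brX z.2.1)
    (hu : Continuous u) (hu_supp : HasCompactSupport u) :
    eLpNorm (fun x => χ₁ x * OpAmpX ℏ (fun z => a z * c z) (fun y => χ₂ y * u y) x) 2 volume ≤
      ENNReal.ofReal (highFreqConst n N * Cc * errorScale m N δ ℏ χ₁ χ₂ a) *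
        eLpNorm u 2 volume := by
  refine hχ.eLpNorm_mul_opAmpX_mul_mul_le (hlam.trans_le hlam_le') le_rfl hℏ hlam hlam_le ha hc
    hc_supp hc_bdd (by positivity) (fun z hz₁ hz₂ hz => ?_) hu hu_supp
  have hdist := hχ.le_norm_sub hz₁ hz₂
  have hsq : ‖z.1 - z.2.2‖ ^ 2 ≤ regSqDist 0 z := by
    simpa only [zero_add] using add_norm_sub_sq_le_regSqDist 0 z
  exact ⟨(pow_le_pow_left₀ hlam.le (hlam_le'.trans hdist) 2).trans hsq,
    high_frequency_gain_le hN (one_le_brX _) hlam hlam_le' hdist hℏ (hc_high z hz) hsq⟩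

lemma eLpNorm_low_frequency_le {κ ρ Cc : ℝ} (hN : m ≤ N) (hκ : 0 ≤ κ)
    (hχ : AreSeparatedCutoffs δ χ₁ χ₂) (hδ : 0 < δ) (hℏ : 0 < ℏ) (hℏ_le : ℏ ≤ 1) (ha : IsAmp1 m a)
    (hc : ContDiff ℝ ∞ c) (hc_supp : ∀ x p y, ρ < ‖p‖ → c (x, p, y) = 0)
    (hc_bdd : ∀ z, DerivsBoundedAt (scaledDirs ℏ (brX z.2.1)) (derivOrder n N) c z Cc)
    (hc_low : ∀ z ∈ tsupport c, brX z.2.1 ≤ κ * (ℏ / δ))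
    (hu : Continuous u) (hu_supp : HasCompactSupport u) :
    eLpNorm (fun x => χ₁ x * OpAmpX ℏ (fun z => a z * c z) (fun y => χ₂ y * u y) x) 2 volume ≤
      ENNReal.ofReal (lowFreqConst n N κ * Cc * errorScale m N δ ℏ χ₁ χ₂ a) *
        eLpNorm u 2 volume := by
  refine hχ.eLpNorm_mul_opAmpX_mul_mul_le hδ (sq_nonneg ℏ) hℏ hℏ hℏ_le ha hc hc_supp hc_bdd
    (by positivity) (fun z _ _ hz => ?_) hu hu_supp
  have hsq := add_norm_sub_sq_le_regSqDist (ℏ ^ 2) z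
  exact ⟨(le_add_of_nonneg_right (sq_nonneg _)).trans hsq,
    low_frequency_gain_le hN (one_le_brX _) (norm_nonneg _) hℏ (hc_low z hz) hsq⟩

end AreSeparatedCutoffs

end FrequencyPieces

section MomentumCutoff

variable {n : ℕ} {η : ℝ} {z : X n × X n × X n}

/-- A smooth bump on momentum space, equal to `1` on the unit ball and supported in the ball of
radius `2`. -/
def momentumCutoff (p : X n) : ℂ :=
  ((⟨1, 2, one_pos, one_lt_two⟩ : ContDiffBump (0 : X n)) p : ℝ)

lemma contDiff_momentumCutoff : ContDiff ℝ ∞ (momentumCutoff (n := n)) :=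
  Complex.ofRealCLM.contDiff.comp (ContDiffBump.contDiff _)

lemma norm_momentumCutoff_le_one (p : X n) : ‖momentumCutoff p‖ ≤ 1 := by
  rw [momentumCutoff, Complex.norm_of_nonneg (ContDiffBump.nonneg _)]
  exact ContDiffBump.le_one _

lemma momentumCutoff_eq_one {p : X n} (hp : ‖p‖ ≤ 1) : momentumCutoff p = 1 := by
  rw [momentumCutoff, ContDiffBump.one_of_mem_closedBall _ (mem_closedBall_zero_iff.2 hp),
    Complex.ofReal_one]

lemma tsupport_momentumCutoff_subset :
    tsupport (momentumCutoff (n := n)) ⊆ Metric.closedBall 0 2 := by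
  refine closure_minimal (fun p hp => ?_) Metric.isClosed_closedBall
  by_contra hp'
  refine hp ?_
  rw [momentumCutoff, ContDiffBump.zero_of_le_dist _ (not_le.1 hp').le, Complex.ofReal_zero]

/-- The amplitude cutting momenta off to `‖p‖ ≤ 2 / η`. -/
def lowPass (η : ℝ) (z : X n × X n × X n) : ℂ := momentumCutoff (η • z.2.1)

lemma contDiff_lowPass (η : ℝ) : ContDiff ℝ ∞ (lowPass (n := n) η) :=
  contDiff_momentumCutoff.comp (by fun_prop)

lemma lowPass_eq_zero (hη : 0 < η) (x : X n) {p : X n} (y : X n) (hp : 2 / η < ‖p‖) :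
    lowPass η (x, p, y) = 0 := by
  refine image_eq_zero_of_notMem_tsupport (f := momentumCutoff) fun h => ?_
  have hle := mem_closedBall_zero_iff.1 (tsupport_momentumCutoff_subset h)
  rw [norm_smul, Real.norm_of_nonneg hη.le, ← le_div_iff₀' hη] at hle
  exact hp.not_ge hle

lemma norm_smul_le_two_of_mem_tsupport (hz : z ∈ tsupport (lowPass η)) : ‖η • z.2.1‖ ≤ 2 := by
  have hclosed : IsClosed {z : X n × X n × X n | ‖η • z.2.1‖ ≤ 2} :=
    isClosed_le (by fun_prop) continuous_const
  refine closure_minimal (fun z hz => ?_) hclosed hz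
  exact mem_closedBall_zero_iff.1 (tsupport_momentumCutoff_subset (subset_tsupport _ hz))

lemma one_le_norm_smul_of_mem_tsupport (hz : z ∈ tsupport fun z => 1 - lowPass η z) :
    1 ≤ ‖η • z.2.1‖ := by
  have hclosed : IsClosed {z : X n × X n × X n | 1 ≤ ‖η • z.2.1‖} :=
    isClosed_le continuous_const (by fun_prop)
  refine closure_minimal (fun z hz => ?_) hclosed hz
  by_contra hlt
  exact hz (sub_eq_zero.2 (momentumCutoff_eq_one (not_le.1 hlt).le).symm)

/-- A bound, uniform in `η`, for the first `N` scaled derivatives of `lowPass η`. -/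
def lowPassBound (n N : ℕ) : ℝ :=
  Real.sqrt (1 + n * 2 ^ 2) ^ N * ckNormX N (momentumCutoff (n := n))

lemma lowPassBound_nonneg (n N : ℕ) : 0 ≤ lowPassBound n N :=
  mul_nonneg (by positivity) (ckNormX_nonneg ..)

lemma derivsBoundedAt_lowPass (hη : |η| ≤ 1) (lam : ℝ) (N : ℕ) (z : X n × X n × X n) :
    DerivsBoundedAt (scaledDirs lam (brX z.2.1)) N (lowPass η) z (lowPassBound n N) :=
  derivsBoundedAt_cutoff contDiff_momentumCutoff tsupport_momentumCutoff_subset hη lam N z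

lemma derivsBoundedAt_one_sub_lowPass (hη : |η| ≤ 1) (lam : ℝ) (N : ℕ) (z : X n × X n × X n) :
    DerivsBoundedAt (scaledDirs lam (brX z.2.1)) N (fun z => 1 - lowPass η z) z
      (1 + lowPassBound n N) := by
  have hsmooth := contDiff_lowPass (n := n) η
  have hneg := (derivsBoundedAt_lowPass hη lam N z).const_mul hsmooth.contDiffAt (-1)
  have hadd := (DerivsBoundedAt.const (scaledDirs lam (brX z.2.1)) N z (c := 1)
    norm_one.le).add hneg contDiffAt_const (contDiffAt_const.mul hsmooth.contDiffAt)
  simpa only [neg_one_mul, ← sub_eq_add_neg, norm_neg, norm_one, one_mul] using hadd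

end MomentumCutoff

section MomentumTruncatedEstimate

variable {n N : ℕ} {m δ ℏ ε : ℝ} {χ₁ χ₂ u : X n → ℂ} {a : X n × X n × X n → ℂ}

/-- The constant of the disjoint-support estimate when `δ < ℏ`, collecting the high- and
low-frequency pieces of the amplitude. -/
def splitConst (n N : ℕ) : ℝ :=
  highFreqConst n N * (2 ^ derivOrder n N * (1 + lowPassBound n (derivOrder n N)) *
      lowPassBound n (derivOrder n N)) +
    lowFreqConst n N (Real.sqrt (1 + n * 2 ^ 2)) * (2 ^ derivOrder n N *
      lowPassBound n (derivOrder n N) * lowPassBound n (derivOrder n N))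

/-- The constant of the disjoint-support estimate. -/
def separatedConst (n N : ℕ) : ℝ :=
  highFreqConst n N * lowPassBound n (derivOrder n N) + splitConst n N

lemma highFreqConst_mul_nonneg (n N : ℕ) :
    0 ≤ highFreqConst n N * lowPassBound n (derivOrder n N) :=
  mul_nonneg (highFreqConst_nonneg ..) (lowPassBound_nonneg ..)

lemma splitConst_nonneg (n N : ℕ) : 0 ≤ splitConst n N := by
  have hP := lowPassBound_nonneg n (derivOrder n N)
  have hH := highFreqConst_nonneg n N
  have hL := lowFreqConst_nonneg n N (Real.sqrt_nonneg (1 + n * 2 ^ 2))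
  unfold splitConst
  positivity

lemma separatedConst_nonneg (n N : ℕ) : 0 ≤ separatedConst n N :=
  add_nonneg (highFreqConst_mul_nonneg ..) (splitConst_nonneg ..)

lemma eLpNorm_mul_opAmpX_add_le {b : X n × X n × X n → ℂ} {χ v : X n → ℂ} {ρ : ℝ}
    (hχ : Continuous χ) (ha : Continuous a) (ha_supp : ∀ x p y, ρ < ‖p‖ → a (x, p, y) = 0)
    (hb : Continuous b) (hb_supp : ∀ x p y, ρ < ‖p‖ → b (x, p, y) = 0) (hv : Continuous v)
    (hv_supp : HasCompactSupport v) (ℏ : ℝ) :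
    eLpNorm (fun x => χ x * OpAmpX ℏ (fun z => a z + b z) v x) 2 volume ≤
      eLpNorm (fun x => χ x * OpAmpX ℏ a v x) 2 volume +
        eLpNorm (fun x => χ x * OpAmpX ℏ b v x) 2 volume := by
  have hmeas {c : X n × X n × X n → ℂ} (hc : Continuous c) :
      AEStronglyMeasurable (fun x => χ x * OpAmpX ℏ c v x) :=
    (hχ.stronglyMeasurable.mul (stronglyMeasurable_opAmpX ℏ hc hv)).aestronglyMeasurable
  simp only [opAmpX_add ha ha_supp hb hb_supp hv hv_supp ℏ, Pi.add_apply, mul_add]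
  exact eLpNorm_add_le (hmeas ha) (hmeas hb) one_le_two

namespace AreSeparatedCutoffs

lemma eLpNorm_lowPass_le_of_le (hN : m ≤ N) (hχ : AreSeparatedCutoffs δ χ₁ χ₂) (hℏ : 0 < ℏ)
    (hℏ_le : ℏ ≤ 1) (hℏδ : ℏ ≤ δ) (ha : IsAmp1 m a) (hε : 0 < ε) (hε_le : ε ≤ 1)
    (hu : Continuous u) (hu_supp : HasCompactSupport u) :
    eLpNorm (fun x => χ₁ x * OpAmpX ℏ (fun z => a z * lowPass ε z) (fun y => χ₂ y * u y) x) 2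
        volume ≤
      ENNReal.ofReal (highFreqConst n N * lowPassBound n (derivOrder n N) *
        errorScale m N δ ℏ χ₁ χ₂ a) * eLpNorm u 2 volume := by
  have hlam : ℏ ≤ min δ 1 := le_min hℏδ hℏ_le
  exact hχ.eLpNorm_high_frequency_le hN hℏ (hℏ.trans_le hlam) (min_le_right ..) (min_le_left ..) ha
    (contDiff_lowPass ε) (fun x _ y => lowPass_eq_zero hε x y)
    (derivsBoundedAt_lowPass (abs_le.2 ⟨by linarith, hε_le⟩) _ _)
    (fun z _ => hlam.trans (le_mul_of_one_le_right (hℏ.le.trans hlam) (one_le_brX z.2.1)))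
    hu hu_supp

lemma eLpNorm_one_sub_lowPass_le (hN : m ≤ N) (hχ : AreSeparatedCutoffs δ χ₁ χ₂) (hδ : 0 < δ)
    (hδℏ : δ ≤ ℏ) (hℏ_le : ℏ ≤ 1) (ha : IsAmp1 m a) (hε : 0 < ε) (hε_le : ε ≤ 1)
    (hu : Continuous u) (hu_supp : HasCompactSupport u) :
    eLpNorm (fun x => χ₁ x * OpAmpX ℏ (fun z => a z * ((1 - lowPass (δ / ℏ) z) * lowPass ε z))
        (fun y => χ₂ y * u y) x) 2 volume ≤
      ENNReal.ofReal (highFreqConst n N * (2 ^ derivOrder n N *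
        (1 + lowPassBound n (derivOrder n N)) * lowPassBound n (derivOrder n N)) *
        errorScale m N δ ℏ χ₁ χ₂ a) * eLpNorm u 2 volume := by
  have hℏ := hδ.trans_le hδℏ
  have hη : |δ / ℏ| ≤ 1 := by
    rw [abs_of_pos (div_pos hδ hℏ)]
    exact (div_le_one hℏ).2 hδℏ
  have hε_abs : |ε| ≤ 1 := by rwa [abs_of_pos hε]
  have hsmooth : ContDiff ℝ ∞ fun z : X n × X n × X n => 1 - lowPass (δ / ℏ) z :=
    contDiff_const.sub (contDiff_lowPass _)
  refine hχ.eLpNorm_high_frequency_le hN hℏ hδ (hδℏ.trans hℏ_le) le_rfl ha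
    (hsmooth.mul (contDiff_lowPass ε))
    (fun x p y hp => by rw [lowPass_eq_zero hε x y hp, mul_zero])
    (fun z => (derivsBoundedAt_one_sub_lowPass hη δ _ z).mul (derivsBoundedAt_lowPass hε_abs δ _ z)
      hsmooth.contDiffAt (contDiff_lowPass ε).contDiffAt) (fun z hz => ?_) hu hu_supp
  have hle := one_le_norm_smul_of_mem_tsupport (tsupport_mul_subset_left hz)
  rw [norm_smul, Real.norm_of_nonneg (div_pos hδ hℏ).le, div_mul_eq_mul_div, one_le_div hℏ] at hle
  exact hle.trans (mul_le_mul_of_nonneg_left (norm_le_brX _) hδ.le)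

lemma eLpNorm_lowPass_mul_lowPass_le (hN : m ≤ N) (hχ : AreSeparatedCutoffs δ χ₁ χ₂) (hδ : 0 < δ)
    (hδℏ : δ ≤ ℏ) (hℏ_le : ℏ ≤ 1) (ha : IsAmp1 m a) (hε : 0 < ε) (hε_le : ε ≤ 1)
    (hu : Continuous u) (hu_supp : HasCompactSupport u) :
    eLpNorm (fun x => χ₁ x * OpAmpX ℏ (fun z => a z * (lowPass (δ / ℏ) z * lowPass ε z))
        (fun y => χ₂ y * u y) x) 2 volume ≤
      ENNReal.ofReal (lowFreqConst n N (Real.sqrt (1 + n * 2 ^ 2)) * (2 ^ derivOrder n N *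
        lowPassBound n (derivOrder n N) * lowPassBound n (derivOrder n N)) *
        errorScale m N δ ℏ χ₁ χ₂ a) * eLpNorm u 2 volume := by
  have hℏ := hδ.trans_le hδℏ
  have hη : |δ / ℏ| ≤ 1 := by
    rw [abs_of_pos (div_pos hδ hℏ)]
    exact (div_le_one hℏ).2 hδℏ
  have hε_abs : |ε| ≤ 1 := by rwa [abs_of_pos hε]
  have hsmooth := contDiff_lowPass (n := n) (δ / ℏ)
  refine hχ.eLpNorm_low_frequency_le hN (Real.sqrt_nonneg _) hδ hℏ hℏ_le ha
    (hsmooth.mul (contDiff_lowPass ε))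
    (fun x p y hp => by rw [lowPass_eq_zero hε x y hp, mul_zero])
    (fun z => (derivsBoundedAt_lowPass hη ℏ _ z).mul (derivsBoundedAt_lowPass hε_abs ℏ _ z)
      hsmooth.contDiffAt (contDiff_lowPass ε).contDiffAt) (fun z hz => ?_) hu hu_supp
  have hle := brX_mul_le hη (norm_smul_le_two_of_mem_tsupport (tsupport_mul_subset_left hz))
  rwa [abs_of_pos (div_pos hδ hℏ), ← le_div_iff₀ (div_pos hδ hℏ), div_eq_mul_inv, inv_div] at hle

lemma eLpNorm_lowPass_le_of_ge (hN : m ≤ N) (hχ : AreSeparatedCutoffs δ χ₁ χ₂) (hδ : 0 < δ)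
    (hδℏ : δ ≤ ℏ) (hℏ_le : ℏ ≤ 1) (ha : IsAmp1 m a) (hε : 0 < ε) (hε_le : ε ≤ 1)
    (hu : Continuous u) (hu_supp : HasCompactSupport u) :
    eLpNorm (fun x => χ₁ x * OpAmpX ℏ (fun z => a z * lowPass ε z) (fun y => χ₂ y * u y) x) 2
        volume ≤
      ENNReal.ofReal (splitConst n N * errorScale m N δ ℏ χ₁ χ₂ a) * eLpNorm u 2 volume := by
  have hP := lowPassBound_nonneg n (derivOrder n N)
  have hH := highFreqConst_nonneg n N
  have hL := lowFreqConst_nonneg n N (Real.sqrt_nonneg (1 + n * 2 ^ 2))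
  have hE := errorScale_nonneg hδ.le (hδ.le.trans hδℏ) m N χ₁ χ₂ a
  have hη := (contDiff_lowPass (n := n) (δ / ℏ)).continuous
  have hε_cont := (contDiff_lowPass (n := n) ε).continuous
  have hhigh : Continuous fun z => a z * ((1 - lowPass (δ / ℏ) z) * lowPass ε z) :=
    ha.1.continuous.mul ((continuous_const.sub hη).mul hε_cont)
  have hlow : Continuous fun z => a z * (lowPass (δ / ℏ) z * lowPass ε z) :=
    ha.1.continuous.mul (hη.mul hε_cont)
  have hsplit : (fun z => a z * lowPass ε z) = fun z =>
      a z * ((1 - lowPass (δ / ℏ) z) * lowPass ε z) + a z * (lowPass (δ / ℏ) z * lowPass ε z) := by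
    funext z
    ring
  rw [hsplit]
  refine (eLpNorm_mul_opAmpX_add_le (ρ := 2 / ε) hχ.contDiff_left.continuous
    hhigh (fun x p y hp => by simp only [lowPass_eq_zero hε x y hp, mul_zero])
    hlow (fun x p y hp => by simp only [lowPass_eq_zero hε x y hp, mul_zero])
    (hχ.contDiff_right.continuous.mul hu) hu_supp.mul_left ℏ).trans ?_
  refine (add_le_add (hχ.eLpNorm_one_sub_lowPass_le hN hδ hδℏ hℏ_le ha hε hε_le hu hu_supp)
    (hχ.eLpNorm_lowPass_mul_lowPass_le hN hδ hδℏ hℏ_le ha hε hε_le hu hu_supp)).trans_eq ?_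
  rw [← add_mul, ← ENNReal.ofReal_add (by positivity) (by positivity), ← add_mul, splitConst]

lemma eLpNorm_mul_opAmpX_lowPass_le (hN : m ≤ N) (hχ : AreSeparatedCutoffs δ χ₁ χ₂) (hδ : 0 < δ)
    (hℏ : 0 < ℏ) (hℏ_le : ℏ ≤ 1) (ha : IsAmp1 m a) (hε : 0 < ε) (hε_le : ε ≤ 1)
    (hu : Continuous u) (hu_supp : HasCompactSupport u) :
    eLpNorm (fun x => χ₁ x * OpAmpX ℏ (fun z => a z * lowPass ε z) (fun y => χ₂ y * u y) x) 2
        volume ≤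
      ENNReal.ofReal (separatedConst n N * errorScale m N δ ℏ χ₁ χ₂ a) * eLpNorm u 2 volume := by
  have := errorScale_nonneg hδ.le hℏ.le m N χ₁ χ₂ a
  rcases le_total ℏ δ with hℏδ | hδℏ
  · refine (hχ.eLpNorm_lowPass_le_of_le hN hℏ hℏ_le hℏδ ha hε hε_le hu hu_supp).trans ?_
    gcongr
    exact le_add_of_nonneg_right (splitConst_nonneg n N)
  · refine (hχ.eLpNorm_lowPass_le_of_ge hN hδ hδℏ hℏ_le ha hε hε_le hu hu_supp).trans ?_
    gcongr
    exact le_add_of_nonneg_left (highFreqConst_mul_nonneg n N)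

end AreSeparatedCutoffs

end MomentumTruncatedEstimate

section MomentumRegularization

variable {n : ℕ}

-- Fatou's lemma; convergence is not needed where the limit vanishes.
lemma eLpNorm_two_le_of_tendsto_of_ne_zero {α : Type*} [MeasurableSpace α] {μ : Measure α}
    {f : ℕ → α → ℂ} {g : α → ℂ} {B : ℝ≥0∞} (hf : ∀ j, AEStronglyMeasurable (f j) μ)
    (hfg : ∀ x, g x ≠ 0 → Tendsto (fun j => f j x) atTop (𝓝 (g x)))
    (hB : ∀ j, eLpNorm (f j) 2 μ ≤ B) : eLpNorm g 2 μ ≤ B := by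
  have hle (x : α) : ‖g x‖ₑ ^ 2 ≤ liminf (fun j => ‖f j x‖ₑ ^ 2) atTop := by
    by_cases hx : g x = 0
    · rw [hx, enorm_zero, zero_pow two_ne_zero]
      exact zero_le
    · exact (((ENNReal.continuous_pow 2).tendsto _).comp (hfg x hx).enorm).liminf_eq.ge
  rw [← (ENNReal.pow_right_strictMono two_ne_zero).le_iff_le, ← lintegral_enorm_sq_eq_eLpNorm_sq]
  calc ∫⁻ x, ‖g x‖ₑ ^ 2 ∂μ
    _ ≤ ∫⁻ x, liminf (fun j => ‖f j x‖ₑ ^ 2) atTop ∂μ := lintegral_mono hle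
    _ ≤ liminf (fun j => ∫⁻ x, ‖f j x‖ₑ ^ 2 ∂μ) atTop :=
      lintegral_liminf_le' fun j => (hf j).enorm.pow_const 2
    _ ≤ B ^ 2 := by
      refine liminf_le_of_le (by isBoundedDefault) fun b hb => ?_
      obtain ⟨j, hj⟩ := hb.exists
      rw [lintegral_enorm_sq_eq_eLpNorm_sq] at hj
      exact hj.trans (pow_le_pow_left' (hB j) 2)

lemma tendsto_oscIntegral_lowPass {ℏ : ℝ} {a : X n × X n × X n → ℂ} {u : X n → ℂ} {x : X n}
    (hint : Integrable fun p => ∫ y, a (x, p, y) * planeWave ℏ p (x - y) * u y) {ε : ℕ → ℝ}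
    (hε : Tendsto ε atTop (𝓝 0)) :
    Tendsto (fun j => oscIntegral ℏ (fun z => a z * lowPass (ε j) z) u x) atTop
      (𝓝 (oscIntegral ℏ a u x)) := by
  have hfactor (j : ℕ) : oscIntegral ℏ (fun z => a z * lowPass (ε j) z) u x =
      ∫ p, momentumCutoff (ε j • p) * ∫ y, a (x, p, y) * planeWave ℏ p (x - y) * u y := by
    refine integral_congr_ae (.of_forall fun p => ?_)
    simp only [← integral_const_mul, lowPass]
    congr 1 with y
    ring
  simp only [hfactor]
  refine tendsto_integral_of_dominated_convergence _ (fun j => ?_) hint.norm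
    (fun j => .of_forall fun p => ?_) (.of_forall fun p => ?_)
  · exact (contDiff_momentumCutoff.continuous.comp
      (continuous_const_smul (ε j))).aestronglyMeasurable.mul hint.aestronglyMeasurable
  · rw [norm_mul]
    exact mul_le_of_le_one_left (norm_nonneg _) (norm_momentumCutoff_le_one _)
  · have hlim := (contDiff_momentumCutoff.continuous.tendsto _).comp (hε.smul_const p)
    rw [zero_smul, momentumCutoff_eq_one (norm_zero.trans_le zero_le_one)] at hlim
    simpa only [one_mul, Function.comp_apply] using hlim.mul_const _

lemma tendsto_opAmpX_lowPass {ℏ : ℝ} {a : X n × X n × X n → ℂ} {u : X n → ℂ} {x : X n}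
    (hne : OpAmpX ℏ a u x ≠ 0) {ε : ℕ → ℝ} (hε : Tendsto ε atTop (𝓝 0)) :
    Tendsto (fun j => OpAmpX ℏ (fun z => a z * lowPass (ε j) z) u x) atTop
      (𝓝 (OpAmpX ℏ a u x)) := by
  -- Where the momentum integral diverges, the Bochner integral takes the value `0`.
  have hint : Integrable fun p => ∫ y, a (x, p, y) * planeWave ℏ p (x - y) * u y := by
    by_contra h
    refine hne ?_
    rw [opAmpX_eq, Pi.smul_apply, oscIntegral, integral_undef h, smul_zero]
  simp only [opAmpX_eq, Pi.smul_apply]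
  exact (tendsto_oscIntegral_lowPass hint hε).const_smul _

end MomentumRegularization

section DisjointSupports

variable {n N : ℕ} {m δ ℏ : ℝ} {χ₁ χ₂ u : X n → ℂ} {a : X n × X n × X n → ℂ}

lemma l2normX_eq_toReal_eLpNorm {f : X n → ℂ} (hf : AEStronglyMeasurable f) :
    l2normX f = (eLpNorm f 2 volume).toReal := by
  rw [toReal_eLpNorm hf, lpNorm_eq_integral_norm_rpow_toReal two_ne_zero ENNReal.ofNat_ne_top hf]
  simp only [l2normX, ENNReal.toReal_ofNat, Real.rpow_ofNat, one_div]

namespace AreSeparatedCutoffs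

lemma eLpNorm_mul_opAmpX_le (hχ : AreSeparatedCutoffs δ χ₁ χ₂) (hN : m ≤ N) (hδ : 0 < δ)
    (hℏ : 0 < ℏ) (hℏ_le : ℏ ≤ 1) (ha : IsAmp1 m a) (hu : Continuous u)
    (hu_supp : HasCompactSupport u) :
    eLpNorm (fun x => χ₁ x * OpAmpX ℏ a (fun y => χ₂ y * u y) x) 2 volume ≤
      ENNReal.ofReal (separatedConst n N * errorScale m N δ ℏ χ₁ χ₂ a) * eLpNorm u 2 volume :=
  eLpNorm_two_le_of_tendsto_of_ne_zero
    (f := fun j x => χ₁ x * OpAmpX ℏ (fun z => a z * lowPass (1 / ((j : ℝ) + 1)) z)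
      (fun y => χ₂ y * u y) x)
    (fun _ => (hχ.contDiff_left.continuous.stronglyMeasurable.mul
      (stronglyMeasurable_opAmpX ℏ (ha.1.continuous.mul (contDiff_lowPass _).continuous)
        (hχ.contDiff_right.continuous.mul hu))).aestronglyMeasurable)
    (fun _ hx => (tendsto_opAmpX_lowPass (right_ne_zero_of_mul hx)
      tendsto_one_div_add_atTop_nhds_zero_nat).const_mul _)
    fun _ => hχ.eLpNorm_mul_opAmpX_lowPass_le hN hδ hℏ hℏ_le ha Nat.one_div_pos_of_nat
      (div_le_self zero_le_one (le_add_of_nonneg_left (Nat.cast_nonneg _))) hu hu_supp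

lemma l2normX_mul_opAmpX_le (hχ : AreSeparatedCutoffs δ χ₁ χ₂) (hN : m ≤ N) (hδ : 0 < δ)
    (hℏ : 0 < ℏ) (hℏ_le : ℏ ≤ 1) (ha : IsAmp1 m a) (hu : Continuous u)
    (hu_supp : HasCompactSupport u) :
    l2normX (fun x => χ₁ x * OpAmpX ℏ a (fun y => χ₂ y * u y) x) ≤
      separatedConst n N * errorScale m N δ ℏ χ₁ χ₂ a * l2normX u := by
  have hop : AEStronglyMeasurable fun x => χ₁ x * OpAmpX ℏ a (fun y => χ₂ y * u y) x :=
    (hχ.contDiff_left.continuous.stronglyMeasurable.mul (stronglyMeasurable_opAmpX ℏ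
      ha.1.continuous (hχ.contDiff_right.continuous.mul hu))).aestronglyMeasurable
  have hC := mul_nonneg (separatedConst_nonneg n N) (errorScale_nonneg hδ.le hℏ.le m N χ₁ χ₂ a)
  have hu_top : eLpNorm u 2 volume ≠ ⊤ := (hu.memLp_of_hasCompactSupport hu_supp).eLpNorm_ne_top
  rw [l2normX_eq_toReal_eLpNorm hop, l2normX_eq_toReal_eLpNorm hu.aestronglyMeasurable,
    ← ENNReal.toReal_ofReal hC, ← ENNReal.toReal_mul]
  exact ENNReal.toReal_mono (ENNReal.mul_ne_top ENNReal.ofReal_ne_top hu_top)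
    (hχ.eLpNorm_mul_opAmpX_le hN hδ hℏ hℏ_le ha hu hu_supp)

end AreSeparatedCutoffs

end DisjointSupports

/-- disjoint-support estimate `‖χ₁ Op_ℏ(a) χ₂‖ = O(ℏ^N δ^{-N})`. -/
theorem statement9 (n : ℕ) (m : ℝ) (N : ℕ) (hN : m ≤ (N : ℝ)) :
    ∃ C > (0 : ℝ), ∃ N' : ℕ, ∀ δ > (0 : ℝ), ∀ ℏ ∈ Set.Ioc (0 : ℝ) 1,
      ∀ a : X n × X n × X n → ℂ, IsAmp1 m a → ∀ u : X n → ℂ, IsCcX u →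
      ∀ χ₁ χ₂ : X n → ℂ, ContDiff ℝ (⊤ : ℕ∞) χ₁ → ContDiff ℝ (⊤ : ℕ∞) χ₂ →
        (∀ α : Fin n → ℕ, ∃ C₁ : ℝ, ∀ x : X n, ‖mderiv1X α χ₁ x‖ ≤ C₁) →
        (∀ α : Fin n → ℕ, ∃ C₂ : ℝ, ∀ x : X n, ‖mderiv1X α χ₂ x‖ ≤ C₂) →
        (∀ x ∈ tsupport χ₁, ∀ y ∈ tsupport χ₂, δ ≤ dist x y) →
        l2normX (fun q => χ₁ q * OpAmpX ℏ a (fun q' => χ₂ q' * u q') q)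
          ≤ C * ℏ ^ N * (δ ^ N)⁻¹ * ckNormX N' χ₁ * ckNormX N' χ₂ *
            amp1Norm m (N + N') a * l2normX u := by
  refine ⟨separatedConst n N + 1, by linarith [separatedConst_nonneg n N], derivOrder n N,
    fun δ hδ ℏ hℏ a ha u hu χ₁ χ₂ hχ₁ hχ₂ hχ₁_bdd hχ₂_bdd hdist => ?_⟩
  have hχ : AreSeparatedCutoffs δ χ₁ χ₂ := ⟨hχ₁, hχ₂, hχ₁_bdd, hχ₂_bdd, hdist⟩
  have hE := errorScale_nonneg hδ.le hℏ.1.le m N χ₁ χ₂ a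
  calc l2normX (fun q => χ₁ q * OpAmpX ℏ a (fun q' => χ₂ q' * u q') q)
    _ ≤ separatedConst n N * errorScale m N δ ℏ χ₁ χ₂ a * l2normX u :=
      hχ.l2normX_mul_opAmpX_le hN hδ hℏ.1 hℏ.2 ha hu.1.continuous hu.2
    _ ≤ (separatedConst n N + 1) * errorScale m N δ ℏ χ₁ χ₂ a * l2normX u := by
      gcongr
      · exact Real.rpow_nonneg (integral_nonneg fun _ => by positivity) _
      · exact le_add_of_nonneg_right zero_le_one
    _ = _ := by
      rw [errorScale, div_pow, div_eq_mul_inv]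
      ring

end
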